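/- Let n ≥ 1 and let A₀, A₁, …, Aₙ ∈ ℂ[z, X₁, …, Xₙ] be polynomials with A₀ ≠ 0. Let f₁, …, fₙ be functions of one complex variable, analytic in a neighbourhood of 0, such that A₀(z, f₁(z), …, fₙ(z)) · fᵢ'(z) = Aᵢ(z, f₁(z), …, fₙ(z)) for all i = 1, …, n and all z in a neighbourhood of 0. Let D be the derivation of ℂ[z, X₁, …, Xₙ] given by D = A₀·∂/∂z + Σ_{i=1}^{n} Aᵢ·∂/∂Xᵢ. Assume there exists a constant K₀ such that every nonzero prime ideal 𝔭 of ℂ[z, X₁, …, Xₙ] with D(𝔭) ⊆ 𝔭 contains a polynomial P for which the function z ↦ P(z, f₁(z), …, fₙ(z)) does not vanish identically near 0 and its order of vanishing at z = 0 is at most K₀. Then there exists a constant K₁ > 0 such that for every nonzero polynomial P ∈ ℂ[z, X₁, …, Xₙ], the order of vanishing at z = 0 of the (not identically zero or else the order is infinite) function P(z, f₁(z), …, fₙ(z)) is at most K₁ · (deg_z P + 1) · (deg_X P + 1)ⁿ. -/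

import Mathlib

open scoped Classical

noncomputable section

/-- Total degree in the variables `X₁, …, Xₙ` (variable `0` plays the role of `z`). -/
def degXvars {n : ℕ} (P : MvPolynomial (Fin (n + 1)) ℂ) : ℕ :=
  P.support.sup fun d => ∑ j : Fin n, d j.succ

/-- The derivation `D = A₀·∂/∂z + Σᵢ Aᵢ·∂/∂Xᵢ` of `ℂ[z, X₁, …, Xₙ]`. -/
def Dop {n : ℕ} (A : Fin (n + 1) → MvPolynomial (Fin (n + 1)) ℂ)
    (Q : MvPolynomial (Fin (n + 1)) ℂ) : MvPolynomial (Fin (n + 1)) ℂ :=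
  A 0 * MvPolynomial.pderiv 0 Q + ∑ i : Fin n, A i.succ * MvPolynomial.pderiv i.succ Q

set_option linter.unusedSectionVars false

/-- The transcendence degree over `ℂ`, as a natural number. -/
def tdim (B : Type) [CommRing B] [Algebra ℂ B] : ℕ := Cardinal.toNat (Algebra.trdeg ℂ B)

theorem coe_tdim (B : Type) [CommRing B] [Algebra ℂ B] [Algebra.FiniteType ℂ B] :
    (tdim B : Cardinal) = Algebra.trdeg ℂ B :=
  Cardinal.cast_toNat_of_lt_aleph0 trdeg_lt_aleph0_of_finiteType

theorem tdim_le_of_injective {A B : Type} [CommRing A] [Algebra ℂ A] [CommRing B] [Algebra ℂ B]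
    [Algebra.FiniteType ℂ B] (f : A →ₐ[ℂ] B) (hf : Function.Injective f) : tdim A ≤ tdim B :=
  Cardinal.toNat_le_toNat (trdeg_le_of_injective f hf) trdeg_lt_aleph0_of_finiteType

theorem tdim_le_of_surjective {A B : Type} [CommRing A] [Algebra ℂ A] [CommRing B] [Algebra ℂ B]
    [Algebra.FiniteType ℂ A] (f : A →ₐ[ℂ] B) (hf : Function.Surjective f) : tdim B ≤ tdim A :=
  Cardinal.toNat_le_toNat (trdeg_le_of_surjective f hf) trdeg_lt_aleph0_of_finiteType

theorem tdim_eq_of_algEquiv {A B : Type} [CommRing A] [Algebra ℂ A] [CommRing B] [Algebra ℂ B]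
    (e : A ≃ₐ[ℂ] B) : tdim A = tdim B := by
  rw [tdim, tdim, e.trdeg_eq]

theorem tdim_mvPolynomial (r : ℕ) : tdim (MvPolynomial (Fin r) ℂ) = r := by
  simp [tdim, MvPolynomial.trdeg_of_isDomain]

theorem tdim_polynomial (B : Type) [CommRing B] [IsDomain B] [Algebra ℂ B]
    [Algebra.FiniteType ℂ B] : tdim (Polynomial B) = tdim B + 1 := by
  have h := trdeg_add_eq ℂ B (A := Polynomial B)
  rw [Polynomial.trdeg_of_isDomain] at h
  rw [tdim, ← h, ← coe_tdim]
  simp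

theorem transcendental_of_mem_ker {A B C : Type} [CommRing A] [IsDomain A] [CommRing B] [IsDomain B]
    [CommRing C] [Algebra A B] [Algebra A C]
    (f : B →ₐ[A] C) (hA : Function.Injective (algebraMap A C)) {y : B} (hy : f y = 0)
    (hy0 : y ≠ 0) : Transcendental A y := by
  rintro ⟨p, hp, hpy⟩
  obtain ⟨q, hq, hXq⟩ := Polynomial.exists_eq_pow_rootMultiplicity_mul_and_not_dvd p hp 0
  rw [map_zero, sub_zero] at hq hXq
  rw [hq, map_mul, map_pow, Polynomial.aeval_X] at hpy
  have hqy : Polynomial.aeval y q = 0 := (mul_eq_zero.mp hpy).resolve_left (pow_ne_zero _ hy0)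
  apply hXq
  rw [Polynomial.X_dvd_iff]
  apply hA
  rw [map_zero]
  have := congrArg f hqy
  rw [← Polynomial.aeval_algHom_apply, hy, map_zero, ← Polynomial.coeff_zero_eq_aeval_zero'] at this
  exact this

theorem tdim_lt_of_surjective {B C : Type} [CommRing B] [IsDomain B] [Algebra ℂ B]
    [Algebra.FiniteType ℂ B] [CommRing C] [IsDomain C] [Algebra ℂ C] (f : B →ₐ[ℂ] C)
    (hf : Function.Surjective f) {y : B} (hy : f y = 0) (hy0 : y ≠ 0) : tdim C < tdim B := by
  have : Algebra.FiniteType ℂ C := Algebra.FiniteType.of_surjective f hf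
  obtain ⟨ι, x, hx⟩ := exists_isTranscendenceBasis' ℂ C
  have hcard := hx.cardinalMk_eq_trdeg
  choose x' hx' using fun i => hf (x i)
  have hind : AlgebraicIndependent ℂ (f ∘ x') := by
    convert hx.1 using 1
    exact funext hx'
  have hind' : AlgebraicIndependent ℂ x' := hind.of_comp f
  have htr : Transcendental (Algebra.adjoin ℂ (Set.range x')) y := by
    let S := Algebra.adjoin ℂ (Set.range x')
    let g : S →ₐ[ℂ] C := f.comp S.val
    let _ : Algebra S C := g.toAlgebra
    let f' : B →ₐ[S] C := { f with commutes' := fun r => rfl }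
    refine transcendental_of_mem_ker f' ?_ hy hy0
    change Function.Injective g
    rw [injective_iff_map_eq_zero]
    rintro ⟨a, ha⟩ h0
    obtain ⟨p, rfl⟩ : ∃ p : MvPolynomial ι ℂ, MvPolynomial.aeval x' p = a := by
      have ha' : a ∈ Algebra.adjoin ℂ (Set.range x') := ha
      rw [Algebra.adjoin_range_eq_range_aeval] at ha'
      exact ha'
    change f (MvPolynomial.aeval x' p) = 0 at h0
    rw [← AlgHom.comp_apply, MvPolynomial.comp_aeval] at h0
    have : p = 0 := by
      apply hind
      rw [map_zero]
      exact h0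
    subst this
    exact Subtype.ext (map_zero _)
  have h := ((hind'.option_iff_transcendental y).mpr htr).cardinalMk_le_trdeg
  rw [Cardinal.mk_option, hcard, ← coe_tdim, ← coe_tdim] at h
  exact_mod_cast h

theorem tdim_quotient_lt {T : Type} [CommRing T] [Algebra ℂ T] [Algebra.FiniteType ℂ T]
    {P Q : Ideal T} [P.IsPrime] [Q.IsPrime] (h : P < Q) : tdim (T ⧸ Q) < tdim (T ⧸ P) := by
  obtain ⟨y, hyQ, hyP⟩ := SetLike.exists_of_lt h
  refine tdim_lt_of_surjective (Ideal.Quotient.factorₐ ℂ h.le)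
    (Ideal.Quotient.factor_surjective h.le) (y := Ideal.Quotient.mk P y) ?_ ?_
  · simpa [Ideal.Quotient.eq_zero_iff_mem] using hyQ
  · simpa [Ideal.Quotient.eq_zero_iff_mem] using hyP

theorem eventually_sum_pow_smul_ne_zero {s : ℕ} {B : Type*} [CommRing B] [IsDomain B] [Algebra ℂ B]
    (x : Fin s → B) (hx : ∃ i, x i ≠ 0) :
    ∀ᶠ l : ℂ in Filter.cofinite, ∑ i : Fin s, l ^ (i : ℕ) • x i ≠ 0 := by
  let p : Polynomial B := ∑ i : Fin s, Polynomial.monomial (i : ℕ) (x i)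
  have hp : p ≠ 0 := by
    obtain ⟨i, hi⟩ := hx
    intro h
    apply hi
    have := congrArg (fun q => Polynomial.coeff q (i : ℕ)) h
    simpa [p, Polynomial.finsetSum_coeff, Polynomial.coeff_monomial, Fin.val_inj] using this
  have hfin : (p.rootSet B).Finite := Polynomial.rootSet_finite p B
  have : ((algebraMap ℂ B) ⁻¹' (p.rootSet B)).Finite :=
    hfin.preimage (FaithfulSMul.algebraMap_injective ℂ B).injOn
  refine Filter.Eventually.mono this.compl_mem_cofinite ?_
  intro l hl h
  apply hl
  simp only [Set.mem_preimage, Polynomial.mem_rootSet, hp, ne_eq, not_false_eq_true, true_and]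
  rw [← h]
  simp [p, Polynomial.aeval_def, Polynomial.eval₂_monomial, Algebra.smul_def, mul_comm]

theorem eventually_valuation_sum_pow_smul {Ω Γ₀ : Type*} [Field Ω] [Algebra ℂ Ω]
    [LinearOrderedCommGroupWithZero Γ₀] (v : Valuation Ω Γ₀)
    (hv : ∀ z : ℂ, v (algebraMap ℂ Ω z) ≤ 1) {s : ℕ} (x : Fin s → Ω) (i₀ : Fin s) :
    ∀ᶠ l : ℂ in Filter.cofinite, v (x i₀) ≤ v (∑ i : Fin s, l ^ (i : ℕ) • x i) := by
  let p : Polynomial Ω := ∑ i : Fin s, Polynomial.monomial (i : ℕ) (x i)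
  have hpe (l : ℂ) : p.eval (algebraMap ℂ Ω l) = ∑ i : Fin s, l ^ (i : ℕ) • x i := by
    simp [p, Polynomial.eval_finsetSum, Polynomial.eval_monomial, Algebra.smul_def, mul_comm]
  have hpc : p.coeff i₀ = x i₀ := by
    simp [p, Polynomial.finsetSum_coeff, Polynomial.coeff_monomial, Fin.val_inj]
  have hpd : p.degree < s := by
    simpa [p, Polynomial.C_mul_X_pow_eq_monomial] using Polynomial.degree_sum_fin_lt x
  rw [Filter.eventually_cofinite]
  by_contra hinf
  obtain ⟨t, ht, hts⟩ := Set.Infinite.exists_subset_card_eq hinf s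
  have hinj : Set.InjOn (algebraMap ℂ Ω) (t : Set ℂ) :=
    (FaithfulSMul.algebraMap_injective ℂ Ω).injOn
  have hInterp := Lagrange.eq_interpolate_of_eval_eq (s := t) (v := algebraMap ℂ Ω)
    (fun l => p.eval (algebraMap ℂ Ω l)) hinj (f := p) (by rw [hts]; exact hpd) (by simp)
  have hx : x i₀ = ∑ l ∈ t, p.eval (algebraMap ℂ Ω l) *
      (Lagrange.basis t (algebraMap ℂ Ω) l).coeff i₀ := by
    conv_lhs => rw [← hpc, hInterp]
    simp [Lagrange.interpolate_apply, Polynomial.finsetSum_coeff]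
  have hb (l : ℂ) : v ((Lagrange.basis t (algebraMap ℂ Ω) l).coeff i₀) ≤ 1 := by
    have : Lagrange.basis t (algebraMap ℂ Ω) l
        = (Lagrange.basis t (id : ℂ → ℂ) l).map (algebraMap ℂ Ω) := by
      simp [Lagrange.basis, Lagrange.basisDivisor, Polynomial.map_prod]
    rw [this, Polynomial.coeff_map]
    exact hv _
  have hx0 : v (x i₀) ≠ 0 := by
    have hs : t.Nonempty := by
      rw [← Finset.card_pos, hts]; exact i₀.pos
    obtain ⟨l, hl⟩ := hs
    intro h
    have := ht hl
    simp [h] at this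
  have : v (x i₀) < v (x i₀) := by
    conv_lhs => rw [hx]
    refine v.map_sum_lt hx0 fun l hl => ?_
    rw [map_mul]
    have h1 : v (p.eval (algebraMap ℂ Ω l)) < v (x i₀) := by
      rw [hpe]
      simpa using ht hl
    exact (mul_le_of_le_one_right' (hb l)).trans_lt h1
  exact lt_irrefl _ this

/-- Iterated cofinite filter on parameter sequences: the parameters with index `< k` are chosen
one after the other, each outside a finite set depending on the previous ones. -/
def genFilter : ℕ → Filter (ℕ → ℂ)
  | 0 => pure 0
  | k + 1 => (genFilter k).bind fun l => Filter.map (fun x => Function.update l k x) Filter.cofinite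

theorem eventually_genFilter_succ {k : ℕ} {P : (ℕ → ℂ) → Prop} :
    (∀ᶠ l in genFilter (k + 1), P l) ↔
      ∀ᶠ l in genFilter k, ∀ᶠ x in Filter.cofinite, P (Function.update l k x) := by
  simp [genFilter, Filter.eventually_bind, Filter.eventually_map]

instance genFilter_neBot (k : ℕ) : (genFilter k).NeBot := by
  induction k with
  | zero => exact Filter.pure_neBot
  | succ k ih =>
    rw [← Filter.frequently_true_iff_neBot, Filter.Frequently, eventually_genFilter_succ]
    simpa [Set.infinite_univ] using ih.ne

theorem eventually_genFilter_of_le {k m : ℕ} (hkm : k ≤ m) {P : (ℕ → ℂ) → Prop}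
    (hP : ∀ l l', (∀ i < k, l i = l' i) → P l → P l') (h : ∀ᶠ l in genFilter k, P l) :
    ∀ᶠ l in genFilter m, P l := by
  induction m, hkm using Nat.le_induction with
  | base => exact h
  | succ m hm ih =>
    rw [eventually_genFilter_succ]
    filter_upwards [ih] with l hl
    refine Filter.Eventually.of_forall fun x => hP l _ (fun i hi => ?_) hl
    rw [Function.update_of_ne (by omega)]

theorem eventually_genFilter_of_step {k m : ℕ} (hkm : k < m) {P : (ℕ → ℂ) → Prop}
    (hP : ∀ l l', (∀ i < k + 1, l i = l' i) → P l → P l')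
    (h : ∀ᶠ l in genFilter k, ∀ᶠ x in Filter.cofinite, P (Function.update l k x)) :
    ∀ᶠ l in genFilter m, P l :=
  eventually_genFilter_of_le hkm hP (eventually_genFilter_succ.mpr h)

/-- The ring `B`, filtered by the powers of `V`, is a finite filtered module over the polynomials
in `Y`. -/
def FilteredFinite {B : Type} [CommRing B] [Algebra ℂ B] (V : Submodule ℂ B) {N : ℕ}
    (Y : Fin N → B) : Prop :=
  ∃ m : ℕ, ∀ x ∈ V ^ (m + 1), ∃ a ∈ V ^ m, ∃ b : Fin N → B, (∀ i, b i ∈ V ^ m) ∧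
    x = a + ∑ i, Y i * b i

namespace GenericNormalization
open MvPolynomial

attribute [local instance] MvPolynomial.gradedAlgebra

variable {B : Type} [CommRing B] [Algebra ℂ B] {s : ℕ} (g : Fin s → B)

/-- The Rees-type map `X i ↦ g i · X`. -/
def rees : MvPolynomial (Fin s) ℂ →ₐ[ℂ] Polynomial B :=
  aeval fun i => Polynomial.C (g i) * Polynomial.X

theorem rees_of_isHomogeneous {q : MvPolynomial (Fin s) ℂ} {d : ℕ} (hq : q.IsHomogeneous d) :
    rees g q = Polynomial.C (aeval g q) * Polynomial.X ^ d := by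
  conv_lhs => rw [q.as_sum]
  conv_rhs => rw [q.as_sum]
  rw [map_sum, map_sum, map_sum, Finset.sum_mul]
  refine Finset.sum_congr rfl fun a ha => ?_
  have hd : ∑ i, a i = d := by
    have := hq (mem_support_iff.mp ha)
    rwa [Finsupp.weight_apply, Finsupp.sum_fintype _ _ (by simp), ← Finset.sum_congr rfl] at this
    simp
  rw [rees, aeval_monomial, aeval_monomial, Finsupp.prod_fintype _ _ (by simp),
    Finsupp.prod_fintype _ _ (by simp), ← hd]
  simp only [mul_pow, Finset.prod_mul_distrib, ← Finset.prod_pow_eq_pow_sum, map_mul, map_prod,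
    map_pow, IsScalarTower.algebraMap_apply ℂ B (Polynomial B), Polynomial.algebraMap_eq]
  ring

theorem aeval_homogeneousComponent_of_rees {h : MvPolynomial (Fin s) ℂ} (hh : rees g h = 0)
    (d : ℕ) :
    aeval g (homogeneousComponent d h) = 0 := by
  have h1 := sum_homogeneousComponent h
  rw [← h1, map_sum] at hh
  simp only [rees_of_isHomogeneous g (homogeneousComponent_isHomogeneous _ h)] at hh
  have h2 := congrArg (fun p => Polynomial.coeff p d) hh
  simp only [Polynomial.finsetSum_coeff, Polynomial.coeff_C_mul_X_pow, Polynomial.coeff_zero] at h2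
  by_cases hd : d < h.totalDegree + 1
  · simpa [Finset.sum_ite_eq, hd] using h2
  · rw [homogeneousComponent_eq_zero _ _ (by omega), map_zero]

theorem ker_rees_isHomogeneous :
    (RingHom.ker (rees g)).IsHomogeneous (homogeneousSubmodule (Fin s) ℂ) := by
  intro d h hh
  rw [← DirectSum.Decomposition.decompose'_eq, decomposition.decompose'_apply]
  rw [RingHom.mem_ker] at hh ⊢
  rw [rees_of_isHomogeneous g (homogeneousComponent_isHomogeneous _ h),
    aeval_homogeneousComponent_of_rees g hh, map_zero, zero_mul]

theorem homogeneousComponent_mul_of_isHomogeneous_one {y a : MvPolynomial (Fin s) ℂ}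
    (hy : y.IsHomogeneous 1) (d : ℕ) :
    homogeneousComponent (d + 1) (y * a) = y * homogeneousComponent d a := by
  have := DirectSum.coe_decompose_mul_add_of_left_mem (homogeneousSubmodule (Fin s) ℂ) (i := 1)
    (j := d) (a := y) (b := a) hy
  rw [← DirectSum.Decomposition.decompose'_eq,
    decomposition.decompose'_apply, decomposition.decompose'_apply, add_comm] at this
  exact this

theorem mem_of_minimalPrimes_of_tdim_eq_zero {J P : Ideal (MvPolynomial (Fin s) ℂ)}
    (hJ : J.IsHomogeneous (homogeneousSubmodule (Fin s) ℂ)) (hP : P ∈ J.minimalPrimes)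
    (h0 : tdim (MvPolynomial (Fin s) ℂ ⧸ P) = 0) (i : Fin s) : X i ∈ P := by
  have hPp : P.IsPrime := hP.1.1
  let Q := (P.homogeneousCore (homogeneousSubmodule (Fin s) ℂ)).toIdeal
  have hQ : Q.IsPrime := hPp.homogeneousCore
  have hQP : Q ≤ P := Ideal.toIdeal_homogeneousCore_le _ _
  have hJQ : J ≤ Q := by
    rw [← hJ.toIdeal_homogeneousCore_eq_self]
    exact Ideal.homogeneousCore_mono _ hP.1.2
  have hPQ : P ≤ Q := hP.2 ⟨hQ, hJQ⟩ hQP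
  have hPh : P.IsHomogeneous (homogeneousSubmodule (Fin s) ℂ) := by
    rw [le_antisymm hPQ hQP]
    exact (P.homogeneousCore (homogeneousSubmodule (Fin s) ℂ)).isHomogeneous
  have htr : Algebra.trdeg ℂ (MvPolynomial (Fin s) ℂ ⧸ P) = 0 := by
    rw [← coe_tdim, h0, Nat.cast_zero]
  have halg := (trdeg_eq_zero_iff.mp htr).isAlgebraic (Ideal.Quotient.mk P (X i))
  obtain ⟨p, hp0, hp⟩ := halg
  have hmem : Polynomial.aeval (X i : MvPolynomial (Fin s) ℂ) p ∈ P := by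
    rw [← Ideal.Quotient.eq_zero_iff_mem, ← hp]
    exact (Polynomial.aeval_algHom_apply (Ideal.Quotient.mkₐ ℂ P) (X i) p).symm
  have hc := hPh p.natDegree hmem
  rw [← DirectSum.Decomposition.decompose'_eq, decomposition.decompose'_apply,
    Polynomial.aeval_eq_sum_range, map_sum] at hc
  have hsum : ∑ k ∈ Finset.range (p.natDegree + 1), homogeneousComponent p.natDegree
      (p.coeff k • (X i : MvPolynomial (Fin s) ℂ) ^ k) = p.leadingCoeff • X i ^ p.natDegree := by
    rw [Finset.sum_range_succ, Finset.sum_eq_zero, zero_add, map_smul,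
      homogeneousComponent_of_mem ((isHomogeneous_X ℂ i).pow _), one_mul, if_pos rfl]
    · rfl
    · intro k hk
      rw [map_smul, homogeneousComponent_of_mem ((isHomogeneous_X ℂ i).pow _), one_mul,
        if_neg (Finset.mem_range.mp hk).ne', smul_zero]
  rw [hsum, smul_eq_C_mul] at hc
  refine hPp.mem_of_pow_mem _ ((hPp.mem_or_mem hc).resolve_left fun h => hPp.ne_top ?_)
  exact Ideal.eq_top_of_isUnit_mem _ h
    ((Polynomial.leadingCoeff_ne_zero.mpr hp0).isUnit.map C)

/-- The linear form with coefficients on the moment curve. -/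
def momentForm (s : ℕ) (l : ℂ) : MvPolynomial (Fin s) ℂ := ∑ i : Fin s, l ^ (i : ℕ) • X i

theorem momentForm_isHomogeneous (l : ℂ) : (momentForm s l).IsHomogeneous 1 :=
  IsHomogeneous.sum _ _ _ fun i _ => by
    exact (homogeneousSubmodule (Fin s) ℂ 1).smul_mem _ (isHomogeneous_X ℂ i)

theorem aeval_momentForm (l : ℂ) : aeval g (momentForm s l) = ∑ i : Fin s, l ^ (i : ℕ) • g i := by
  simp [momentForm]

theorem eventually_momentForm_notMem {P : Ideal (MvPolynomial (Fin s) ℂ)} [P.IsPrime]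
    (hP : ∃ i, X i ∉ P) : ∀ᶠ l in Filter.cofinite, momentForm s l ∉ P := by
  have := eventually_sum_pow_smul_ne_zero (fun i => Ideal.Quotient.mkₐ ℂ P (X i))
    (by simpa [Ideal.Quotient.eq_zero_iff_mem] using hP)
  filter_upwards [this] with l hl h
  apply hl
  rw [← Ideal.Quotient.eq_zero_iff_mem] at h
  rw [← h, momentForm]
  change _ = Ideal.Quotient.mkₐ ℂ P _
  simp [map_sum]

/-- The ideal cut out by a form `y`, the first `k` moment forms and the relations of `g`. -/
def cutIdeal (y : MvPolynomial (Fin s) ℂ) (k : ℕ) (l : ℕ → ℂ) : Ideal (MvPolynomial (Fin s) ℂ) :=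
  RingHom.ker (rees g) ⊔ Ideal.span {y} ⊔
    Ideal.span (Set.range fun i : Fin k => momentForm s (l i))

theorem cutIdeal_isHomogeneous {y : MvPolynomial (Fin s) ℂ} (hy : y.IsHomogeneous 1) (k : ℕ)
    (l : ℕ → ℂ) : (cutIdeal g y k l).IsHomogeneous (homogeneousSubmodule (Fin s) ℂ) := by
  refine ((ker_rees_isHomogeneous g).sup (Ideal.homogeneous_span _ _ ?_)).sup
    (Ideal.homogeneous_span _ _ ?_)
  · rintro _ rfl
    exact ⟨1, hy⟩
  · rintro _ ⟨i, rfl⟩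
    exact ⟨1, momentForm_isHomogeneous _⟩

theorem eventually_tdim_cutIdeal [IsDomain B] [Algebra.FiniteType ℂ B]
    {y : MvPolynomial (Fin s) ℂ} (hy : rees g y = Polynomial.X) (k : ℕ) :
    ∀ᶠ l in genFilter k, ∀ P ∈ (cutIdeal g y k l).minimalPrimes,
      (∀ i, X i ∈ P) ∨ tdim (MvPolynomial (Fin s) ℂ ⧸ P) + k ≤ tdim B := by
  induction k with
  | zero =>
    refine Filter.Eventually.of_forall fun l P hP => Or.inr ?_
    have hPp : P.IsPrime := hP.1.1
    have hk : (RingHom.ker (rees g)).IsPrime := RingHom.ker_isPrime _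
    have hlt : RingHom.ker (rees g) < P := by
      have hle : RingHom.ker (rees g) ⊔ Ideal.span {y} ≤ P := le_sup_left.trans hP.1.2
      refine lt_of_le_of_ne (le_sup_left.trans hle) fun h => ?_
      have : y ∈ P := hle (Ideal.mem_sup_right (Ideal.mem_span_singleton_self y))
      rw [← h, RingHom.mem_ker, hy] at this
      exact Polynomial.X_ne_zero this
    have h1 := tdim_quotient_lt hlt
    have h2 := tdim_le_of_injective (Ideal.kerLiftAlg (rees g)) (Ideal.kerLiftAlg_injective _)
    rw [tdim_polynomial] at h2
    change tdim (_ ⧸ RingHom.ker (rees g)) ≤ _ at h2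
    omega
  | succ k ih =>
    rw [eventually_genFilter_succ]
    filter_upwards [ih] with l hl
    have hfin := Ideal.finite_minimalPrimes_of_isNoetherianRing _ (cutIdeal g y k l)
    have hav : ∀ᶠ x in Filter.cofinite, ∀ Q ∈ (cutIdeal g y k l).minimalPrimes,
        (∃ i, X i ∉ Q) → momentForm s x ∉ Q := by
      rw [Filter.eventually_all_finite hfin]
      intro Q hQ
      have hQp : Q.IsPrime := hQ.1.1
      by_cases h : ∃ i, X i ∉ Q
      · filter_upwards [eventually_momentForm_notMem h] with x hx _ using hx
      · exact Filter.Eventually.of_forall fun _ h' => absurd h' h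
    filter_upwards [hav] with x hx P hP
    have hPp : P.IsPrime := hP.1.1
    have hle : cutIdeal g y k l ≤ P := by
      refine le_trans ?_ hP.1.2
      refine sup_le_sup le_rfl (Ideal.span_mono ?_)
      rintro _ ⟨i, rfl⟩
      exact ⟨i.castSucc, by simp [Function.update_of_ne i.2.ne]⟩
    obtain ⟨Q, hQ, hQP⟩ := Ideal.exists_minimalPrimes_le hle
    have hQp : Q.IsPrime := hQ.1.1
    by_cases h : ∃ i, X i ∉ Q
    · right
      have hmem : momentForm s x ∈ P :=
        hP.1.2 (Ideal.mem_sup_right (Ideal.subset_span ⟨Fin.last k, by simp⟩))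
      have hlt : Q < P := lt_of_le_of_ne hQP fun he => hx Q hQ h (he ▸ hmem)
      have h1 := tdim_quotient_lt hlt
      have h2 := (hl Q hQ).resolve_left (by simpa using h)
      omega
    · left
      push Not at h
      exact fun i => hQP (h i)

theorem filteredFinite_of_radical {y : MvPolynomial (Fin s) ℂ} (hy : aeval g y = 1)
    (hyh : y.IsHomogeneous 1) {k : ℕ} {l : ℕ → ℂ} (hX : ∀ i, X i ∈ (cutIdeal g y k l).radical) :
    FilteredFinite (Submodule.span ℂ (Set.range g))
      (fun i : Fin k => ∑ j : Fin s, l i ^ (j : ℕ) • g j) := by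
  let I : Ideal (MvPolynomial (Fin s) ℂ) := Ideal.span (Set.range X)
  obtain ⟨m, hm⟩ := Ideal.exists_pow_le_of_le_radical_of_fg (I := I) (J := cutIdeal g y k l)
    (by rw [Ideal.span_le]; rintro _ ⟨i, rfl⟩; exact hX i)
    ⟨Finset.univ.image X, by simp [I]⟩
  let W : Submodule ℂ (MvPolynomial (Fin s) ℂ) := Submodule.span ℂ (Set.range X)
  have hV : Submodule.span ℂ (Set.range g) = W.map (aeval g).toLinearMap := by
    rw [Submodule.map_span, ← Set.range_comp]
    congr 2
    ext i
    simp
  have hWh (d : ℕ) : W ^ d = homogeneousSubmodule (Fin s) ℂ d := by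
    rw [← homogeneousSubmodule_one_pow _ d, homogeneousSubmodule_one_eq_span_X]
  have hWV (d : ℕ) : ∀ a : MvPolynomial (Fin s) ℂ,
      aeval g (homogeneousComponent d a) ∈ Submodule.span ℂ (Set.range g) ^ d := by
    intro a
    rw [hV, ← Submodule.map_pow, hWh]
    exact Submodule.mem_map_of_mem (homogeneousComponent_isHomogeneous d a)
  refine ⟨m, fun x hx => ?_⟩
  rw [hV, ← Submodule.map_pow] at hx
  obtain ⟨p, hp, rfl⟩ := hx
  have hWI : W ^ (m + 1) ≤ (I ^ (m + 1)).restrictScalars ℂ := by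
    induction m + 1 with
    | zero => simp [Ideal.one_eq_top]
    | succ d ih =>
      rw [pow_succ, pow_succ, Submodule.mul_le]
      intro a ha b hb
      exact Ideal.mul_mem_mul (ih ha) (Submodule.span_le_restrictScalars ℂ _ _ hb)
  have hpI : p ∈ I ^ (m + 1) := hWI hp
  have hpJ : p ∈ cutIdeal g y k l := hm (Ideal.pow_le_pow_right m.le_succ hpI)
  obtain ⟨q, hq, w, hw, rfl⟩ := Submodule.mem_sup.mp hpJ
  obtain ⟨h, hh, u, hu, rfl⟩ := Submodule.mem_sup.mp hq
  obtain ⟨a, rfl⟩ := Ideal.mem_span_singleton'.mp hu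
  obtain ⟨b, rfl⟩ := Ideal.mem_span_range_iff_exists_fun.mp hw
  have hhc : homogeneousComponent (m + 1) (h + a * y + ∑ i, b i * momentForm s (l i))
      = h + a * y + ∑ i, b i * momentForm s (l i) := by
    rw [hWh] at hp
    rw [homogeneousComponent_of_mem hp, if_pos rfl]
  refine ⟨aeval g (homogeneousComponent m a), hWV m a,
    fun i => aeval g (homogeneousComponent m (b i)), fun i => hWV m (b i), ?_⟩
  rw [AlgHom.toLinearMap_apply, ← hhc]
  rw [RingHom.mem_ker] at hh
  simp only [map_add, map_sum, mul_comm _ y, mul_comm _ (momentForm s _),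
    homogeneousComponent_mul_of_isHomogeneous_one hyh,
    homogeneousComponent_mul_of_isHomogeneous_one (momentForm_isHomogeneous _),
    aeval_homogeneousComponent_of_rees g hh, map_mul, hy, one_mul, zero_add, aeval_momentForm]

theorem eventually_filteredFinite [IsDomain B] [Algebra.FiniteType ℂ B]
    (h1 : (1 : B) ∈ Submodule.span ℂ (Set.range g)) :
    ∀ᶠ l in genFilter (tdim B), FilteredFinite (Submodule.span ℂ (Set.range g))
      (fun i : Fin (tdim B) => ∑ j : Fin s, l i ^ (j : ℕ) • g j) := by
  obtain ⟨a, ha⟩ := (Submodule.mem_span_range_iff_exists_fun ℂ).mp h1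
  let y : MvPolynomial (Fin s) ℂ := ∑ i, a i • X i
  have hyh : y.IsHomogeneous 1 := IsHomogeneous.sum _ _ _ fun i _ =>
    (homogeneousSubmodule (Fin s) ℂ 1).smul_mem _ (isHomogeneous_X ℂ i)
  have hy1 : aeval g y = 1 := by simpa [y] using ha
  have hyr : rees g y = Polynomial.X := by
    rw [rees_of_isHomogeneous g hyh, hy1, map_one, one_mul, pow_one]
  filter_upwards [eventually_tdim_cutIdeal g hyr (tdim B)] with l hl
  refine filteredFinite_of_radical g hy1 hyh fun i => ?_
  rw [← Ideal.sInf_minimalPrimes, Ideal.mem_sInf]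
  intro P hP
  rcases hl P hP with h | h
  · exact h i
  · exact mem_of_minimalPrimes_of_tdim_eq_zero (cutIdeal_isHomogeneous g hyh _ _) hP (by omega) i

end GenericNormalization

theorem finrank_adjoin_mul_natDegree_minpoly {K L : Type} [Field K] [Field L] [Algebra K L]
    {x : L} (hx : IsIntegral K x) :
    Module.finrank (IntermediateField.adjoin K {x}) L * (minpoly K x).natDegree
      = Module.finrank K L := by
  rw [← Module.finrank_mul_finrank K (IntermediateField.adjoin K {x}) L,
    IntermediateField.adjoin.finrank hx, mul_comm]

theorem faithfulSMul_algebraicClosure_fractionRing (A : Type) [CommRing A] [IsDomain A] :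
    FaithfulSMul A (AlgebraicClosure (FractionRing A)) := by
  rw [faithfulSMul_iff_algebraMap_injective,
    IsScalarTower.algebraMap_eq A (FractionRing A) (AlgebraicClosure (FractionRing A))]
  exact (algebraMap (FractionRing A) _).injective.comp (IsFractionRing.injective A _)

section NormPackage

variable {A B Ω : Type} [CommRing A] [IsDomain A] [CommRing B] [IsDomain B] [Algebra A B]
  [Module.Finite A B] [Field Ω] [Algebra A Ω] [FaithfulSMul A Ω]

theorem algHom_injective_of_finite (σ : B →ₐ[A] Ω) : Function.Injective σ := by
  rw [← AlgHom.coe_toRingHom, RingHom.injective_iff_ker_eq_bot]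
  refine Ideal.eq_bot_of_comap_eq_bot (R := A) ?_
  rw [eq_bot_iff]
  intro a ha
  rw [Ideal.mem_comap, RingHom.mem_ker, AlgHom.coe_toRingHom, AlgHom.commutes] at ha
  exact (FaithfulSMul.algebraMap_injective A Ω) (ha.trans (map_zero _).symm)

variable [FaithfulSMul A B]

attribute [local instance] FractionRing.liftAlgebra FractionRing.isScalarTower_liftAlgebra

/-- Embeddings of a finite extension of domains are embeddings of the fraction fields. -/
def algHomEquivFractionRing :
    (B →ₐ[A] Ω) ≃ (FractionRing B →ₐ[FractionRing A] Ω) where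
  toFun σ := AlgHom.extendScalarsOfIsLocalization (FractionRing A) (nonZeroDivisors A)
    (IsFractionRing.liftAlgHom (K := FractionRing B) (algHom_injective_of_finite σ))
  invFun τ := (τ.restrictScalars A).comp (IsScalarTower.toAlgHom A B (FractionRing B))
  left_inv σ := by ext x; simp
  right_inv τ := by
    apply AlgHom.coe_ringHom_injective
    apply IsLocalization.ringHom_ext (nonZeroDivisors B)
    ext x; simp

theorem finite_algHom_of_finite : Finite (B →ₐ[A] Ω) :=
  have : FiniteDimensional (FractionRing A) (FractionRing B) := inferInstance
  Finite.of_equiv _ algHomEquivFractionRing.symm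

theorem natCard_algHom_of_finite [CharZero A] [IsAlgClosed Ω] :
    Nat.card (B →ₐ[A] Ω) = Module.finrank A B := by
  have : CharZero (FractionRing A) := inferInstance
  rw [Nat.card_congr algHomEquivFractionRing, Nat.card_eq_fintype_card, AlgHom.card,
    IsFractionRing.finrank_eq A (FractionRing A) B (FractionRing B)]

variable (A) in
theorem exists_norm_eq_coeff_minpoly_pow [CharZero A] [IsIntegrallyClosed A] (t : B) :
    ∃ m : ℕ, m * (minpoly A t).natDegree = Module.finrank A B ∧
      ∀ (Ω : Type) [Field Ω] [IsAlgClosed Ω] [Algebra A Ω] [FaithfulSMul A Ω]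
        [Fintype (B →ₐ[A] Ω)],
        algebraMap A Ω (((-1) ^ (minpoly A t).natDegree * (minpoly A t).coeff 0) ^ m)
          = ∏ σ : B →ₐ[A] Ω, σ t := by
  let F := FractionRing A
  let E := FractionRing B
  let x : E := algebraMap B E t
  have hx : IsIntegral F x := Algebra.IsIntegral.isIntegral x
  have hmin : minpoly F x = (minpoly A t).map (algebraMap A F) :=
    minpoly.isIntegrallyClosed_eq_field_fractions F E (Algebra.IsIntegral.isIntegral t)
  have hdeg : (minpoly F x).natDegree = (minpoly A t).natDegree := by
    rw [hmin]
    exact (minpoly.monic (Algebra.IsIntegral.isIntegral t)).natDegree_map _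
  refine ⟨Module.finrank (IntermediateField.adjoin F {x}) E, ?_, ?_⟩
  · rw [← IsFractionRing.finrank_eq A F B E, ← hdeg, finrank_adjoin_mul_natDegree_minpoly hx]
  · intro Ω _ _ _ _ _
    have h1 := Algebra.norm_eq_prod_embeddings F Ω x
    have h2 := Algebra.norm_eq_norm_adjoin F x
    have h3 := Algebra.PowerBasis.norm_gen_eq_coeff_zero_minpoly
      (IntermediateField.adjoin.powerBasis hx)
    rw [IntermediateField.adjoin.powerBasis_gen, IntermediateField.adjoin.powerBasis_dim,
      IntermediateField.minpoly_gen, hdeg, hmin, Polynomial.coeff_map] at h3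
    rw [h3] at h2
    rw [h2] at h1
    rw [IsScalarTower.algebraMap_apply A F Ω]
    simp only [map_pow, map_mul, map_neg, map_one] at h1 ⊢
    rw [h1]
    refine (Fintype.prod_equiv algHomEquivFractionRing _ _ fun σ => ?_).symm
    simp [algHomEquivFractionRing, x, E]

/-- The norm of an element of a finite extension of an integrally closed domain. -/
def intNormOf (A : Type) {B : Type} [CommRing A] [CommRing B] [Algebra A B] (t : B) : A :=
  ((-1) ^ (minpoly A t).natDegree * (minpoly A t).coeff 0) ^
    (Module.finrank A B / (minpoly A t).natDegree)

variable [CharZero A] [IsIntegrallyClosed A]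

variable (A) in
theorem natDegree_minpoly_mul (t : B) :
    Module.finrank A B / (minpoly A t).natDegree * (minpoly A t).natDegree
        = Module.finrank A B := by
  obtain ⟨m, hm, -⟩ := exists_norm_eq_coeff_minpoly_pow A t
  exact Nat.div_mul_cancel (Dvd.intro_left m hm)

theorem algebraMap_intNormOf [IsAlgClosed Ω] [Fintype (B →ₐ[A] Ω)] (t : B) :
    algebraMap A Ω (intNormOf A t) = ∏ σ : B →ₐ[A] Ω, σ t := by
  obtain ⟨m, hm, h⟩ := exists_norm_eq_coeff_minpoly_pow A t
  have hpos := minpoly.natDegree_pos (Algebra.IsIntegral.isIntegral (R := A) t)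
  rw [intNormOf, ← hm, Nat.mul_div_cancel _ hpos, h Ω]

theorem dvd_algebraMap_intNormOf (t : B) : t ∣ algebraMap A B (intNormOf A t) := by
  have hpos : 0 < Module.finrank A B := Module.finrank_pos
  have hk : Module.finrank A B / (minpoly A t).natDegree ≠ 0 := by
    intro h0
    have := natDegree_minpoly_mul A t
    rw [h0, zero_mul] at this
    omega
  rw [intNormOf, map_pow, map_mul]
  refine dvd_pow (Dvd.dvd.mul_left ?_ _) hk
  have h := minpoly.aeval A t
  rw [← Polynomial.divX_mul_X_add (minpoly A t), map_add, map_mul, Polynomial.aeval_X,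
    Polynomial.aeval_C] at h
  rw [eq_neg_of_add_eq_zero_right h]
  exact (Dvd.intro_left _ rfl).neg_right

theorem intNormOf_ne_zero {t : B} (ht : t ≠ 0) : intNormOf A t ≠ 0 := by
  let Ω := AlgebraicClosure (FractionRing A)
  have : FaithfulSMul A Ω := faithfulSMul_algebraicClosure_fractionRing A
  have : Finite (B →ₐ[A] Ω) := finite_algHom_of_finite
  have := Fintype.ofFinite (B →ₐ[A] Ω)
  intro h
  have h1 := algebraMap_intNormOf (A := A) (Ω := Ω) t
  rw [h, map_zero, eq_comm, Finset.prod_eq_zero_iff] at h1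
  obtain ⟨σ, -, hσ⟩ := h1
  exact ht (algHom_injective_of_finite σ (hσ.trans (map_zero σ).symm))

theorem exists_prime_over_of_dvd_intNormOf {t : B} {q : A} (hq : Prime q)
    (hqt : q ∣ intNormOf A t) :
    ∃ Q : Ideal B, Q.IsPrime ∧ t ∈ Q ∧ Q.comap (algebraMap A B) = Ideal.span {q} := by
  have hqp : (Ideal.span {q}).IsPrime := (Ideal.span_singleton_prime hq.ne_zero).mpr hq
  obtain ⟨Q, hQ, hQp, hQc⟩ := Ideal.exists_ideal_over_prime_of_isIntegral (Ideal.span {q})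
    (Ideal.span {t}) (by
      intro a ha
      obtain ⟨b, hb⟩ := Ideal.mem_span_singleton.mp (Ideal.mem_comap.mp ha)
      let Ω := AlgebraicClosure (FractionRing A)
      have : FaithfulSMul A Ω := faithfulSMul_algebraicClosure_fractionRing A
      have : Finite (B →ₐ[A] Ω) := finite_algHom_of_finite
      have := Fintype.ofFinite (B →ₐ[A] Ω)
      have hinj : Function.Injective (algebraMap A Ω) := FaithfulSMul.algebraMap_injective A Ω
      have : a ^ Fintype.card (B →ₐ[A] Ω) = intNormOf A t * intNormOf A b := by
        apply hinj
        rw [map_mul, algebraMap_intNormOf, algebraMap_intNormOf, ← Finset.prod_mul_distrib,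
          map_pow, ← Finset.card_univ, ← Finset.prod_const]
        exact Finset.prod_congr rfl fun σ _ => by rw [← map_mul, ← hb, σ.commutes]
      rw [Ideal.mem_span_singleton]
      exact hq.dvd_of_dvd_pow (this ▸ hqt.mul_right _))
  exact ⟨Q, hQp, hQ (Ideal.mem_span_singleton_self t), hQc⟩

theorem natDegree_minpoly_of_separating [IsAlgClosed Ω] {θ : B}
    (hθ : Function.Injective fun σ : B →ₐ[A] Ω => σ θ) :
    (minpoly A θ).natDegree = Module.finrank A B := by
  have : Finite (B →ₐ[A] Ω) := finite_algHom_of_finite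
  have := Fintype.ofFinite (B →ₐ[A] Ω)
  have hIntegral : IsIntegral A θ := Algebra.IsIntegral.isIntegral θ
  have hpos : 0 < Module.finrank A B := Module.finrank_pos
  apply le_antisymm
  · exact Nat.le_of_dvd hpos (Dvd.intro_left _ (natDegree_minpoly_mul A θ))
  · rw [← natCard_algHom_of_finite (Ω := Ω), Nat.card_eq_fintype_card, ← Finset.card_univ,
      ← Finset.card_image_of_injective _ hθ,
          ← (minpoly.monic hIntegral).natDegree_map (algebraMap A Ω)]
    refine Polynomial.card_le_degree_of_subset_roots fun x hx => ?_
    rw [Finset.mem_val, Finset.mem_image] at hx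
    obtain ⟨σ, -, rfl⟩ := hx
    rw [Polynomial.mem_roots ((minpoly.monic hIntegral).map _).ne_zero, Polynomial.IsRoot,
      Polynomial.eval_map_algebraMap, Polynomial.aeval_algHom_apply, minpoly.aeval, map_zero]

theorem minpoly_map_of_separating [IsAlgClosed Ω] [Fintype (B →ₐ[A] Ω)] {θ : B}
    (hθ : Function.Injective fun σ : B →ₐ[A] Ω => σ θ) :
    (minpoly A θ).map (algebraMap A Ω) = ∏ σ : B →ₐ[A] Ω, (Polynomial.X - Polynomial.C (σ θ)) := by
  have hIntegral : IsIntegral A θ := Algebra.IsIntegral.isIntegral θ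
  have hmon := (minpoly.monic hIntegral).map (algebraMap A Ω)
  refine Polynomial.eq_of_monic_of_dvd_of_natDegree_le
    (Polynomial.monic_prod_of_monic _ _ fun σ _ => Polynomial.monic_X_sub_C (σ θ)) hmon ?_ ?_
  · refine Finset.prod_dvd_of_coprime ?_ ?_
    · intro σ _ τ _ hne
      exact Polynomial.isCoprime_X_sub_C_of_isUnit_sub (sub_ne_zero.mpr fun h => hne (hθ h)).isUnit
    · intro σ _
      rw [Polynomial.dvd_iff_isRoot, Polynomial.IsRoot, Polynomial.eval_map_algebraMap,
        Polynomial.aeval_algHom_apply, minpoly.aeval, map_zero]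
  · rw [(minpoly.monic hIntegral).natDegree_map, natDegree_minpoly_of_separating hθ,
      Polynomial.natDegree_prod_of_monic _ _ fun σ _ => Polynomial.monic_X_sub_C _]
    simp [← natCard_algHom_of_finite (Ω := Ω)]

end NormPackage

theorem Submodule.pow_le_pow_right_of_one_mem {B : Type} [CommRing B] [Algebra ℂ B]
    {V : Submodule ℂ B} (h1 : (1 : B) ∈ V) {a b : ℕ} (h : a ≤ b) : V ^ a ≤ V ^ b :=
  pow_le_pow_right₀ (Submodule.one_le.mpr h1) h

/-- An ascending family of powers of `V` exhausts `B`. -/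
def ExhaustsBy {B : Type} [CommRing B] [Algebra ℂ B] (V : Submodule ℂ B) : Prop :=
  ∀ x : B, ∃ e : ℕ, x ∈ V ^ e

namespace FilteredFinite
open MvPolynomial

section Finite
variable {N : ℕ} {B : Type} [CommRing B] [Algebra ℂ B] [Algebra (MvPolynomial (Fin N) ℂ) B]
  [IsScalarTower ℂ (MvPolynomial (Fin N) ℂ) B] {V : Submodule ℂ B}

theorem exists_span [FiniteDimensional ℂ V]
    (h : FilteredFinite V (fun i : Fin N => algebraMap (MvPolynomial (Fin N) ℂ) B (X i))) :
    ∃ (m s : ℕ) (b : Fin s → B), ∀ D : ℕ, ∀ x ∈ V ^ (m + D),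
      ∃ a : Fin s → MvPolynomial (Fin N) ℂ, (∀ j, (a j).totalDegree ≤ D) ∧ x = ∑ j, a j • b j := by
  obtain ⟨m, hm⟩ := h
  obtain ⟨s, b, hb⟩ := Submodule.fg_iff_exists_fin_generating_family.mp
    (((Submodule.fg_iff_finiteDimensional V).mpr inferInstance).pow m)
  refine ⟨m, s, b, fun D => ?_⟩
  induction D with
  | zero =>
    intro x hx
    rw [add_zero, ← hb] at hx
    obtain ⟨c, rfl⟩ := (Submodule.mem_span_range_iff_exists_fun ℂ).mp hx
    refine ⟨fun j => C (c j), fun j => by simp, Finset.sum_congr rfl fun j _ => ?_⟩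
    rw [← MvPolynomial.algebraMap_eq, algebraMap_smul]
  | succ D ih =>
    intro x hx
    rw [show m + (D + 1) = (m + 1) + D by ring, pow_add] at hx
    refine Submodule.mul_induction_on hx ?_ ?_
    · intro p hp q hq
      obtain ⟨a, ha, c, hc, rfl⟩ := hm p hp
      have hmul {y : B} (hy : y ∈ V ^ m) : y * q ∈ V ^ (m + D) := by
        rw [pow_add]; exact Submodule.mul_mem_mul hy hq
      obtain ⟨a', ha', ha''⟩ := ih _ (hmul ha)
      choose c' hc' hc'' using fun i => ih _ (hmul (hc i))
      refine ⟨fun j => a' j + ∑ i, X i * c' i j, fun j => ?_, ?_⟩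
      · refine (totalDegree_add _ _).trans (max_le ((ha' j).trans (by omega)) ?_)
        refine totalDegree_finsetSum_le fun i _ => ?_
        refine (totalDegree_mul _ _).trans ?_
        rw [totalDegree_X]
        have := hc' i j
        omega
      · simp only [add_smul, Finset.sum_add_distrib, Finset.sum_smul, mul_smul]
        rw [Finset.sum_comm, add_mul, Finset.sum_mul, ← ha'']
        congr 1
        refine Finset.sum_congr rfl fun i _ => ?_
        rw [← Finset.smul_sum, ← hc'', Algebra.smul_def, mul_assoc]
    · rintro x y ⟨a, ha, rfl⟩ ⟨a', ha', rfl⟩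
      refine ⟨fun j => a j + a' j, fun j =>
        (totalDegree_add _ _).trans (max_le (ha j) (ha' j)), ?_⟩
      simp only [add_smul, Finset.sum_add_distrib]

theorem module_finite [FiniteDimensional ℂ V] (h1 : (1 : B) ∈ V) (hV : ExhaustsBy V)
    (h : FilteredFinite V (fun i : Fin N => algebraMap (MvPolynomial (Fin N) ℂ) B (X i))) :
    Module.Finite (MvPolynomial (Fin N) ℂ) B := by
  obtain ⟨m, s, b, hb⟩ := h.exists_span
  refine ⟨Submodule.fg_iff_exists_fin_generating_family.mpr ⟨s, b, ?_⟩⟩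
  rw [eq_top_iff]
  intro x _
  obtain ⟨e, he⟩ := hV x
  obtain ⟨a, -, rfl⟩ := hb e x (Submodule.pow_le_pow_right_of_one_mem h1 (by omega) he)
  exact Submodule.sum_mem _ fun j _ => Submodule.smul_mem _ _ (Submodule.subset_span ⟨j, rfl⟩)

end Finite

/-- A finite extension of a polynomial ring by a ring of the same dimension is faithful. -/
theorem _root_.faithfulSMul_of_finite_of_tdim_eq {N : ℕ} {B : Type} [CommRing B] [IsDomain B]
    [Algebra ℂ B] [Algebra (MvPolynomial (Fin N) ℂ) B] [IsScalarTower ℂ (MvPolynomial (Fin N) ℂ) B]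
    [Module.Finite (MvPolynomial (Fin N) ℂ) B] (hN : tdim B = N) :
    FaithfulSMul (MvPolynomial (Fin N) ℂ) B := by
  have hft : Algebra.FiniteType ℂ B :=
    (inferInstance : Algebra.FiniteType ℂ (MvPolynomial (Fin N) ℂ)).trans inferInstance
  rw [faithfulSMul_iff_algebraMap_injective]
  by_contra hinj
  rw [injective_iff_map_eq_zero] at hinj
  push Not at hinj
  obtain ⟨y, hy, hy0⟩ := hinj
  let f : MvPolynomial (Fin N) ℂ →ₐ[ℂ] B := IsScalarTower.toAlgHom ℂ _ B
  have hlt : tdim f.range < N := by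
    have := tdim_lt_of_surjective f.rangeRestrict f.rangeRestrict_surjective (y := y)
      (Subtype.ext hy) hy0
    rwa [tdim_mvPolynomial] at this
  have hIntegral : Algebra.IsIntegral f.range B := by
    refine ⟨fun x => ?_⟩
    obtain ⟨p, hp, hpx⟩ := Algebra.IsIntegral.isIntegral (R := MvPolynomial (Fin N) ℂ) x
    refine ⟨p.map f.rangeRestrict.toRingHom, hp.map _, ?_⟩
    rw [Polynomial.eval₂_map]
    exact hpx
  have : FaithfulSMul ℂ f.range :=
    (faithfulSMul_iff_algebraMap_injective ℂ f.range).mpr (algebraMap ℂ f.range).injective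
  have htr := trdeg_add_eq ℂ f.range (A := B)
  have h0 : Algebra.trdeg f.range B = 0 := trdeg_eq_zero
  rw [h0, add_zero] at htr
  have : tdim f.range = tdim B := by rw [tdim, tdim, htr]
  omega
end FilteredFinite

section Coordinates
variable (A B : Type) [CommRing A] [IsDomain A] [CommRing B] [IsDomain B] [Algebra A B]
  [Module.Finite A B] [FaithfulSMul A B]

/-- Coordinates of the elements of a finite extension, with a common denominator `den`, in a
maximal linearly independent family `vec`. -/
structure FiniteCoordinates where
  den : A
  vec : Fin (Module.finrank A B) → B
  coord : B →ₗ[A] (Fin (Module.finrank A B) → A)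
  den_ne_zero : den ≠ 0
  linearIndependent_vec : LinearIndependent A vec
  den_smul : ∀ x, den • x = ∑ i, coord x i • vec i

attribute [local instance] FractionRing.liftAlgebra FractionRing.isScalarTower_liftAlgebra

theorem exists_basis_fractionRing {ω : Fin (Module.finrank A B) → B} (hω : LinearIndependent A ω) :
    ∃ b : Module.Basis (Fin (Module.finrank A B)) (FractionRing A) (FractionRing B),
      ∀ i, b i = algebraMap B (FractionRing B) (ω i) := by
  have hfin : FiniteDimensional (FractionRing A) (FractionRing B) := inferInstance
  have hcard := IsFractionRing.finrank_eq A (FractionRing A) B (FractionRing B)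
  have h1 : LinearIndependent A (fun i => algebraMap B (FractionRing B) (ω i)) :=
    hω.map' (Algebra.linearMap B (FractionRing B) |>.restrictScalars A)
      (LinearMap.ker_eq_bot.mpr (IsFractionRing.injective B (FractionRing B)))
  have h2 := (LinearIndependent.iff_fractionRing A (FractionRing A)).mp h1
  have : Nonempty (Fin (Module.finrank A B)) := ⟨⟨0, Module.finrank_pos⟩⟩
  exact ⟨basisOfLinearIndependentOfCardEqFinrank h2 (by rw [hcard, Fintype.card_fin]),
    fun i => by simp⟩

instance nonempty_finiteCoordinates : Nonempty (FiniteCoordinates A B) := by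
  obtain ⟨ω, hω⟩ := exists_linearIndependent_of_le_finrank (R := A) (M := B) le_rfl
  obtain ⟨b, hb⟩ := exists_basis_fractionRing A B hω
  have hx (x : B) : ∃ d : A, d ≠ 0 ∧ d • x ∈ Submodule.span A (Set.range ω) := by
    obtain ⟨⟨d, hd⟩, hd'⟩ := IsLocalization.exist_integer_multiples (nonZeroDivisors A)
      Finset.univ (fun i => b.repr (algebraMap B (FractionRing B) x) i)
    choose c hc using fun i => hd' i (Finset.mem_univ i)
    refine ⟨d, nonZeroDivisors.ne_zero hd, ?_⟩
    have : d • x = ∑ i, c i • ω i := by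
      apply IsFractionRing.injective B (FractionRing B)
      have h := b.sum_repr (algebraMap B (FractionRing B) x)
      rw [map_sum, Algebra.smul_def, map_mul, ← h, Finset.mul_sum]
      refine Finset.sum_congr rfl fun i _ => ?_
      rw [Algebra.smul_def (c i), map_mul, ← hb, ← IsScalarTower.algebraMap_apply,
        ← IsScalarTower.algebraMap_apply, ← Algebra.smul_def, ← Algebra.smul_def,
        ← IsScalarTower.algebraMap_smul (FractionRing A) (c i), hc, ← smul_assoc]
    rw [this]
    exact Submodule.sum_mem _ fun i _ => Submodule.smul_mem _ _ (Submodule.subset_span ⟨i, rfl⟩)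
  choose d hd0 hd using hx
  obtain ⟨S, hS⟩ := Module.Finite.fg_top (R := A) (M := B)
  have hall (x : B) : (∏ y ∈ S, d y) • x ∈ Submodule.span A (Set.range ω) := by
    have hxS : x ∈ Submodule.span A (S : Set B) := hS ▸ Submodule.mem_top
    induction hxS using Submodule.span_induction with
    | mem y hy =>
      rw [← Finset.prod_erase_mul S d hy, mul_smul]
      exact Submodule.smul_mem _ _ (hd y)
    | zero => simp
    | add y z _ _ h1 h2 => rw [smul_add]; exact add_mem h1 h2
    | smul a y _ h => rw [smul_comm]; exact Submodule.smul_mem _ _ h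
  let F := Submodule.span A (Set.range ω)
  let bF : Module.Basis _ A F := Module.Basis.span hω
  let m : B →ₗ[A] F := LinearMap.codRestrict F (LinearMap.lsmul A B (∏ y ∈ S, d y)) hall
  refine ⟨⟨∏ y ∈ S, d y, ω, bF.equivFun.toLinearMap ∘ₗ m,
    Finset.prod_ne_zero_iff.mpr fun y _ => hd0 y, hω, fun x => ?_⟩⟩
  have h := congrArg Subtype.val (bF.sum_equivFun (m x))
  rw [AddSubmonoidClass.coe_finsetSum] at h
  refine h.symm.trans (Finset.sum_congr rfl fun i _ => ?_)
  have hi : ((bF i : F) : B) = ω i := congrArg Subtype.val (Module.Basis.span_apply hω i)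
  rw [Submodule.coe_smul, hi]
  rfl

variable {A B}
namespace FiniteCoordinates
variable (c : FiniteCoordinates A B)

/-- The matrix of multiplication by `den • x`. -/
def mulMatrix (x : B) : Matrix (Fin (Module.finrank A B)) (Fin (Module.finrank A B)) A :=
  Matrix.of fun i j => c.coord (x * c.vec j) i

theorem eq_of_sum_eq {a a' : Fin (Module.finrank A B) → A}
    (h : ∑ i, a i • c.vec i = ∑ i, a' i • c.vec i) : a = a' := by
  have := Fintype.linearIndependent_iff.mp c.linearIndependent_vec (fun i => a i - a' i)
    (by simp [sub_smul, h])
  exact funext fun i => sub_eq_zero.mp (this i)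

/-- The matrix of multiplication by `den ^ 2 • x` depends linearly on the coordinates of `x`. -/
theorem den_mul_mulMatrix (x : B) (i j : Fin (Module.finrank A B)) :
    c.den * c.mulMatrix x i j = ∑ k, c.coord x k * c.mulMatrix (c.vec k) i j := by
  have h : (fun i => c.den * c.coord (x * c.vec j) i)
      = fun i => ∑ k, c.coord x k * c.coord (c.vec k * c.vec j) i := by
    apply c.eq_of_sum_eq
    simp only [mul_smul, Finset.sum_smul]
    rw [← Finset.smul_sum, ← c.den_smul, Finset.sum_comm]
    simp only [← Finset.smul_sum, ← c.den_smul]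
    rw [← smul_mul_assoc c.den x, c.den_smul x, Finset.sum_mul, Finset.smul_sum]
    exact Finset.sum_congr rfl fun k _ => by rw [smul_mul_assoc, smul_comm]
  exact congrFun h i

variable [CharZero A] [IsIntegrallyClosed A]

theorem det_mulMatrix (x : B) :
    (c.mulMatrix x).det = c.den ^ Module.finrank A B * intNormOf A x := by
  obtain ⟨b, hb⟩ := exists_basis_fractionRing A B c.linearIndependent_vec
  let K := FractionRing A
  let L := FractionRing B
  let Ω := AlgebraicClosure K
  have : FaithfulSMul A Ω := faithfulSMul_algebraicClosure_fractionRing A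
  have : Finite (B →ₐ[A] Ω) := finite_algHom_of_finite
  have := Fintype.ofFinite (B →ₐ[A] Ω)
  have hnorm : Algebra.norm K (algebraMap B L x) = algebraMap A K (intNormOf A x) := by
    apply (algebraMap K Ω).injective
    rw [Algebra.norm_eq_prod_embeddings K Ω, ← IsScalarTower.algebraMap_apply, algebraMap_intNormOf]
    refine (Fintype.prod_equiv algHomEquivFractionRing _ _ fun σ => ?_).symm
    simp [algHomEquivFractionRing, L]
  apply IsFractionRing.injective A K
  have hmat : (c.mulMatrix x).map (algebraMap A K)
      = algebraMap A K c.den • Algebra.leftMulMatrix b (algebraMap B L x) := by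
    ext i j
    rw [Matrix.smul_apply, Algebra.leftMulMatrix_eq_repr_mul, hb, Matrix.map_apply, smul_eq_mul]
    have h := congrArg (algebraMap B L) (c.den_smul (x * c.vec j))
    rw [map_sum] at h
    have h2 : algebraMap A K c.den • (algebraMap B L x * algebraMap B L (c.vec j))
        = ∑ i, algebraMap A K (c.coord (x * c.vec j) i) • b i := by
      have hs (a : A) (y : B) : algebraMap B L (a • y) = algebraMap A K a • algebraMap B L y := by
        rw [Algebra.smul_def, map_mul, ← IsScalarTower.algebraMap_apply, algebraMap_smul,
          Algebra.smul_def]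
      rw [← map_mul, ← hs, h]
      exact Finset.sum_congr rfl fun i _ => by rw [hs, hb]
    have h3 := congrArg (fun y => b.repr y i) h2
    simp only [map_smul, b.repr_sum_self, Finsupp.smul_apply, smul_eq_mul] at h3
    exact h3.symm
  rw [RingHom.map_det, RingHom.mapMatrix_apply, hmat, Matrix.det_smul, ← Algebra.norm_eq_matrix_det,
    hnorm, Fintype.card_fin, map_mul, map_pow]

end FiniteCoordinates
end Coordinates

section
open MvPolynomial

theorem totalDegree_det_le {N s E : ℕ} (M : Matrix (Fin s) (Fin s) (MvPolynomial (Fin N) ℂ))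
    (hM : ∀ i j, (M i j).totalDegree ≤ E) : M.det.totalDegree ≤ s * E := by
  rw [Matrix.det_apply]
  refine totalDegree_finsetSum_le fun σ _ => ?_
  have h : (∏ i, M (σ i) i).totalDegree ≤ s * E := by
    refine (totalDegree_finsetProd _ _).trans ?_
    simpa using Finset.sum_le_card_nsmul Finset.univ _ E fun i _ => hM (σ i) i
  rcases Int.units_eq_one_or (Equiv.Perm.sign σ) with h1 | h1 <;> simpa [h1] using h

theorem totalDegree_pow_of_isDomain {N : ℕ} {p : MvPolynomial (Fin N) ℂ} (hp : p ≠ 0) (k : ℕ) :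
    (p ^ k).totalDegree = k * p.totalDegree := by
  induction k with
  | zero => simp
  | succ k ih => rw [pow_succ, totalDegree_mul_of_isDomain (pow_ne_zero k hp) hp, ih]; ring

theorem intNormOf_pow {A B : Type} [CommRing A] [IsDomain A] [CommRing B] [IsDomain B] [Algebra A B]
    [Module.Finite A B] [FaithfulSMul A B] [CharZero A] [IsIntegrallyClosed A] (t : B) (k : ℕ) :
    intNormOf A (t ^ k) = intNormOf A t ^ k := by
  let Ω := AlgebraicClosure (FractionRing A)
  have : FaithfulSMul A Ω := faithfulSMul_algebraicClosure_fractionRing A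
  have : Finite (B →ₐ[A] Ω) := finite_algHom_of_finite
  have := Fintype.ofFinite (B →ₐ[A] Ω)
  apply FaithfulSMul.algebraMap_injective A Ω
  rw [map_pow, algebraMap_intNormOf, algebraMap_intNormOf]
  simp [Finset.prod_pow]

/-- The expansion of a polynomial along the generic line through a point. -/
def lineExpansion {N : ℕ} (pt : Fin N → ℂ) :
    MvPolynomial (Fin N) ℂ →ₐ[ℂ] Polynomial (MvPolynomial (Fin N) ℂ) :=
  (GenericNormalization.rees (X : Fin N → MvPolynomial (Fin N) ℂ)).comp
    (aeval fun i => X i + C (pt i))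

theorem lineExpansion_X {N : ℕ} (pt : Fin N → ℂ) (i : Fin N) :
    lineExpansion pt (X i) = Polynomial.C (X i) * Polynomial.X + Polynomial.C (C (pt i)) := by
  simp only [lineExpansion, AlgHom.comp_apply, aeval_X, map_add, GenericNormalization.rees]
  congr 1
  rw [← MvPolynomial.algebraMap_eq, AlgHom.commutes]
  rfl

theorem lineExpansion_injective {N : ℕ} (pt : Fin N → ℂ) :
    Function.Injective (lineExpansion pt) := by
  let ev : Polynomial (MvPolynomial (Fin N) ℂ) →ₐ[ℂ] MvPolynomial (Fin N) ℂ :=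
    (aeval fun i => X i - C (pt i)).comp ((Polynomial.aeval (R := MvPolynomial (Fin N) ℂ)
      (1 : MvPolynomial (Fin N) ℂ)).restrictScalars ℂ)
  have h : ev.comp (lineExpansion pt) = AlgHom.id ℂ _ := by
    ext i
    simp only [ev, AlgHom.comp_apply, lineExpansion_X]
    simp [← MvPolynomial.algebraMap_eq]
  exact Function.LeftInverse.injective (g := ev) fun x => DFunLike.congr_fun h x

theorem natDegree_lineExpansion_le {N : ℕ} (pt : Fin N → ℂ) (p : MvPolynomial (Fin N) ℂ) :
    (lineExpansion pt p).natDegree ≤ p.totalDegree := by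
  conv_lhs => rw [p.as_sum, map_sum]
  refine Polynomial.natDegree_sum_le_of_forall_le _ _ fun α hα => ?_
  rw [monomial_eq, map_mul, Finsupp.prod_fintype _ _ (by simp), map_prod]
  refine Polynomial.natDegree_mul_le.trans ?_
  have h0 : (lineExpansion pt (C (coeff α p))).natDegree = 0 := by
    rw [← MvPolynomial.algebraMap_eq, AlgHom.commutes]
    exact Polynomial.natDegree_C _
  rw [h0, zero_add]
  refine (Polynomial.natDegree_prod_le _ _).trans ?_
  have h1 : ∑ i, α i ≤ p.totalDegree := by
    have := le_totalDegree hα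
    rwa [Finsupp.sum_fintype _ _ (by simp)] at this
  refine (Finset.sum_le_sum fun i _ => ?_).trans h1
  rw [map_pow, lineExpansion_X]
  refine Polynomial.natDegree_pow_le.trans ?_
  have : (Polynomial.C (X i) * Polynomial.X + Polynomial.C (C (pt i)) :
      Polynomial (MvPolynomial (Fin N) ℂ)).natDegree ≤ 1 := Polynomial.natDegree_linear_le
  nlinarith

theorem not_X_dvd_lineExpansion {N : ℕ} {pt : Fin N → ℂ} {p : MvPolynomial (Fin N) ℂ}
    (hp : eval pt p ≠ 0) : ¬ Polynomial.X ∣ lineExpansion pt p := by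
  rw [Polynomial.X_dvd_iff, Polynomial.coeff_zero_eq_aeval_zero]
  intro h
  apply hp
  have h2 : ((Polynomial.aeval (R := MvPolynomial (Fin N) ℂ)
      (0 : MvPolynomial (Fin N) ℂ)).restrictScalars ℂ).comp (lineExpansion pt)
      = (Algebra.ofId ℂ _).comp (aeval pt) := by
    ext i
    simp only [AlgHom.comp_apply, lineExpansion_X]
    simp [Algebra.ofId_apply]
  have h3 := DFunLike.congr_fun h2 p
  simp only [AlgHom.comp_apply, AlgHom.restrictScalars_apply, h] at h3
  have h4 : C (aeval pt p) = (0 : MvPolynomial (Fin N) ℂ) := h3.symm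
  simpa [aeval_eq_eval] using h4

theorem X_pow_dvd_lineExpansion {N D : ℕ} {pt : Fin N → ℂ} {p : MvPolynomial (Fin N) ℂ}
    (hp : ∀ α : Fin N →₀ ℕ, (α.sum fun _ e => e) ≤ D →
      coeff α (aeval (fun i => X i + C (pt i)) p : MvPolynomial (Fin N) ℂ) = 0) :
    Polynomial.X ^ (D + 1) ∣ lineExpansion pt p := by
  rw [lineExpansion, AlgHom.comp_apply]
  set q : MvPolynomial (Fin N) ℂ := aeval (fun i => X i + C (pt i)) p
  rw [← sum_homogeneousComponent q, map_sum]
  refine Finset.dvd_sum fun d _ => ?_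
  rw [GenericNormalization.rees_of_isHomogeneous _ (homogeneousComponent_isHomogeneous d q)]
  by_cases hd : d ≤ D
  · have : homogeneousComponent d q = 0 := by
      ext α
      rw [coeff_homogeneousComponent]
      split_ifs with h
      · rw [hp α (by rw [Finsupp.degree_apply] at h; exact h.le.trans hd), coeff_zero]
      · rfl
    simp [this]
  · exact Dvd.dvd.mul_left (pow_dvd_pow _ (by omega)) _

section
variable {N : ℕ} {B : Type} [CommRing B] [IsDomain B] [Algebra ℂ B]
  [Algebra (MvPolynomial (Fin N) ℂ) B] [IsScalarTower ℂ (MvPolynomial (Fin N) ℂ) B]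
  [Module.Finite (MvPolynomial (Fin N) ℂ) B] [FaithfulSMul (MvPolynomial (Fin N) ℂ) B]
  {V : Submodule ℂ B} [FiniteDimensional ℂ V]

theorem ExhaustsBy.exists_forall_mem (hV : ExhaustsBy V) (h1 : (1 : B) ∈ V) {s : ℕ}
    (b : Fin s → B) :
    ∃ e, ∀ j, b j ∈ V ^ e := by
  choose e he using fun j => hV (b j)
  exact ⟨Finset.univ.sup e, fun j =>
    Submodule.pow_le_pow_right_of_one_mem h1 (Finset.le_sup (Finset.mem_univ j)) (he j)⟩

theorem exists_totalDegree_coord_le (h1 : (1 : B) ∈ V)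
    (h : FilteredFinite V (fun i : Fin N => algebraMap (MvPolynomial (Fin N) ℂ) B (X i)))
    (c : FiniteCoordinates (MvPolynomial (Fin N) ℂ) B) :
    ∃ k : ℕ, ∀ D : ℕ, ∀ x ∈ V ^ D, ∀ i, (c.coord x i).totalDegree ≤ D + k := by
  obtain ⟨m, s, b, hb⟩ := h.exists_span
  refine ⟨Finset.univ.sup fun p : Fin s × _ => (c.coord (b p.1) p.2).totalDegree,
    fun D x hx i => ?_⟩
  obtain ⟨a, ha, rfl⟩ := hb D x (Submodule.pow_le_pow_right_of_one_mem h1 (by omega) hx)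
  rw [map_sum, Finset.sum_apply]
  refine totalDegree_finsetSum_le fun j _ => ?_
  rw [map_smul, Pi.smul_apply, smul_eq_mul]
  exact (totalDegree_mul _ _).trans (add_le_add (ha j) (Finset.le_sup (f := fun p : Fin s × _ =>
    (c.coord (b p.1) p.2).totalDegree) (Finset.mem_univ (j, i))))

theorem totalDegree_intNormOf_le (h1 : (1 : B) ∈ V) (hV : ExhaustsBy V)
    (h : FilteredFinite V (fun i : Fin N => algebraMap (MvPolynomial (Fin N) ℂ) B (X i)))
    {e : ℕ} {t : B} (ht : t ∈ V ^ e) :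
    (intNormOf (MvPolynomial (Fin N) ℂ) t).totalDegree
      ≤ e * Module.finrank (MvPolynomial (Fin N) ℂ) B := by
  by_cases ht0 : intNormOf (MvPolynomial (Fin N) ℂ) t = 0
  · simp [ht0]
  obtain ⟨c⟩ := nonempty_finiteCoordinates (MvPolynomial (Fin N) ℂ) B
  obtain ⟨k, hk⟩ := exists_totalDegree_coord_le h1 h c
  obtain ⟨f, hf⟩ := hV.exists_forall_mem h1 c.vec
  set δ := Module.finrank (MvPolynomial (Fin N) ℂ) B
  set ν := intNormOf (MvPolynomial (Fin N) ℂ) t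
  have key (j : ℕ) : j * ν.totalDegree ≤ δ * (e * j + f + k) := by
    have h2 := totalDegree_det_le (c.mulMatrix (t ^ j)) (E := e * j + f + k) fun i i' => by
      refine hk _ _ ?_ i
      rw [pow_add, pow_mul]
      exact Submodule.mul_mem_mul (Submodule.pow_mem_pow _ ht j) (hf i')
    rw [c.det_mulMatrix, intNormOf_pow, totalDegree_mul_of_isDomain
      (pow_ne_zero _ c.den_ne_zero) (pow_ne_zero _ ht0), totalDegree_pow_of_isDomain ht0] at h2
    exact (Nat.le_add_left _ _).trans h2
  by_contra hlt
  have := key (δ * (f + k) + 1)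
  have h3 : e * δ + 1 ≤ ν.totalDegree := by omega
  nlinarith [Nat.mul_le_mul_left (δ * (f + k) + 1) h3]

/-- The Hilbert function of affine space. -/
def simplexCard (N D : ℕ) : ℕ := Nat.card {α : Fin N →₀ ℕ // (α.sum fun _ e => e) ≤ D}

instance finite_simplex (N D : ℕ) : Finite {α : Fin N →₀ ℕ // (α.sum fun _ e => e) ≤ D} := by
  refine Finite.of_injective (β := Fin N → Fin (D + 1))
    (fun α i => ⟨α.1 i, ?_⟩) ?_
  · have h := α.2
    rw [Finsupp.sum_fintype _ _ (by simp)] at h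
    have := Finset.single_le_sum (f := fun i => α.1 i)
      (fun _ _ => Nat.zero_le _) (Finset.mem_univ i)
    omega
  · intro α β hαβ
    refine Subtype.ext (Finsupp.ext fun i => ?_)
    simpa using congrFun hαβ i

theorem finrank_pow_le_mul_simplexCard (h1 : (1 : B) ∈ V) (hV : ExhaustsBy V)
    (h : FilteredFinite V (fun i : Fin N => algebraMap (MvPolynomial (Fin N) ℂ) B (X i))) (D : ℕ) :
    Module.finrank ℂ (V ^ D : Submodule ℂ B)
      ≤ Module.finrank (MvPolynomial (Fin N) ℂ) B * simplexCard N D := by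
  obtain ⟨c⟩ := nonempty_finiteCoordinates (MvPolynomial (Fin N) ℂ) B
  set δ := Module.finrank (MvPolynomial (Fin N) ℂ) B with hδ
  have hδ0 : 0 < δ := Module.finrank_pos
  obtain ⟨pt, hpt⟩ : ∃ pt, eval pt c.den ≠ 0 := by
    by_contra! hall
    exact c.den_ne_zero (MvPolynomial.funext fun x => by simpa using hall x)
  let S := {α : Fin N →₀ ℕ // (α.sum fun _ e => e) ≤ D}
  have : Fintype S := Fintype.ofFinite S
  let L : (V ^ D : Submodule ℂ B) →ₗ[ℂ] (Fin δ → S → ℂ) :=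
    LinearMap.pi fun i => LinearMap.pi fun α =>
    (lcoeff ℂ α.1) ∘ₗ (aeval (R := ℂ) fun i =>
        (X i + C (pt i) : MvPolynomial (Fin N) ℂ)).toLinearMap ∘ₗ
      (LinearMap.proj i) ∘ₗ (c.coord.restrictScalars ℂ) ∘ₗ (V ^ D : Submodule ℂ B).subtype
  have hL : Function.Injective L := by
    rw [← LinearMap.ker_eq_bot, LinearMap.ker_eq_bot']
    rintro ⟨x, hx⟩ hx0
    have hcoord (i) : Polynomial.X ^ (D + 1) ∣ lineExpansion pt (c.coord x i) :=
      X_pow_dvd_lineExpansion fun α hα => congrFun (congrFun hx0 i) ⟨α, hα⟩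
    have hprime : Prime (Polynomial.X : Polynomial (MvPolynomial (Fin N) ℂ)) := Polynomial.prime_X
    have hmat (i j) : Polynomial.X ^ (D + 1) ∣ lineExpansion pt (c.mulMatrix x i j) := by
      refine hprime.pow_dvd_of_dvd_mul_left _ (not_X_dvd_lineExpansion hpt) ?_
      rw [← map_mul, c.den_mul_mulMatrix, map_sum]
      exact Finset.dvd_sum fun k _ => by
        rw [map_mul]; exact Dvd.dvd.mul_right (hcoord k) _
    have hdet : (Polynomial.X ^ (D + 1)) ^ δ ∣ lineExpansion pt (c.mulMatrix x).det := by
      rw [Matrix.det_apply, map_sum]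
      refine Finset.dvd_sum fun σ _ => ?_
      have hp : (Polynomial.X ^ (D + 1)) ^ δ ∣ lineExpansion pt (∏ i, c.mulMatrix x (σ i) i) := by
        rw [map_prod]
        have := Finset.prod_dvd_prod_of_dvd (s := Finset.univ) (fun _ : Fin δ => _) _
          fun i _ => hmat (σ i) i
        simpa using this
      rcases Int.units_eq_one_or (Equiv.Perm.sign σ) with h1 | h1
      · rwa [h1, one_smul]
      · rw [h1, Units.neg_smul, one_smul, map_neg]
        exact hp.neg_right
    rw [c.det_mulMatrix, map_mul, ← pow_mul] at hdet
    have hν := hprime.pow_dvd_of_dvd_mul_left _ (by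
      rw [map_pow]
      exact fun hd => not_X_dvd_lineExpansion hpt (hprime.dvd_of_dvd_pow hd)) hdet
    by_contra hne
    have hx0 : x ≠ 0 := fun h => hne (Subtype.ext h)
    have hν0 : lineExpansion pt (intNormOf (MvPolynomial (Fin N) ℂ) x) ≠ 0 := fun h0 =>
      intNormOf_ne_zero (A := MvPolynomial (Fin N) ℂ) hx0
        (lineExpansion_injective pt (h0.trans (map_zero _).symm))
    have h3 := Polynomial.natDegree_le_of_dvd hν hν0
    rw [Polynomial.natDegree_X_pow] at h3
    have h4 := natDegree_lineExpansion_le pt (intNormOf (MvPolynomial (Fin N) ℂ) x)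
    have h5 := totalDegree_intNormOf_le h1 hV h hx
    rw [← hδ] at h5
    nlinarith
  have := LinearMap.finrank_le_finrank_of_injective hL
  rwa [Module.finrank_pi_fintype, Finset.sum_const, Module.finrank_fintype_fun_eq_card,
    Finset.card_univ, Fintype.card_fin, smul_eq_mul, ← Nat.card_eq_fintype_card] at this

theorem mul_simplexCard_le_finrank_pow (h1 : (1 : B) ∈ V) (hV : ExhaustsBy V)
    (hX : ∀ i, algebraMap (MvPolynomial (Fin N) ℂ) B (X i) ∈ V) :
    ∃ k : ℕ, ∀ D : ℕ, Module.finrank (MvPolynomial (Fin N) ℂ) B * simplexCard N D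
      ≤ Module.finrank ℂ (V ^ (D + k) : Submodule ℂ B) := by
  obtain ⟨c⟩ := nonempty_finiteCoordinates (MvPolynomial (Fin N) ℂ) B
  obtain ⟨k, hk⟩ := hV.exists_forall_mem h1 c.vec
  refine ⟨k, fun D => ?_⟩
  set δ := Module.finrank (MvPolynomial (Fin N) ℂ) B with hδ
  let S := {α : Fin N →₀ ℕ // (α.sum fun _ e => e) ≤ D}
  have : Fintype S := Fintype.ofFinite S
  have hmem (p : S × Fin δ) : (monomial p.1.1 (1 : ℂ)) • c.vec p.2 ∈ V ^ (D + k) := by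
    rw [Algebra.smul_def, pow_add]
    refine Submodule.mul_mem_mul ?_ (hk p.2)
    refine Submodule.pow_le_pow_right_of_one_mem h1 p.1.2 ?_
    rw [monomial_eq, map_one, one_mul, Finsupp.prod_fintype _ _ (by simp),
      Finsupp.sum_fintype _ _ (by simp), map_prod]
    induction (Finset.univ : Finset (Fin N)) using Finset.induction_on with
    | empty => simp
    | insert i s hi ih =>
      rw [Finset.prod_insert hi, Finset.sum_insert hi, pow_add, map_pow]
      exact Submodule.mul_mem_mul (Submodule.pow_mem_pow _ (hX i) _) ih
  have hb : LinearIndependent ℂ fun α : S => (monomial α.1 (1 : ℂ) : MvPolynomial (Fin N) ℂ) :=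
    (basisMonomials (Fin N) ℂ).linearIndependent.comp _ Subtype.val_injective
  have hli := linearIndependent_smul hb c.linearIndependent_vec
  have hsub : Submodule.span ℂ (Set.range fun p : S × Fin δ =>
      (monomial p.1.1 (1 : ℂ) : MvPolynomial (Fin N) ℂ) • c.vec p.2) ≤ V ^ (D + k) := by
    rw [Submodule.span_le]
    rintro _ ⟨p, rfl⟩
    exact hmem p
  have : FiniteDimensional ℂ (V ^ (D + k) : Submodule ℂ B) :=
    (Submodule.fg_iff_finiteDimensional _).mp
      (((Submodule.fg_iff_finiteDimensional V).mpr inferInstance).pow _)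
  have h2 := Submodule.finrank_mono hsub
  rw [finrank_span_eq_card hli, Fintype.card_prod, Fintype.card_fin, ← Nat.card_eq_fintype_card,
    mul_comm] at h2
  exact h2
end

theorem simplexCard_pos (N D : ℕ) : 0 < simplexCard N D := by
  have : Nonempty {α : Fin N →₀ ℕ // (α.sum fun _ e => e) ≤ D} := ⟨⟨0, by simp⟩⟩
  exact Nat.card_pos

theorem simplexCard_le (N D : ℕ) : simplexCard N D ≤ (D + 1) ^ N := by
  have h : simplexCard N D ≤ Nat.card (Fin N → Fin (D + 1)) := by
    refine Nat.card_le_card_of_injective (fun α i => ⟨α.1 i, ?_⟩) ?_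
    · have h := α.2
      rw [Finsupp.sum_fintype _ _ (by simp)] at h
      have := Finset.single_le_sum (f := fun i => α.1 i) (fun _ _ => Nat.zero_le _)
        (Finset.mem_univ i)
      omega
    · intro α β hαβ
      refine Subtype.ext (Finsupp.ext fun i => ?_)
      simpa using congrFun hαβ i
  simpa [Nat.card_eq_fintype_card] using h

theorem pow_le_simplexCard (N E : ℕ) : (E + 1) ^ N ≤ simplexCard N (N * E) := by
  have h : Nat.card (Fin N → Fin (E + 1)) ≤ simplexCard N (N * E) := by
    refine Nat.card_le_card_of_injective
      (fun a => ⟨Finsupp.equivFunOnFinite.symm fun i => (a i : ℕ), ?_⟩) ?_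
    · rw [Finsupp.sum_fintype _ _ (by simp)]
      simpa using Finset.sum_le_card_nsmul Finset.univ (fun i => (a i : ℕ)) E
        fun i _ => by have := (a i).2; omega
    · intro a b hab
      ext i
      have := DFunLike.congr_fun (congrArg Subtype.val hab) i
      simpa using this
  simpa [Nat.card_eq_fintype_card] using h

/-- A sequence of polynomial growth has no exponential growth. -/
theorem le_of_forall_mul_le_mul_shift {h : ℕ → ℕ} {N a b k : ℕ} (hpos : ∀ D, 0 < h D)
    (hpoly : ∀ D, h D ≤ (D + 1) ^ N) (hab : ∀ D, a * h D ≤ b * h (D + k)) : a ≤ b := by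
  by_contra! hlt
  have hb : 0 < b := by
    rcases Nat.eq_zero_or_pos b with rfl | hb
    · have h1 := hab 0
      have h2 := Nat.mul_pos hlt (hpos 0)
      omega
    · exact hb
  have hexp (j : ℕ) : a ^ j ≤ b ^ j * h (j * k) := by
    induction j with
    | zero => simpa using Nat.succ_le_of_lt (hpos 0)
    | succ j ih =>
      have := hab (j * k)
      rw [show (j + 1) * k = j * k + k by ring]
      calc a ^ (j + 1) = a * a ^ j := pow_succ' a j
        _ ≤ a * (b ^ j * h (j * k)) := Nat.mul_le_mul_left _ ih
        _ = b ^ j * (a * h (j * k)) := by ring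
        _ ≤ b ^ j * (b * h (j * k + k)) := Nat.mul_le_mul_left _ this
        _ = _ := by ring
  have hq : (1 : ℝ) < a / b := by
    rw [lt_div_iff₀ (by exact_mod_cast hb)]
    simpa using hlt
  have hlim := (tendsto_pow_const_div_const_pow_of_one_lt N hq).const_mul (((k : ℝ) + 1) ^ N)
  rw [mul_zero] at hlim
  have hev := (hlim.eventually (gt_mem_nhds (show (0 : ℝ) < 1 by norm_num))).and
    (Filter.eventually_ge_atTop 1)
  obtain ⟨j, hj, hj1⟩ := hev.exists
  have hqpos : (0 : ℝ) < (a / b : ℝ) ^ j := pow_pos (by linarith) j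
  rw [mul_div_assoc', div_lt_one hqpos, div_pow, lt_div_iff₀ (by positivity)] at hj
  have h1 : ((k : ℝ) + 1) ^ N * (j : ℝ) ^ N * (b : ℝ) ^ j < a ^ j := hj
  have h2 : ((k + 1) ^ N * j ^ N) * b ^ j < a ^ j := by exact_mod_cast h1
  have h3 : h (j * k) ≤ (k + 1) ^ N * j ^ N := by
    refine (hpoly _).trans ?_
    rw [← mul_pow]
    exact Nat.pow_le_pow_left (by nlinarith) N
  have h4 := Nat.mul_le_mul_left (b ^ j) h3
  have := hexp j
  nlinarith

section
variable {B : Type} [CommRing B] [Algebra ℂ B]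

/-- The degree of the filtration of `B` by the powers of `V`. -/
def hdeg (V : Submodule ℂ B) : ℕ :=
  sInf {δ | ∃ k, ∀ D, Module.finrank ℂ (V ^ D : Submodule ℂ B)
    ≤ δ * simplexCard (tdim B) (D + k)}

theorem finiteDimensional_pow (V : Submodule ℂ B) [FiniteDimensional ℂ V] (n : ℕ) :
    FiniteDimensional ℂ (V ^ n : Submodule ℂ B) :=
  (Submodule.fg_iff_finiteDimensional _).mp
    (((Submodule.fg_iff_finiteDimensional V).mpr inferInstance).pow _)

variable [IsDomain B]

theorem finrank_eq_hdeg {N : ℕ} [Algebra (MvPolynomial (Fin N) ℂ) B]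
    [IsScalarTower ℂ (MvPolynomial (Fin N) ℂ) B] [Module.Finite (MvPolynomial (Fin N) ℂ) B]
    [FaithfulSMul (MvPolynomial (Fin N) ℂ) B] {V : Submodule ℂ B} [FiniteDimensional ℂ V]
    (h1 : (1 : B) ∈ V) (hV : ExhaustsBy V)
    (h : FilteredFinite V (fun i : Fin N => algebraMap (MvPolynomial (Fin N) ℂ) B (X i)))
    (hX : ∀ i, algebraMap (MvPolynomial (Fin N) ℂ) B (X i) ∈ V) (hN : tdim B = N) :
    Module.finrank (MvPolynomial (Fin N) ℂ) B = hdeg V := by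
  refine le_antisymm ?_ (Nat.sInf_le ⟨0, fun D => ?_⟩)
  · refine le_csInf ⟨Module.finrank (MvPolynomial (Fin N) ℂ) B, 0, fun D => ?_⟩ fun δ hδ => ?_
    · rw [add_zero, hN]
      exact finrank_pow_le_mul_simplexCard h1 hV h D
    · obtain ⟨k', hk'⟩ := hδ
      obtain ⟨k, hk⟩ := mul_simplexCard_le_finrank_pow h1 hV hX
      refine le_of_forall_mul_le_mul_shift (k := k + k') (simplexCard_pos N) (simplexCard_le N)
        fun D => ?_
      have := (hk D).trans (hk' (D + k))
      rwa [hN, add_assoc] at this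
  · rw [add_zero, hN]
    exact finrank_pow_le_mul_simplexCard h1 hV h D

variable [Algebra.FiniteType ℂ B]

theorem exists_filteredFinite (V : Submodule ℂ B) [FiniteDimensional ℂ V] (h1 : (1 : B) ∈ V) :
    ∃ Y : Fin (tdim B) → B, (∀ i, Y i ∈ V) ∧ FilteredFinite V Y := by
  let b := Module.finBasis ℂ V
  have hs : Submodule.span ℂ (Set.range fun j => (b j : B)) = V := by
    have := congrArg (Submodule.map V.subtype) b.span_eq
    rw [Submodule.map_span, ← Set.range_comp, Submodule.map_top, Submodule.range_subtype] at this
    exact this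
  have := GenericNormalization.eventually_filteredFinite (fun j => (b j : B)) (by rwa [hs])
  obtain ⟨l, hl⟩ := this.exists
  rw [hs] at hl
  exact ⟨_, fun i => Submodule.sum_mem _ fun j _ => Submodule.smul_mem _ _ (b j).2, hl⟩

theorem exists_algebra_good (V : Submodule ℂ B) [FiniteDimensional ℂ V] (h1 : (1 : B) ∈ V)
    (hV : ExhaustsBy V) :
    (0 < hdeg V) ∧
    (∀ D, Module.finrank ℂ (V ^ D : Submodule ℂ B) ≤ hdeg V * simplexCard (tdim B) D) ∧
    ∃ k : ℕ, ∀ D : ℕ, hdeg V * simplexCard (tdim B) D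
      ≤ Module.finrank ℂ (V ^ (D + k) : Submodule ℂ B) := by
  obtain ⟨Y, hYV, hY⟩ := exists_filteredFinite V h1
  let _ := (aeval (R := ℂ) Y).toAlgebra
  have hmap : ∀ i, algebraMap (MvPolynomial (Fin (tdim B)) ℂ) B (X i) = Y i := fun i =>
    aeval_X Y i
  have : IsScalarTower ℂ (MvPolynomial (Fin (tdim B)) ℂ) B :=
    IsScalarTower.of_algebraMap_eq fun z => ((aeval (R := ℂ) Y).commutes z).symm
  have hY' : FilteredFinite V (fun i => algebraMap (MvPolynomial (Fin (tdim B)) ℂ) B (X i)) := by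
    simpa only [hmap] using hY
  have hX : ∀ i, algebraMap (MvPolynomial (Fin (tdim B)) ℂ) B (X i) ∈ V := fun i => by
    rw [hmap]; exact hYV i
  have : Module.Finite (MvPolynomial (Fin (tdim B)) ℂ) B := hY'.module_finite h1 hV
  have : FaithfulSMul (MvPolynomial (Fin (tdim B)) ℂ) B := faithfulSMul_of_finite_of_tdim_eq rfl
  rw [← finrank_eq_hdeg h1 hV hY' hX rfl]
  exact ⟨Module.finrank_pos, finrank_pow_le_mul_simplexCard h1 hV hY',
    mul_simplexCard_le_finrank_pow h1 hV hX⟩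

theorem hdeg_mono {V W : Submodule ℂ B} [FiniteDimensional ℂ V] [FiniteDimensional ℂ W]
    (h1 : (1 : B) ∈ V) (hV : ExhaustsBy V) (hW : ExhaustsBy W) (hVW : V ≤ W) : hdeg V ≤ hdeg W := by
  obtain ⟨-, -, k, hk⟩ := exists_algebra_good V h1 hV
  obtain ⟨-, hle, -⟩ := exists_algebra_good W (hVW h1) hW
  refine le_of_forall_mul_le_mul_shift (k := k) (simplexCard_pos (tdim B)) (simplexCard_le _)
    fun D => ?_
  have := finiteDimensional_pow W (D + k)
  exact ((hk D).trans (Submodule.finrank_mono (pow_le_pow_left' hVW _))).trans (hle _)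
end

/-- Polynomials whose partial degrees are bounded by `c`. -/
def box {r : ℕ} (c : Fin r → ℕ) : Submodule ℂ (MvPolynomial (Fin r) ℂ) :=
  restrictSupport ℂ {s | ∀ i, s i ≤ c i}

section Box
variable {r : ℕ}

theorem finrank_box (c : Fin r → ℕ) : Module.finrank ℂ (box c) = ∏ i, (c i + 1) := by
  rw [box, Module.finrank_eq_nat_card_basis (basisRestrictSupport ℂ _)]
  let e : {s : Fin r →₀ ℕ | ∀ i, s i ≤ c i} ≃ ((i : Fin r) → Fin (c i + 1)) :=
    { toFun := fun s i => ⟨s.1 i, Nat.lt_succ_of_le (s.2 i)⟩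
      invFun := fun a => ⟨Finsupp.equivFunOnFinite.symm fun i => (a i : ℕ),
        fun i => Nat.le_of_lt_succ (a i).2⟩
      left_inv := fun s => Subtype.ext (Finsupp.ext fun i => rfl)
      right_inv := fun a => rfl }
  rw [Nat.card_congr e]
  simp [Nat.card_eq_fintype_card]

instance finiteDimensional_box (c : Fin r → ℕ) : FiniteDimensional ℂ (box c) :=
  Module.finite_of_finrank_pos (by rw [finrank_box]; exact Finset.prod_pos fun i _ => by omega)

theorem box_mul (c c' : Fin r → ℕ) : box c * box c' = box (c + c') := by
  rw [box, box, box, ← restrictSupport_add]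
  congr 1
  ext s
  constructor
  · rintro ⟨a, ha, b, hb, rfl⟩ i
    exact add_le_add (ha i) (hb i)
  · intro hs
    refine ⟨Finsupp.equivFunOnFinite.symm fun i => min (s i) (c i), fun i => min_le_right _ _,
      Finsupp.equivFunOnFinite.symm fun i => s i - c i, fun i => ?_, ?_⟩
    · have := hs i
      simp only [Pi.add_apply] at this
      change s i - c i ≤ c' i
      omega
    · ext i
      change min (s i) (c i) + (s i - c i) = s i
      omega

theorem box_zero : box (0 : Fin r → ℕ) = 1 := by
  rw [box, ← restrictSupport_zero]
  congr 1
  ext s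
  constructor
  · intro h
    exact Finsupp.ext fun i => Nat.le_zero.mp (h i)
  · rintro rfl i
    exact le_rfl

theorem box_pow (c : Fin r → ℕ) (e : ℕ) : box c ^ e = box (e • c) := by
  induction e with
  | zero => rw [pow_zero, zero_smul, box_zero]
  | succ e ih => rw [pow_succ, ih, box_mul, succ_nsmul]

theorem box_mono {c c' : Fin r → ℕ} (h : c ≤ c') : box c ≤ box c' :=
  restrictSupport_mono ℂ fun _ hs i => (hs i).trans (h i)

theorem one_mem_box (c : Fin r → ℕ) : (1 : MvPolynomial (Fin r) ℂ) ∈ box c :=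
  Submodule.one_le.mp (box_zero ▸ box_mono (fun i => Nat.zero_le (c i)))

theorem monomial_mem_box {c : Fin r → ℕ} {s : Fin r →₀ ℕ} (h : ∀ i, s i ≤ c i) (z : ℂ) :
    monomial s z ∈ box c :=
  (monomial_mem_restrictSupport ℂ).mpr (Or.inl h)

theorem mem_box_iff {c : Fin r → ℕ} {p : MvPolynomial (Fin r) ℂ} :
    p ∈ box c ↔ ∀ s ∈ p.support, ∀ i, s i ≤ c i := Iff.rfl

theorem exhaustsBy_box {c : Fin r → ℕ} (hc : ∀ i, 1 ≤ c i) : ExhaustsBy (box c) := by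
  intro p
  refine ⟨p.totalDegree, ?_⟩
  rw [box_pow, mem_box_iff]
  intro s hs i
  have h1 := le_totalDegree hs
  rw [Finsupp.sum_fintype _ _ (by simp)] at h1
  have h2 := Finset.single_le_sum (f := fun i => s i) (fun _ _ => Nat.zero_le _) (Finset.mem_univ i)
  have := hc i
  simp only [Pi.smul_apply, smul_eq_mul]
  nlinarith
end Box

theorem pow_map_mkₐ {T : Type} [CommRing T] [Algebra ℂ T] (I : Ideal T) (V : Submodule ℂ T)
    (e : ℕ) :
    V.map (Ideal.Quotient.mkₐ ℂ I).toLinearMap ^ e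
      = (V ^ e).map (Ideal.Quotient.mkₐ ℂ I).toLinearMap :=
  (Submodule.map_pow V (Ideal.Quotient.mkₐ ℂ I) e).symm

section
variable {r : ℕ}

/-- The image of a box in a quotient. -/
def boxQuot (c : Fin r → ℕ) (𝔭 : Ideal (MvPolynomial (Fin r) ℂ)) :
    Submodule ℂ (MvPolynomial (Fin r) ℂ ⧸ 𝔭) :=
  (box c).map (Ideal.Quotient.mkₐ ℂ 𝔭).toLinearMap

/-- The degree of a prime with respect to a box. -/
def pdeg (c : Fin r → ℕ) (𝔭 : Ideal (MvPolynomial (Fin r) ℂ)) : ℕ := hdeg (boxQuot c 𝔭)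

variable {c : Fin r → ℕ} {𝔭 : Ideal (MvPolynomial (Fin r) ℂ)}

instance finiteDimensional_boxQuot : FiniteDimensional ℂ (boxQuot c 𝔭) := by
  unfold boxQuot; infer_instance

theorem one_mem_boxQuot (c : Fin r → ℕ) (𝔭 : Ideal (MvPolynomial (Fin r) ℂ)) :
    (1 : MvPolynomial (Fin r) ℂ ⧸ 𝔭) ∈ boxQuot c 𝔭 :=
  ⟨1, one_mem_box c, map_one (Ideal.Quotient.mkₐ ℂ 𝔭)⟩

theorem boxQuot_pow (e : ℕ) : boxQuot c 𝔭 ^ e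
    = (box c ^ e).map (Ideal.Quotient.mkₐ ℂ 𝔭).toLinearMap := pow_map_mkₐ 𝔭 (box c) e

theorem mk_mem_boxQuot_pow {e : ℕ} {t : MvPolynomial (Fin r) ℂ} (ht : t ∈ box c ^ e) :
    Ideal.Quotient.mk 𝔭 t ∈ boxQuot c 𝔭 ^ e := by
  rw [boxQuot_pow]; exact ⟨t, ht, rfl⟩

theorem exhaustsBy_boxQuot (hc : ∀ i, 1 ≤ c i) : ExhaustsBy (boxQuot c 𝔭) := by
  intro x
  obtain ⟨p, rfl⟩ := Ideal.Quotient.mk_surjective x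
  obtain ⟨e, he⟩ := exhaustsBy_box hc p
  exact ⟨e, mk_mem_boxQuot_pow he⟩

theorem pdeg_pos (hc : ∀ i, 1 ≤ c i) [𝔭.IsPrime] : 0 < pdeg c 𝔭 :=
  (exists_algebra_good _ (one_mem_boxQuot c 𝔭) (exhaustsBy_boxQuot hc)).1

theorem pdeg_mono {c' : Fin r → ℕ} (hc : ∀ i, 1 ≤ c i) (h : c ≤ c') [𝔭.IsPrime] :
    pdeg c 𝔭 ≤ pdeg c' 𝔭 :=
  hdeg_mono (one_mem_boxQuot c 𝔭) (exhaustsBy_boxQuot hc)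
    (exhaustsBy_boxQuot fun i => (hc i).trans (h i)) (Submodule.map_mono (box_mono h))

theorem finrank_boxQuot_pow_le (e : ℕ) :
    Module.finrank ℂ (boxQuot c 𝔭 ^ e : Submodule ℂ (MvPolynomial (Fin r) ℂ ⧸ 𝔭))
      ≤ ∏ i, (e * c i + 1) := by
  rw [boxQuot_pow, box_pow]
  refine (Submodule.finrank_map_le _ _).trans ?_
  rw [finrank_box]
  simp

theorem pdeg_le_of_tdim_eq (hc : ∀ i, 1 ≤ c i) [𝔭.IsPrime] (hr : 1 ≤ r)
    (ht : tdim (MvPolynomial (Fin r) ℂ ⧸ 𝔭) = r) : pdeg c 𝔭 ≤ (2 * r) ^ r * ∏ i, c i := by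
  obtain ⟨-, -, k, hk⟩ := exists_algebra_good _ (one_mem_boxQuot c 𝔭) (exhaustsBy_boxQuot hc)
  have h1 := (hk (r * k)).trans (finrank_boxQuot_pow_le _)
  rw [ht] at h1
  have h2 := (Nat.mul_le_mul_left (pdeg c 𝔭) (pow_le_simplexCard r k)).trans h1
  have h3 : ∏ i, ((r * k + k) * c i + 1) ≤ ((2 * r) * (k + 1)) ^ r * ∏ i, c i := by
    calc ∏ i, ((r * k + k) * c i + 1) ≤ ∏ i, ((2 * r) * (k + 1)) * c i := by
          refine Finset.prod_le_prod' fun i _ => ?_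
          have := hc i
          have h5 : k ≤ r * k := Nat.le_mul_of_pos_left k (by omega)
          nlinarith [Nat.mul_le_mul_right (c i) h5, Nat.mul_le_mul_left r this]
      _ = _ := by rw [Finset.prod_mul_distrib]; simp
  have h4 := h2.trans h3
  rw [mul_pow] at h4
  have hpos : 0 < (k + 1) ^ r := by positivity
  refine Nat.le_of_mul_le_mul_right ?_ hpos
  nlinarith

theorem exists_mem_box_pow_of_pdeg_le (hc : ∀ i, 1 ≤ c i) [h𝔭 : 𝔭.IsPrime] (h0 : 𝔭 ≠ ⊥) {Λ : ℕ}
    (hΛ : 1 ≤ Λ) (hd : pdeg c 𝔭 ≤ Λ * ∏ i, c i) :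
    ∃ t ∈ 𝔭, t ≠ 0 ∧ t ∈ box c ^ (Λ * 2 ^ r) := by
  have hbot : (⊥ : Ideal (MvPolynomial (Fin r) ℂ)).IsPrime := Ideal.isPrime_bot
  have hlt : tdim (MvPolynomial (Fin r) ℂ ⧸ 𝔭) < r := by
    have h1 := tdim_quotient_lt (P := (⊥ : Ideal (MvPolynomial (Fin r) ℂ))) (Q := 𝔭)
      (bot_lt_iff_ne_bot.mpr h0)
    have h2 := tdim_le_of_surjective (Ideal.Quotient.mkₐ ℂ (⊥ : Ideal (MvPolynomial (Fin r) ℂ)))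
      (Ideal.Quotient.mkₐ_surjective _ _)
    rw [tdim_mvPolynomial] at h2
    omega
  set C := Λ * 2 ^ r with hC
  have hC1 : 1 ≤ C := Nat.mul_pos hΛ (by positivity)
  by_contra! hno
  have hinj : Set.InjOn (Ideal.Quotient.mkₐ ℂ 𝔭).toLinearMap (box c ^ C : Submodule ℂ _) := by
    intro x hx y hy hxy
    by_contra hne
    refine hno (x - y) ?_ (sub_ne_zero.mpr hne) (Submodule.sub_mem _ hx hy)
    exact Ideal.Quotient.eq.mp hxy
  obtain ⟨-, hle, -⟩ := exists_algebra_good _ (one_mem_boxQuot c 𝔭) (exhaustsBy_boxQuot hc)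
  have h1 := hle C
  have h2 : Module.finrank ℂ (boxQuot c 𝔭 ^ C : Submodule ℂ (MvPolynomial (Fin r) ℂ ⧸ 𝔭))
      = ∏ i, (C * c i + 1) := by
    rw [boxQuot_pow, ← LinearMap.range_domRestrict, LinearMap.finrank_range_of_inj, box_pow,
      finrank_box]
    · simp
    · exact fun x y hxy => Subtype.ext (hinj x.2 y.2 hxy)
  rw [h2] at h1
  have h3 : C ^ r * ∏ i, c i ≤ ∏ i, (C * c i + 1) := by
    calc C ^ r * ∏ i, c i = ∏ i, C * c i := by rw [Finset.prod_mul_distrib]; simp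
      _ ≤ _ := Finset.prod_le_prod' fun i _ => by omega
  have hvol : 0 < ∏ i, c i := Finset.prod_pos fun i _ => hc i
  obtain ⟨r', rfl⟩ : ∃ r', r = r' + 1 := ⟨r - 1, by omega⟩
  have h4 : simplexCard (tdim (MvPolynomial (Fin (r' + 1)) ℂ ⧸ 𝔭)) C ≤ 2 ^ r' * C ^ r' := by
    refine (simplexCard_le _ _).trans ((Nat.pow_le_pow_right (by omega)
      (Nat.lt_succ_iff.mp hlt)).trans ?_)
    rw [← mul_pow]
    exact Nat.pow_le_pow_left (by omega) _
  have h5 : C ^ (r' + 1) * ∏ i, c i ≤ Λ * (∏ i, c i) * (2 ^ r' * C ^ r') :=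
    h3.trans (h1.trans (Nat.mul_le_mul hd h4))
  have h6 : C ^ r' * (∏ i, c i) * C ≤ C ^ r' * (∏ i, c i) * (Λ * 2 ^ r') := by
    calc _ = C ^ (r' + 1) * ∏ i, c i := by ring
      _ ≤ _ := h5
      _ = _ := by ring
  have h7 := Nat.le_of_mul_le_mul_left h6 (by positivity)
  have h8 : 0 < Λ * 2 ^ r' := by positivity
  rw [hC, pow_succ] at h7
  nlinarith
end

section
variable {r : ℕ} {Ω Γ : Type} [Field Ω] [Algebra ℂ Ω] [LinearOrderedCommGroupWithZero Γ]

/-- An injective integral point of affine space over a valued field. -/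
structure IsCurve (v : Valuation Ω Γ) (φ : MvPolynomial (Fin r) ℂ →ₐ[ℂ] Ω) : Prop where
  injective : Function.Injective φ
  const_le (z : ℂ) : v (algebraMap ℂ Ω z) ≤ 1
  le_one (g : MvPolynomial (Fin r) ℂ) : v (φ g) ≤ 1

/-- Points of the zero set of `𝔭` with the same values of `Y` as `φ`. -/
def pts (φ : MvPolynomial (Fin r) ℂ →ₐ[ℂ] Ω) (𝔭 : Ideal (MvPolynomial (Fin r) ℂ)) {N : ℕ}
    (Y : Fin N → MvPolynomial (Fin r) ℂ) : Set (MvPolynomial (Fin r) ℂ →ₐ[ℂ] Ω) :=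
  {σ | (∀ x ∈ 𝔭, σ x = 0) ∧ ∀ i, σ (Y i) = φ (Y i)}

/-- The set `pts` as a finset (empty when infinite). -/
def ptsF (φ : MvPolynomial (Fin r) ℂ →ₐ[ℂ] Ω) (𝔭 : Ideal (MvPolynomial (Fin r) ℂ)) {N : ℕ}
    (Y : Fin N → MvPolynomial (Fin r) ℂ) : Finset (MvPolynomial (Fin r) ℂ →ₐ[ℂ] Ω) :=
  if h : (pts φ 𝔭 Y).Finite then h.toFinset else ∅

/-- Distance of a point from the point `φ`. -/
def mu (v : Valuation Ω Γ) (φ σ : MvPolynomial (Fin r) ℂ →ₐ[ℂ] Ω) : Γ :=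
  Finset.univ.sup fun i : Fin r => v (σ (X i) - φ (X i))

/-- `Y` consists of elements of the box which form a Noether normalisation of the quotient by `𝔭`
compatible with filtrations. -/
structure Good (c : Fin r → ℕ) (𝔭 : Ideal (MvPolynomial (Fin r) ℂ)) {N : ℕ}
    (Y : Fin N → MvPolynomial (Fin r) ℂ) : Prop where
  tdim_eq : tdim (MvPolynomial (Fin r) ℂ ⧸ 𝔭) = N
  mem_box (i : Fin N) : Y i ∈ box c
  filteredFinite : FilteredFinite (boxQuot c 𝔭) fun i => Ideal.Quotient.mk 𝔭 (Y i)

theorem ptsF_eq_of_coe_eq {φ : MvPolynomial (Fin r) ℂ →ₐ[ℂ] Ω} {𝔭 : Ideal (MvPolynomial (Fin r) ℂ)}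
    {N : ℕ} {Y : Fin N → MvPolynomial (Fin r) ℂ} {s : Finset (MvPolynomial (Fin r) ℂ →ₐ[ℂ] Ω)}
    (h : ∀ σ, σ ∈ s ↔ σ ∈ pts φ 𝔭 Y) : ptsF φ 𝔭 Y = s := by
  have hf : (pts φ 𝔭 Y).Finite := s.finite_toSet.subset fun σ hσ => (h σ).mpr hσ
  ext σ
  rw [ptsF, dif_pos hf, Set.Finite.mem_toFinset, h]

theorem aeval_of_mem_pts {φ σ : MvPolynomial (Fin r) ℂ →ₐ[ℂ] Ω} {N : ℕ}
    {Y : Fin N → MvPolynomial (Fin r) ℂ} (h : ∀ i, σ (Y i) = φ (Y i)) (a : MvPolynomial (Fin N) ℂ) :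
    σ (aeval Y a) = φ (aeval Y a) := by
  have : σ.comp (aeval Y) = φ.comp (aeval Y) := by
    ext i; simpa using h i
  exact DFunLike.congr_fun this a

theorem valuation_le_one_of_monic {A : Type} [CommRing A] (v : Valuation Ω Γ) (f : A →+* Ω)
    (hf : ∀ a, v (f a) ≤ 1) {p : Polynomial A} (hp : p.Monic) {x : Ω} (hx : p.eval₂ f x = 0) :
    v x ≤ 1 := by
  let f' : A →+* v.integer := f.codRestrict v.integer fun a =>
      (Valuation.mem_integer_iff v _).mpr (hf a)
  have : IsIntegral v.integer x := ⟨p.map f', hp.map _, by rw [Polynomial.eval₂_map]; exact hx⟩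
  exact (Valuation.mem_integer_iff v _).mp ((Valuation.integer.integers v).mem_of_integral this)

theorem valuation_sub_le_mu {v : Valuation Ω Γ} {φ σ : MvPolynomial (Fin r) ℂ →ₐ[ℂ] Ω}
    (hφ : ∀ g, v (φ g) ≤ 1) (hσ : ∀ g, v (σ g) ≤ 1) (g : MvPolynomial (Fin r) ℂ) :
    v (σ g - φ g) ≤ mu v φ σ := by
  induction g using MvPolynomial.induction_on with
  | C a => simp [← MvPolynomial.algebraMap_eq]
  | add p q hp hq =>
    rw [map_add, map_add, add_sub_add_comm]
    exact v.map_add_le hp hq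
  | mul_X p i hp =>
    have : σ (p * X i) - φ (p * X i) = (σ p - φ p) * σ (X i) + φ p * (σ (X i) - φ (X i)) := by
      rw [map_mul, map_mul]; ring
    rw [this]
    refine v.map_add_le ?_ ?_
    · rw [map_mul]
      exact (mul_le_of_le_one_right' (hσ _)).trans hp
    · rw [map_mul]
      refine (mul_le_of_le_one_left' (hφ _)).trans ?_
      exact Finset.le_sup (f := fun i : Fin r => v (σ (X i) - φ (X i))) (Finset.mem_univ i)

theorem mu_le_one {v : Valuation Ω Γ} {φ σ : MvPolynomial (Fin r) ℂ →ₐ[ℂ] Ω}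
    (hφ : ∀ g, v (φ g) ≤ 1) (hσ : ∀ g, v (σ g) ≤ 1) : mu v φ σ ≤ 1 :=
  Finset.sup_le fun _ _ => v.map_sub_le (hσ _) (hφ _)

theorem mu_self (v : Valuation Ω Γ) (φ : MvPolynomial (Fin r) ℂ →ₐ[ℂ] Ω) : mu v φ φ = 0 :=
  le_antisymm (Finset.sup_le fun _ _ => by simp) zero_le

theorem valuation_le_mu_of_mem {v : Valuation Ω Γ} {φ σ : MvPolynomial (Fin r) ℂ →ₐ[ℂ] Ω}
    (hφ : ∀ g, v (φ g) ≤ 1) (hσ : ∀ g, v (σ g) ≤ 1) {g : MvPolynomial (Fin r) ℂ} (hg : σ g = 0) :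
    v (φ g) ≤ mu v φ σ := by
  have := valuation_sub_le_mu hφ hσ g
  rwa [hg, zero_sub, Valuation.map_neg] at this
end

section
variable {r : ℕ} {Ω Γ : Type} [Field Ω] [IsAlgClosed Ω] [Algebra ℂ Ω]
  [LinearOrderedCommGroupWithZero Γ]

/-- What a good normalisation provides over the polynomial ring in `Y`. -/
structure GoodPackage (v : Valuation Ω Γ) (φ : MvPolynomial (Fin r) ℂ →ₐ[ℂ] Ω) (c : Fin r → ℕ)
    (𝔭 : Ideal (MvPolynomial (Fin r) ℂ)) {N : ℕ} (Y : Fin N → MvPolynomial (Fin r) ℂ) : Prop where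
  mem_ptsF (σ : MvPolynomial (Fin r) ℂ →ₐ[ℂ] Ω) : σ ∈ ptsF φ 𝔭 Y ↔ σ ∈ pts φ 𝔭 Y
  card_ptsF : (ptsF φ 𝔭 Y).card = pdeg c 𝔭
  le_one (σ : MvPolynomial (Fin r) ℂ →ₐ[ℂ] Ω) (hσ : σ ∈ pts φ 𝔭 Y) (g : MvPolynomial (Fin r) ℂ) :
    v (σ g) ≤ 1
  exists_norm (t : MvPolynomial (Fin r) ℂ) (ht : t ∉ 𝔭) (e : ℕ) (hte : t ∈ box c ^ e) :
    ∃ ν : MvPolynomial (Fin N) ℂ, ν ≠ 0 ∧ ν.totalDegree ≤ e * pdeg c 𝔭 ∧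
      φ (aeval Y ν) = ∏ σ ∈ ptsF φ 𝔭 Y, σ t ∧ aeval Y ν ∈ 𝔭 ⊔ Ideal.span {t} ∧
      ∀ q, Prime q → q ∣ ν → ∃ Q : Ideal (MvPolynomial (Fin r) ℂ), Q.IsPrime ∧ 𝔭 ≤ Q ∧ t ∈ Q ∧
        Q.comap (aeval Y : MvPolynomial (Fin N) ℂ →ₐ[ℂ] _) = Ideal.span {q}
  exists_minpoly (θ : MvPolynomial (Fin r) ℂ) (hθ : Set.InjOn (fun σ => σ θ) (pts φ 𝔭 Y)) :
    ∃ h : Polynomial (MvPolynomial (Fin N) ℂ), h.Monic ∧ h.natDegree = pdeg c 𝔭 ∧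
      h.map (φ.comp (aeval Y)).toRingHom
        = ∏ σ ∈ ptsF φ 𝔭 Y, (Polynomial.X - Polynomial.C (σ θ)) ∧
      h.eval₂ (aeval Y : MvPolynomial (Fin N) ℂ →ₐ[ℂ] _).toRingHom θ ∈ 𝔭 ∧
      ∀ p : Polynomial (MvPolynomial (Fin N) ℂ),
        p.eval₂ (aeval Y : MvPolynomial (Fin N) ℂ →ₐ[ℂ] _).toRingHom θ ∈ 𝔭 → h ∣ p

theorem GoodPackage.of_surjective {v : Valuation Ω Γ} {φ : MvPolynomial (Fin r) ℂ →ₐ[ℂ] Ω}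
    (hφ : IsCurve v φ) {c : Fin r → ℕ} {𝔭 : Ideal (MvPolynomial (Fin r) ℂ)} {N : ℕ}
    {Y : Fin N → MvPolynomial (Fin r) ℂ} {B : Type} [CommRing B] [IsDomain B] [Algebra ℂ B]
    (mk : MvPolynomial (Fin r) ℂ →ₐ[ℂ] B) (hsurj : Function.Surjective mk)
    (hmk : ∀ g, mk g = 0 ↔ g ∈ 𝔭) {V : Submodule ℂ B} [FiniteDimensional ℂ V] (h1 : 1 ∈ V)
    (hV : ExhaustsBy V) (hVdeg : hdeg V = pdeg c 𝔭) (hVc : ∀ e, ∀ t ∈ box c ^ e, mk t ∈ V ^ e)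
    (hN : tdim B = N) (hYV : ∀ i, mk (Y i) ∈ V) (hYF : FilteredFinite V fun i => mk (Y i)) :
    GoodPackage v φ c 𝔭 Y := by
  let A := MvPolynomial (Fin N) ℂ
  let fB : A →ₐ[ℂ] B := mk.comp (aeval Y)
  let fΩ : A →ₐ[ℂ] Ω := φ.comp (aeval Y)
  let _ : Algebra A B := fB.toAlgebra
  let _ : Algebra A Ω := fΩ.toAlgebra
  have hB : ∀ a : A, algebraMap A B a = mk (aeval Y a) := fun a => rfl
  have hΩ : ∀ a : A, algebraMap A Ω a = φ (aeval Y a) := fun a => rfl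
  have : IsScalarTower ℂ A B := IsScalarTower.of_algebraMap_eq fun z => (fB.commutes z).symm
  have : IsScalarTower ℂ A Ω := IsScalarTower.of_algebraMap_eq fun z => (fΩ.commutes z).symm
  have hX : ∀ i, algebraMap A B (X i) = mk (Y i) := fun i =>
    (hB _).trans (by rw [aeval_X])
  have hY : FilteredFinite V (fun i => algebraMap A B (X i)) := by
    simpa only [hX] using hYF
  have hXV : ∀ i, algebraMap A B (X i) ∈ V := fun i => by
    rw [hX]; exact hYV i
  have : Module.Finite A B := hY.module_finite h1 hV
  have : FaithfulSMul A B := faithfulSMul_of_finite_of_tdim_eq hN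
  have hinj : ∀ a : A, aeval Y a ∈ 𝔭 → a = 0 := fun a ha =>
    (FaithfulSMul.algebraMap_injective A B)
      (((hB a).trans ((hmk _).mpr ha)).trans (map_zero _).symm)
  have : FaithfulSMul A Ω := by
    rw [faithfulSMul_iff_algebraMap_injective, injective_iff_map_eq_zero]
    intro a ha
    refine hinj a ?_
    rw [hΩ] at ha
    rw [hφ.injective (ha.trans (map_zero φ).symm)]
    exact 𝔭.zero_mem
  have hfin : Finite (B →ₐ[A] Ω) := finite_algHom_of_finite
  have := Fintype.ofFinite (B →ₐ[A] Ω)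
  let back : (B →ₐ[A] Ω) → (MvPolynomial (Fin r) ℂ →ₐ[ℂ] Ω) := fun τ =>
    (τ.restrictScalars ℂ).comp mk
  have hback : ∀ τ g, back τ g = τ (mk g) := fun τ g => rfl
  have hbinj : Function.Injective back := by
    intro τ τ' h
    ext x
    obtain ⟨g, rfl⟩ := hsurj x
    exact DFunLike.congr_fun h g
  have hbmem : ∀ τ, back τ ∈ pts φ 𝔭 Y := by
    refine fun τ => ⟨fun x hx => ?_, fun i => ?_⟩
    · rw [hback, (hmk x).mpr hx, map_zero]
    · have := τ.commutes (X i)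
      rw [hB, hΩ, aeval_X] at this
      exact this
  have hbsurj : ∀ σ ∈ pts φ 𝔭 Y, ∃ τ, back τ = σ := by
    intro σ hσ
    have hker : ∀ x, mk x = 0 → σ x = 0 := fun x hx => hσ.1 x ((hmk x).mp hx)
    have hlift : ∀ g, AlgHom.liftOfSurjective mk hsurj σ hker (mk g) = σ g := fun g =>
      AlgHom.liftOfSurjective_apply ..
    refine ⟨{ AlgHom.liftOfSurjective mk hsurj σ hker with commutes' := fun a => ?_ }, ?_⟩
    · exact (hlift _).trans (aeval_of_mem_pts hσ.2 a)
    · ext i; exact hlift _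
  have hF : ptsF φ 𝔭 Y = Finset.univ.image back := ptsF_eq_of_coe_eq fun σ => by
    rw [Finset.mem_image]
    constructor
    · rintro ⟨τ, -, rfl⟩; exact hbmem τ
    · intro h; obtain ⟨τ, hτ⟩ := hbsurj σ h; exact ⟨τ, Finset.mem_univ _, hτ⟩
  have hfr : Module.finrank A B = pdeg c 𝔭 := (finrank_eq_hdeg h1 hV hY hXV hN).trans hVdeg
  refine ⟨fun σ => ?_, ?_, ?_, ?_, ?_⟩
  · rw [hF, Finset.mem_image]
    constructor
    · rintro ⟨τ, -, rfl⟩; exact hbmem τ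
    · intro h; obtain ⟨τ, hτ⟩ := hbsurj σ h; exact ⟨τ, Finset.mem_univ _, hτ⟩
  · rw [hF, Finset.card_image_of_injective _ hbinj, Finset.card_univ, ← hfr,
      ← natCard_algHom_of_finite (Ω := Ω), Nat.card_eq_fintype_card]
  · intro σ hσ g
    obtain ⟨τ, rfl⟩ := hbsurj σ hσ
    have hIntegral : IsIntegral A (mk g) := Algebra.IsIntegral.isIntegral _
    refine valuation_le_one_of_monic v (algebraMap A Ω) (fun a => hφ.le_one _)
      (minpoly.monic hIntegral) ?_
    rw [hback, ← Polynomial.aeval_def, Polynomial.aeval_algHom_apply, minpoly.aeval, map_zero]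
  · intro t ht e hte
    have ht0 : mk t ≠ 0 := fun h => ht ((hmk t).mp h)
    refine ⟨intNormOf A (mk t), intNormOf_ne_zero ht0, ?_, ?_, ?_, fun q hq hqt => ?_⟩
    · rw [← hfr]
      exact totalDegree_intNormOf_le h1 hV hY (hVc e t hte)
    · rw [hF, Finset.prod_image hbinj.injOn]
      exact algebraMap_intNormOf (A := A) (Ω := Ω) (mk t)
    · obtain ⟨b, hb⟩ := dvd_algebraMap_intNormOf (A := A) (mk t)
      obtain ⟨g, rfl⟩ := hsurj b
      rw [hB, ← map_mul, ← sub_eq_zero, ← map_sub, hmk] at hb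
      rw [← sub_add_cancel (aeval Y (intNormOf A (mk t))) (t * g)]
      exact Ideal.add_mem _ (Ideal.mem_sup_left hb)
        (Ideal.mem_sup_right (Ideal.mul_mem_right _ _ (Ideal.mem_span_singleton_self t)))
    · obtain ⟨Q, hQ, htQ, hQc⟩ := exists_prime_over_of_dvd_intNormOf hq hqt
      refine ⟨Q.comap mk, hQ.comap _, fun x hx => ?_, htQ, ?_⟩
      · rw [Ideal.mem_comap, (hmk x).mpr hx]; exact Q.zero_mem
      · rw [← hQc]; rfl
  · intro θ hθ
    have hθ' : Function.Injective fun τ : B →ₐ[A] Ω => τ (mk θ) := fun τ τ' h =>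
      hbinj (hθ (hbmem τ) (hbmem τ') h)
    have hIntegral : IsIntegral A (mk θ) := Algebra.IsIntegral.isIntegral _
    have hev : ∀ p : Polynomial A, Polynomial.aeval (mk θ) p
        = mk (p.eval₂ (aeval Y : A →ₐ[ℂ] _).toRingHom θ) := by
      intro p
      rw [Polynomial.aeval_def]
      exact (Polynomial.hom_eval₂ p (aeval Y : A →ₐ[ℂ] _).toRingHom mk.toRingHom θ).symm
    refine ⟨minpoly A (mk θ), minpoly.monic hIntegral, ?_, ?_, ?_, fun p hp => ?_⟩
    · rw [natDegree_minpoly_of_separating hθ', hfr]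
    · rw [hF, Finset.prod_image hbinj.injOn]
      exact minpoly_map_of_separating hθ'
    · rw [← hmk, ← hev, minpoly.aeval]
    · rw [← minpoly.isIntegrallyClosed_dvd_iff hIntegral, hev, hmk]
      exact hp

theorem Good.package {v : Valuation Ω Γ} {φ : MvPolynomial (Fin r) ℂ →ₐ[ℂ] Ω} (hφ : IsCurve v φ)
    {c : Fin r → ℕ} (hc : ∀ i, 1 ≤ c i) {𝔭 : Ideal (MvPolynomial (Fin r) ℂ)} [h𝔭 : 𝔭.IsPrime]
    {N : ℕ} {Y : Fin N → MvPolynomial (Fin r) ℂ} (H : Good c 𝔭 Y) : GoodPackage v φ c 𝔭 Y :=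
  GoodPackage.of_surjective hφ (Ideal.Quotient.mkₐ ℂ 𝔭) (Ideal.Quotient.mkₐ_surjective ℂ 𝔭)
    (fun _ => Ideal.Quotient.eq_zero_iff_mem) (one_mem_boxQuot c 𝔭) (exhaustsBy_boxQuot hc) rfl
    (fun _ _ ht => mk_mem_boxQuot_pow ht) H.tdim_eq (fun i => ⟨_, H.mem_box i, rfl⟩)
    H.filteredFinite
end

theorem FilteredFinite.comp_equiv {B : Type} [CommRing B] [Algebra ℂ B] {V : Submodule ℂ B} {N : ℕ}
    {Y : Fin N → B} (h : FilteredFinite V Y) (e : Equiv.Perm (Fin N)) :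
    FilteredFinite V fun i => Y (e i) := by
  obtain ⟨m, hm⟩ := h
  refine ⟨m, fun x hx => ?_⟩
  obtain ⟨a, ha, b, hb, rfl⟩ := hm x hx
  exact ⟨a, ha, fun i => b (e i), fun i => hb _, by
    rw [Equiv.sum_comp e fun i => Y i * b i]⟩

section
variable {r : ℕ} {Ω Γ : Type} [Field Ω] [IsAlgClosed Ω] [Algebra ℂ Ω]
  [LinearOrderedCommGroupWithZero Γ]

/-- A basis of the box. -/
def boxBasis (c : Fin r → ℕ) (j : Fin (Module.finrank ℂ (box c))) : MvPolynomial (Fin r) ℂ :=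
  Module.finBasis ℂ (box c) j

theorem boxBasis_mem (c : Fin r → ℕ) (j) : boxBasis c j ∈ box c := (Module.finBasis ℂ (box c) j).2

theorem span_boxBasis (c : Fin r → ℕ) : Submodule.span ℂ (Set.range (boxBasis c)) = box c := by
  have := congrArg (Submodule.map (box c).subtype) (Module.finBasis ℂ (box c)).span_eq
  rw [Submodule.map_span, ← Set.range_comp, Submodule.map_top, Submodule.range_subtype] at this
  exact this

/-- A one-parameter family of elements of the box. -/
def genElt (c : Fin r → ℕ) (x : ℂ) : MvPolynomial (Fin r) ℂ :=
  ∑ j : Fin (Module.finrank ℂ (box c)), x ^ (j : ℕ) • boxBasis c j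

/-- The normalisation attached to a sequence of parameters. -/
def Yfam (c : Fin r → ℕ) (l : ℕ → ℂ) (N : ℕ) (i : Fin N) : MvPolynomial (Fin r) ℂ :=
  genElt c (l (Fin.rev i))

theorem genElt_mem (c : Fin r → ℕ) (x : ℂ) : genElt c x ∈ box c :=
  Submodule.sum_mem _ fun j _ => Submodule.smul_mem _ _ (boxBasis_mem c j)

theorem Yfam_zero (c : Fin r → ℕ) (l : ℕ → ℂ) (N : ℕ) : Yfam c l (N + 1) 0 = genElt c (l N) := by
  simp [Yfam]

theorem Yfam_succ (c : Fin r → ℕ) (l : ℕ → ℂ) (N : ℕ) (i : Fin N) :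
    Yfam c l (N + 1) i.succ = Yfam c l N i := by
  simp [Yfam, Fin.rev_succ]

theorem Yfam_congr (c : Fin r → ℕ) {l l' : ℕ → ℂ} {N : ℕ} (h : ∀ i < N, l i = l' i) :
    Yfam c l N = Yfam c l' N := by
  ext1 i
  rw [Yfam, Yfam, h _ (Fin.is_lt _)]

/-- The parameters `l` are generic with respect to `𝔭`. -/
structure Gen (v : Valuation Ω Γ) (φ : MvPolynomial (Fin r) ℂ →ₐ[ℂ] Ω) (c : Fin r → ℕ)
    (𝔭 : Ideal (MvPolynomial (Fin r) ℂ)) (l : ℕ → ℂ) : Prop where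
  good : Good c 𝔭 (Yfam c l (tdim (MvPolynomial (Fin r) ℂ ⧸ 𝔭)))
  injOn : Set.InjOn (fun σ => σ (genElt c (l (tdim (MvPolynomial (Fin r) ℂ ⧸ 𝔭)))))
    (pts φ 𝔭 (Yfam c l (tdim (MvPolynomial (Fin r) ℂ ⧸ 𝔭))))
  mu_eq : ∀ σ ∈ pts φ 𝔭 (Yfam c l (tdim (MvPolynomial (Fin r) ℂ ⧸ 𝔭))),
    v (σ (genElt c (l (tdim (MvPolynomial (Fin r) ℂ ⧸ 𝔭))))
      - φ (genElt c (l (tdim (MvPolynomial (Fin r) ℂ ⧸ 𝔭))))) = mu v φ σ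

theorem map_genElt (σ : MvPolynomial (Fin r) ℂ →ₐ[ℂ] Ω) (c : Fin r → ℕ) (x : ℂ) :
    σ (genElt c x) = ∑ j : Fin (Module.finrank ℂ (box c)), x ^ (j : ℕ) • σ (boxBasis c j) := by
  simp [genElt, map_sum]

theorem X_mem_box {c : Fin r → ℕ} (hc : ∀ i, 1 ≤ c i) (i : Fin r) :
    (X i : MvPolynomial (Fin r) ℂ) ∈ box c := by
  refine monomial_mem_box (fun k => ?_) 1
  rw [Finsupp.single_apply]
  split_ifs with h
  · exact hc k
  · exact Nat.zero_le _

theorem exists_boxBasis_ne {c : Fin r → ℕ} (hc : ∀ i, 1 ≤ c i)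
    {σ τ : MvPolynomial (Fin r) ℂ →ₐ[ℂ] Ω} (h : σ ≠ τ) :
    ∃ j, σ (boxBasis c j) ≠ τ (boxBasis c j) := by
  by_contra! hj
  apply h
  ext i
  have : Set.EqOn σ.toLinearMap τ.toLinearMap (Submodule.span ℂ (Set.range (boxBasis c))) :=
    LinearMap.eqOn_span (by rintro _ ⟨j, rfl⟩; exact hj j)
  exact this (by rw [span_boxBasis]; exact X_mem_box hc i)

theorem eventually_mu_le {v : Valuation Ω Γ} {φ : MvPolynomial (Fin r) ℂ →ₐ[ℂ] Ω}
    (hv : ∀ z : ℂ, v (algebraMap ℂ Ω z) ≤ 1) {c : Fin r → ℕ} (hc : ∀ i, 1 ≤ c i)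
    (σ : MvPolynomial (Fin r) ℂ →ₐ[ℂ] Ω) :
    ∀ᶠ x in Filter.cofinite, mu v φ σ ≤ v (σ (genElt c x) - φ (genElt c x)) := by
  have h : ∀ᶠ x : ℂ in Filter.cofinite, ∀ j, v (σ (boxBasis c j) - φ (boxBasis c j))
      ≤ v (∑ i : Fin (Module.finrank ℂ (box c)),
          x ^ (i : ℕ) • (σ (boxBasis c i) - φ (boxBasis c i))) :=
    Filter.eventually_all.mpr fun j =>
      eventually_valuation_sum_pow_smul v hv (fun i => σ (boxBasis c i) - φ (boxBasis c i)) j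
  filter_upwards [h] with x hx
  refine Finset.sup_le fun i _ => ?_
  have hX := X_mem_box hc i
  rw [← span_boxBasis, Submodule.mem_span_range_iff_exists_fun] at hX
  obtain ⟨a, ha⟩ := hX
  rw [← ha, map_genElt, map_genElt, map_sum, map_sum, ← Finset.sum_sub_distrib,
    ← Finset.sum_sub_distrib]
  refine v.map_sum_le fun j _ => ?_
  rw [map_smul, map_smul, ← smul_sub, Algebra.smul_def, map_mul]
  refine (mul_le_of_le_one_left' (hv _)).trans ((hx j).trans (le_of_eq ?_))
  simp only [smul_sub]

theorem eventually_good {c : Fin r → ℕ} (𝔭 : Ideal (MvPolynomial (Fin r) ℂ)) [𝔭.IsPrime] :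
    ∀ᶠ l in genFilter (tdim (MvPolynomial (Fin r) ℂ ⧸ 𝔭)),
      Good c 𝔭 (Yfam c l (tdim (MvPolynomial (Fin r) ℂ ⧸ 𝔭))) := by
  have hs : Submodule.span ℂ (Set.range fun j => Ideal.Quotient.mkₐ ℂ 𝔭 (boxBasis c j))
      = boxQuot c 𝔭 := by
    have := congrArg (Submodule.map (Ideal.Quotient.mkₐ ℂ 𝔭).toLinearMap) (span_boxBasis c)
    rwa [Submodule.map_span, ← Set.range_comp] at this
  have := GenericNormalization.eventually_filteredFinite
    (fun j => Ideal.Quotient.mkₐ ℂ 𝔭 (boxBasis c j)) (by rw [hs]; exact one_mem_boxQuot c 𝔭)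
  rw [hs] at this
  filter_upwards [this] with l hl
  refine ⟨rfl, fun i => genElt_mem _ _, ?_⟩
  convert hl.comp_equiv Fin.revPerm using 2 with i
  change Ideal.Quotient.mkₐ ℂ 𝔭 _ = _
  rw [Yfam, genElt, map_sum]
  simp only [map_smul]
  rfl

theorem Gen.congr {v : Valuation Ω Γ} {φ : MvPolynomial (Fin r) ℂ →ₐ[ℂ] Ω} {c : Fin r → ℕ}
    {𝔭 : Ideal (MvPolynomial (Fin r) ℂ)} {l l' : ℕ → ℂ}
    (h : ∀ i < tdim (MvPolynomial (Fin r) ℂ ⧸ 𝔭) + 1, l i = l' i) (H : Gen v φ c 𝔭 l) :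
    Gen v φ c 𝔭 l' := by
  obtain ⟨h1, h2, h3⟩ := H
  rw [Yfam_congr c fun i hi => h i (by omega)] at h1 h2 h3
  rw [h _ (Nat.lt_succ_self _)] at h2 h3
  exact ⟨h1, h2, h3⟩

theorem tdim_quotient_le (𝔭 : Ideal (MvPolynomial (Fin r) ℂ)) [𝔭.IsPrime] :
    tdim (MvPolynomial (Fin r) ℂ ⧸ 𝔭) ≤ r := by
  have := tdim_le_of_surjective (Ideal.Quotient.mkₐ ℂ 𝔭) (Ideal.Quotient.mkₐ_surjective ℂ 𝔭)
  rwa [tdim_mvPolynomial] at this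

theorem eventually_gen {v : Valuation Ω Γ} {φ : MvPolynomial (Fin r) ℂ →ₐ[ℂ] Ω} (hφ : IsCurve v φ)
    {c : Fin r → ℕ} (hc : ∀ i, 1 ≤ c i) (𝔭 : Ideal (MvPolynomial (Fin r) ℂ)) [𝔭.IsPrime] :
    ∀ᶠ l in genFilter (r + 1), Gen v φ c 𝔭 l := by
  have hle := tdim_quotient_le 𝔭
  refine eventually_genFilter_of_step (k := tdim (MvPolynomial (Fin r) ℂ ⧸ 𝔭)) (by omega)
    (fun l l' h => Gen.congr h) ?_
  filter_upwards [eventually_good (c := c) 𝔭] with l hl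
  have hp : GoodPackage v φ c 𝔭 _ := hl.package hφ hc
  set N := tdim (MvPolynomial (Fin r) ℂ ⧸ 𝔭) with hN
  have h1 : ∀ᶠ x : ℂ in Filter.cofinite, ∀ σ ∈ ptsF φ 𝔭 (Yfam c l N), ∀ τ ∈ ptsF φ 𝔭 (Yfam c l N),
      σ ≠ τ → ∑ j : Fin (Module.finrank ℂ (box c)),
          x ^ (j : ℕ) • (σ (boxBasis c j) - τ (boxBasis c j)) ≠ 0 := by
    simp only [Filter.eventually_all_finset]
    intro σ _ τ _
    rw [Filter.eventually_imp_distrib_left]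
    intro hne
    refine eventually_sum_pow_smul_ne_zero (fun j => σ (boxBasis c j) - τ (boxBasis c j)) ?_
    obtain ⟨j, hj⟩ := exists_boxBasis_ne hc hne
    exact ⟨j, sub_ne_zero.mpr hj⟩
  have h2 : ∀ᶠ x : ℂ in Filter.cofinite, ∀ σ ∈ ptsF φ 𝔭 (Yfam c l N),
      mu v φ σ ≤ v (σ (genElt c x) - φ (genElt c x)) := by
    simp only [Filter.eventually_all_finset]
    exact fun σ _ => eventually_mu_le hφ.const_le hc σ
  filter_upwards [h1, h2] with x hx1 hx2
  have hY : Yfam c (Function.update l N x) N = Yfam c l N :=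
    Yfam_congr c fun i hi => Function.update_of_ne (by omega) _ _
  refine ⟨by rw [← hN, hY]; exact hl, ?_, ?_⟩
  · rw [← hN, hY, Function.update_self]
    intro σ hσ τ hτ h
    by_contra hne
    refine hx1 σ ((hp.mem_ptsF σ).mpr hσ) τ ((hp.mem_ptsF τ).mpr hτ) hne ?_
    have h' : σ (genElt c x) = τ (genElt c x) := h
    rw [map_genElt, map_genElt, ← sub_eq_zero, ← Finset.sum_sub_distrib] at h'
    simpa only [smul_sub] using h'
  · rw [← hN, hY, Function.update_self]
    intro σ hσ
    exact le_antisymm (valuation_sub_le_mu hφ.le_one (hp.le_one σ hσ) _)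
      (hx2 σ ((hp.mem_ptsF σ).mpr hσ))
end

section
variable {r : ℕ} {Ω Γ : Type} [Field Ω] [IsAlgClosed Ω] [Algebra ℂ Ω]
  [LinearOrderedCommGroupWithZero Γ]

/-- The product of the distances of `φ` from the points of `𝔮` in the same fibre. -/
def fiberDist (v : Valuation Ω Γ) (φ : MvPolynomial (Fin r) ℂ →ₐ[ℂ] Ω) (c : Fin r → ℕ) (l : ℕ → ℂ)
    (𝔮 : Ideal (MvPolynomial (Fin r) ℂ)) : Γ :=
  ∏ σ ∈ ptsF φ 𝔮 (Yfam c l (tdim (MvPolynomial (Fin r) ℂ ⧸ 𝔮))), mu v φ σ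

theorem IsCurve.valuation_eq_one_of_isUnit {v : Valuation Ω Γ}
    {φ : MvPolynomial (Fin r) ℂ →ₐ[ℂ] Ω} (hφ : IsCurve v φ) {g : MvPolynomial (Fin r) ℂ}
    (hg : IsUnit g) : v (φ g) = 1 := by
  obtain ⟨u, rfl⟩ := hg
  refine le_antisymm (hφ.le_one _) ?_
  calc (1 : Γ) = v (φ (u : MvPolynomial (Fin r) ℂ)) * v (φ (↑u⁻¹ : MvPolynomial (Fin r) ℂ)) := by
        rw [← map_mul, ← map_mul, Units.mul_inv, map_one, map_one]
    _ ≤ _ := mul_le_of_le_one_right' (hφ.le_one _)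

theorem exists_degreeOf_pos_of_prime {N : ℕ} {q : MvPolynomial (Fin N) ℂ} (hq : Prime q) :
    ∃ j, 0 < q.degreeOf j := by
  by_contra! h
  have hC : q = C (q.coeff 0) := by
    rw [← totalDegree_eq_zero_iff_eq_C, totalDegree_eq_zero_iff]
    intro m hm x
    have := degreeOf_le_iff.mp (h x) m hm
    omega
  have h0 : q.coeff 0 ≠ 0 := fun h0 => hq.ne_zero (by rw [hC, h0, map_zero])
  exact hq.not_isUnit (by rw [hC]; exact (isUnit_iff_ne_zero.mpr h0).map C)

theorem le_tdim_of_comap_eq_span {M : ℕ} {Y : Fin (M + 1) → MvPolynomial (Fin r) ℂ}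
    {𝔮 : Ideal (MvPolynomial (Fin r) ℂ)} [𝔮.IsPrime] {q : MvPolynomial (Fin (M + 1)) ℂ}
    (hq : Prime q)
    (h𝔮 : 𝔮.comap (aeval Y : MvPolynomial (Fin (M + 1)) ℂ →ₐ[ℂ] _) = Ideal.span {q}) :
    M ≤ tdim (MvPolynomial (Fin r) ℂ ⧸ 𝔮) := by
  obtain ⟨j, hj⟩ := exists_degreeOf_pos_of_prime hq
  let f : MvPolynomial (Fin M) ℂ →ₐ[ℂ] MvPolynomial (Fin r) ℂ ⧸ 𝔮 :=
    (Ideal.Quotient.mkₐ ℂ 𝔮).comp ((aeval Y).comp (rename j.succAbove))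
  have hf : Function.Injective f := by
    rw [injective_iff_map_eq_zero]
    intro p hp
    have hmem : rename j.succAbove p ∈ 𝔮.comap (aeval Y : MvPolynomial (Fin (M + 1)) ℂ →ₐ[ℂ] _) :=
      Ideal.Quotient.eq_zero_iff_mem (I := 𝔮).mp hp
    rw [h𝔮, Ideal.mem_span_singleton] at hmem
    obtain ⟨w, hw⟩ := hmem
    by_contra hp0
    have hr0 : rename j.succAbove p ≠ 0 := fun h =>
      hp0 (rename_injective _ Fin.succAbove_right_injective (h.trans (map_zero _).symm))
    have hw0 : w ≠ 0 := by rintro rfl; exact hr0 (by rw [hw, mul_zero])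
    have hdeg : (rename j.succAbove p).degreeOf j = 0 := by
      by_contra hne
      have hv := mem_vars_iff_degreeOf_ne_zero.mpr hne
      obtain ⟨i, -, hi⟩ := Finset.mem_image.mp (vars_rename _ _ hv)
      exact Fin.succAbove_ne j i hi
    rw [hw, degreeOf_mul_eq hq.ne_zero hw0] at hdeg
    omega
  have := tdim_le_of_injective f hf
  rwa [tdim_mvPolynomial] at this

theorem eval₂_finSuccEquiv {M : ℕ} (c : Fin r → ℕ) (l : ℕ → ℂ) (q : MvPolynomial (Fin (M + 1)) ℂ) :
    (finSuccEquiv ℂ M q).eval₂ (aeval (Yfam c l M) : MvPolynomial (Fin M) ℂ →ₐ[ℂ] _).toRingHom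
      (genElt c (l M)) = aeval (Yfam c l (M + 1)) q := by
  let E : Polynomial (MvPolynomial (Fin M) ℂ) →ₐ[ℂ] MvPolynomial (Fin r) ℂ :=
    Polynomial.eval₂AlgHom (aeval (Yfam c l M)) (genElt c (l M)) fun _ => Commute.all _ _
  have : E.comp (finSuccEquiv ℂ M).toAlgHom = aeval (Yfam c l (M + 1)) := by
    ext i : 1
    refine Fin.cases ?_ (fun i => ?_) i
    · simp [E, Yfam_zero, finSuccEquiv_X_zero]
    · simp [E, Yfam_succ, finSuccEquiv_X_succ]
  exact DFunLike.congr_fun this q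

theorem exists_component {v : Valuation Ω Γ} {φ : MvPolynomial (Fin r) ℂ →ₐ[ℂ] Ω}
    (hφ : IsCurve v φ) {c : Fin r → ℕ} (hc : ∀ i, 1 ≤ c i) {𝔭 : Ideal (MvPolynomial (Fin r) ℂ)}
    [h𝔭 : 𝔭.IsPrime] {l : ℕ → ℂ} {N : ℕ} (hN : tdim (MvPolynomial (Fin r) ℂ ⧸ 𝔭) = N)
    {t : MvPolynomial (Fin r) ℂ} (ht : t ∉ 𝔭)
    (hgen : ∀ 𝔮 ∈ (𝔭 ⊔ Ideal.span {t}).minimalPrimes, Gen v φ c 𝔮 l)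
    {ν q : MvPolynomial (Fin N) ℂ} (hν0 : ν ≠ 0)
    (hν : aeval (Yfam c l N) ν ∈ 𝔭 ⊔ Ideal.span {t}) (hq : Prime q)
    (hQ : ∃ Q : Ideal (MvPolynomial (Fin r) ℂ), Q.IsPrime ∧ 𝔭 ≤ Q ∧ t ∈ Q ∧
        Q.comap (aeval (Yfam c l N) : MvPolynomial (Fin N) ℂ →ₐ[ℂ] _) = Ideal.span {q}) :
    ∃ 𝔮 ∈ (𝔭 ⊔ Ideal.span {t}).minimalPrimes, tdim (MvPolynomial (Fin r) ℂ ⧸ 𝔮) + 1 = N ∧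
      pdeg c 𝔮 ≤ q.totalDegree ∧ fiberDist v φ c l 𝔮 = v (φ (aeval (Yfam c l N) q)) := by
  obtain ⟨M, rfl⟩ : ∃ M, N = M + 1 := by
    obtain ⟨j, -⟩ := exists_degreeOf_pos_of_prime hq
    exact ⟨N - 1, by have := j.pos; omega⟩
  obtain ⟨Q, hQp, h𝔭Q, htQ, hQc⟩ := hQ
  have hJQ : 𝔭 ⊔ Ideal.span {t} ≤ Q := sup_le h𝔭Q ((Ideal.span_singleton_le_iff_mem _).mpr htQ)
  obtain ⟨𝔮, h𝔮, h𝔮Q⟩ := Ideal.exists_minimalPrimes_le hJQ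
  have h𝔮p : 𝔮.IsPrime := h𝔮.1.1
  have hJ𝔮 : 𝔭 ⊔ Ideal.span {t} ≤ 𝔮 := h𝔮.1.2
  have hqmem : aeval (Yfam c l (M + 1)) q ∈ 𝔮 := by
    obtain ⟨f, hf, hfν⟩ := UniqueFactorizationMonoid.exists_prime_factors ν hν0
    obtain ⟨u, hu⟩ := hfν.symm
    have hν𝔮 : ν ∈ 𝔮.comap (aeval (Yfam c l (M + 1)) : MvPolynomial (Fin (M + 1)) ℂ →ₐ[ℂ] _) :=
      hJ𝔮 hν
    have hprod : f.prod ∈ 𝔮.comap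
        (aeval (Yfam c l (M + 1)) : MvPolynomial (Fin (M + 1)) ℂ →ₐ[ℂ] _) := by
      rw [← hu]; exact Ideal.mul_mem_right _ _ hν𝔮
    have hcp : (𝔮.comap (aeval (Yfam c l (M + 1)) :
        MvPolynomial (Fin (M + 1)) ℂ →ₐ[ℂ] _)).IsPrime :=
      h𝔮p.comap _
    obtain ⟨q', hq'f, hq'⟩ := (hcp.multiset_prod_mem_iff_exists_mem f).mp hprod
    have : q' ∈ Ideal.span {q} := by rw [← hQc]; exact h𝔮Q hq'
    have hass := (hq.associated_of_dvd (hf q' hq'f) (Ideal.mem_span_singleton.mp this))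
    obtain ⟨u', hu'⟩ := hass.symm
    rw [← hu', map_mul]
    exact Ideal.mul_mem_right _ _ hq'
  have hcomap : 𝔮.comap (aeval (Yfam c l (M + 1)) : MvPolynomial (Fin (M + 1)) ℂ →ₐ[ℂ] _)
      = Ideal.span {q} := by
    refine le_antisymm ?_ ((Ideal.span_singleton_le_iff_mem _).mpr hqmem)
    rw [← hQc]
    exact Ideal.comap_mono h𝔮Q
  have hdim : tdim (MvPolynomial (Fin r) ℂ ⧸ 𝔮) = M := by
    refine le_antisymm ?_ (le_tdim_of_comap_eq_span hq hcomap)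
    have hlt : 𝔭 < 𝔮 := lt_of_le_of_ne (le_sup_left.trans hJ𝔮) fun h =>
      ht (h ▸ hJ𝔮 (Ideal.mem_sup_right (Ideal.mem_span_singleton_self t)))
    have := tdim_quotient_lt hlt
    omega
  refine ⟨𝔮, h𝔮, by rw [hdim], ?_⟩
  obtain ⟨g1, g2, g3⟩ := hgen 𝔮 h𝔮
  rw [fiberDist]
  rw [hdim] at g1 g2 g3 ⊢
  have hp : GoodPackage v φ c 𝔮 _ := g1.package hφ hc
  obtain ⟨h, hmon, hdeg, hmap, hmem, hdvd⟩ := hp.exists_minpoly _ g2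
  have hdvdq := hdvd (finSuccEquiv ℂ M q) (by rw [eval₂_finSuccEquiv]; exact hqmem)
  have hirr : Irreducible (finSuccEquiv ℂ M q) :=
    (MulEquiv.irreducible_iff (finSuccEquiv ℂ M).toMulEquiv).mpr hq.irreducible
  obtain ⟨u, hu⟩ := hdvdq
  have huu : IsUnit u := by
    refine (hirr.isUnit_or_isUnit hu).resolve_left fun hh => ?_
    have h1 := hmon.isUnit_iff.mp hh
    have := pdeg_pos (𝔭 := 𝔮) hc
    rw [← hdeg, h1, Polynomial.natDegree_one] at this
    omega
  constructor
  · have h1 : (finSuccEquiv ℂ M q).natDegree = h.natDegree + u.natDegree := by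
      rw [hu, Polynomial.natDegree_mul hmon.ne_zero huu.ne_zero]
    rw [natDegree_finSuccEquiv] at h1
    have := degreeOf_le_totalDegree q 0
    omega
  · have h1 := congrArg φ (eval₂_finSuccEquiv c l q)
    rw [hu, Polynomial.eval₂_mul, map_mul] at h1
    have hφh : φ (h.eval₂ (aeval (Yfam c l M) : MvPolynomial (Fin M) ℂ →ₐ[ℂ] _).toRingHom
        (genElt c (l M))) = ∏ σ ∈ ptsF φ 𝔮 (Yfam c l M),
          (φ (genElt c (l M)) - σ (genElt c (l M))) := by
      have h2 := Polynomial.hom_eval₂ h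
        (aeval (Yfam c l M) : MvPolynomial (Fin M) ℂ →ₐ[ℂ] _).toRingHom φ.toRingHom (genElt c (l M))
      have h3 := congrArg (Polynomial.eval (φ (genElt c (l M)))) hmap
      rw [Polynomial.eval_map, Polynomial.eval_prod] at h3
      simp only [Polynomial.eval_sub, Polynomial.eval_X, Polynomial.eval_C] at h3
      exact h2.trans h3
    have huv : v (φ (u.eval₂ (aeval (Yfam c l M) : MvPolynomial (Fin M) ℂ →ₐ[ℂ] _).toRingHom
        (genElt c (l M)))) = 1 :=
      hφ.valuation_eq_one_of_isUnit
        (huu.map (Polynomial.eval₂RingHom (aeval (Yfam c l M) :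
          MvPolynomial (Fin M) ℂ →ₐ[ℂ] _).toRingHom (genElt c (l M))))
    rw [← h1, map_mul, huv, mul_one, hφh, map_prod]
    refine Finset.prod_congr rfl fun σ hσ => ?_
    rw [← g3 σ ((hp.mem_ptsF σ).mp hσ), Valuation.map_sub_swap]

theorem totalDegree_multiset_prod_of_prime {N : ℕ} (f : Multiset (MvPolynomial (Fin N) ℂ))
    (hf : ∀ q ∈ f, q ≠ 0) : f.prod.totalDegree = (f.map totalDegree).sum := by
  induction f using Multiset.induction_on with
  | empty => simp
  | cons a f ih =>
    have h2 : ∀ q ∈ f, q ≠ 0 := fun q hq => hf q (Multiset.mem_cons_of_mem hq)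
    rw [Multiset.prod_cons, Multiset.map_cons, Multiset.sum_cons, ← ih h2]
    exact totalDegree_mul_of_isDomain (hf a (Multiset.mem_cons_self _ _))
      (Multiset.prod_ne_zero fun h0 => h2 0 h0 rfl)

/-- Intersecting with a hypersurface. -/
theorem exists_components {v : Valuation Ω Γ} {φ : MvPolynomial (Fin r) ℂ →ₐ[ℂ] Ω}
    (hφ : IsCurve v φ) {c : Fin r → ℕ} (hc : ∀ i, 1 ≤ c i) {𝔭 : Ideal (MvPolynomial (Fin r) ℂ)}
    [h𝔭 : 𝔭.IsPrime] {l : ℕ → ℂ} {t : MvPolynomial (Fin r) ℂ} (ht : t ∉ 𝔭) {e : ℕ}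
    (hte : t ∈ box c ^ e) (hgen𝔭 : Gen v φ c 𝔭 l)
    (hgen : ∀ 𝔮 ∈ (𝔭 ⊔ Ideal.span {t}).minimalPrimes, Gen v φ c 𝔮 l) :
    ∃ s : Multiset (Ideal (MvPolynomial (Fin r) ℂ)),
      (∀ 𝔮 ∈ s, 𝔮 ∈ (𝔭 ⊔ Ideal.span {t}).minimalPrimes ∧
        tdim (MvPolynomial (Fin r) ℂ ⧸ 𝔮) + 1 = tdim (MvPolynomial (Fin r) ℂ ⧸ 𝔭)) ∧
      (s.map (pdeg c)).sum ≤ e * pdeg c 𝔭 ∧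
      (s.map (fiberDist v φ c l)).prod
        ≤ ∏ σ ∈ ptsF φ 𝔭 (Yfam c l (tdim (MvPolynomial (Fin r) ℂ ⧸ 𝔭))),
            max (mu v φ σ) (v (φ t)) := by
  have hp : GoodPackage v φ c 𝔭 _ := hgen𝔭.good.package hφ hc
  obtain ⟨ν, hν0, hνdeg, hνφ, hνmem, hνq⟩ := hp.exists_norm t ht e hte
  obtain ⟨f, hf, u, hu⟩ := UniqueFactorizationMonoid.exists_prime_factors ν hν0
  have hdvd : ∀ q ∈ f, q ∣ ν := fun q hq => (Multiset.dvd_prod hq).trans (Dvd.intro _ hu)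
  have key : ∀ q : f.toFinset, ∃ 𝔮 ∈ (𝔭 ⊔ Ideal.span {t}).minimalPrimes,
      tdim (MvPolynomial (Fin r) ℂ ⧸ 𝔮) + 1 = tdim (MvPolynomial (Fin r) ℂ ⧸ 𝔭) ∧
      pdeg c 𝔮 ≤ q.1.totalDegree ∧ fiberDist v φ c l 𝔮 = v (φ (aeval (Yfam c l _) q.1)) :=
    fun q => have hqf := Multiset.mem_toFinset.mp q.2
      exists_component hφ hc rfl ht hgen hν0 hνmem (hf _ hqf) (hνq _ (hf _ hqf) (hdvd _ hqf))
  have key' : ∀ q, ∃ 𝔮 : Ideal (MvPolynomial (Fin r) ℂ), q ∈ f →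
      𝔮 ∈ (𝔭 ⊔ Ideal.span {t}).minimalPrimes ∧
      tdim (MvPolynomial (Fin r) ℂ ⧸ 𝔮) + 1 = tdim (MvPolynomial (Fin r) ℂ ⧸ 𝔭) ∧
      pdeg c 𝔮 ≤ q.totalDegree ∧ fiberDist v φ c l 𝔮 = v (φ (aeval (Yfam c l _) q)) := by
    intro q
    by_cases hq : q ∈ f
    · obtain ⟨𝔮, h1, h2⟩ := key ⟨q, Multiset.mem_toFinset.mpr hq⟩
      exact ⟨𝔮, fun _ => ⟨h1, h2⟩⟩
    · exact ⟨⊥, fun h => absurd h hq⟩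
  choose F hF using key'
  refine ⟨f.map F, ?_, ?_, ?_⟩
  · intro 𝔮 h
    obtain ⟨q, hq, rfl⟩ := Multiset.mem_map.mp h
    exact ⟨(hF q hq).1, (hF q hq).2.1⟩
  · rw [Multiset.map_map]
    refine (Multiset.sum_map_le_sum_map _ totalDegree fun q hq => (hF q hq).2.2.1).trans ?_
    rw [← totalDegree_multiset_prod_of_prime f fun q hq => (hf q hq).ne_zero]
    refine le_trans ?_ hνdeg
    have hf0 : f.prod ≠ 0 := Multiset.prod_ne_zero fun h0 => (hf 0 h0).ne_zero rfl
    rw [← hu, totalDegree_mul_of_isDomain hf0 u.ne_zero]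
    exact Nat.le_add_right _ _
  · have h1 : ((f.map F).map (fiberDist v φ c l)).prod = v (φ (aeval (Yfam c l _) ν)) := by
      rw [Multiset.map_map, ← hu, map_mul, map_mul, map_mul,
        hφ.valuation_eq_one_of_isUnit (u.isUnit.map (aeval (Yfam c l _))), mul_one,
        map_multiset_prod, map_multiset_prod, map_multiset_prod, Multiset.map_map, Multiset.map_map]
      exact congrArg _ (Multiset.map_congr rfl fun q hq => (hF q hq).2.2.2)
    rw [h1, hνφ, map_prod]
    refine Finset.prod_le_prod' fun σ hσ => ?_
    have hσ' := (hp.mem_ptsF σ).mp hσ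
    have := v.map_add (σ t - φ t) (φ t)
    rw [sub_add_cancel] at this
    exact this.trans (max_le_max (valuation_sub_le_mu hφ.le_one (hp.le_one σ hσ') t) le_rfl)
end

section
/-- The `X`-adic valuation on power series extends to an algebraically closed field. -/
theorem exists_valuation_powerSeries (E : Type) [Field E] [Algebra ℂ E] :
    ∃ (Ω : Type) (_ : Field Ω) (_ : IsAlgClosed Ω) (_ : Algebra ℂ Ω) (Γ : Type)
      (_ : LinearOrderedCommGroupWithZero Γ) (v : Valuation Ω Γ)
      (ι : PowerSeries E →ₐ[ℂ] Ω) (π : Γ),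
      Function.Injective ι ∧ 0 < π ∧ π < 1 ∧ (∀ f k, PowerSeries.X ^ k ∣ f → v (ι f) ≤ π ^ k) ∧
      (∀ f k, PowerSeries.coeff k f ≠ 0 → π ^ k ≤ v (ι f)) := by
  let F := FractionRing (PowerSeries E)
  let Ω := AlgebraicClosure F
  let ι₀ : PowerSeries E →+* Ω := (algebraMap F Ω).comp (algebraMap (PowerSeries E) F)
  let _ : Algebra ℂ Ω := (ι₀.comp (algebraMap ℂ (PowerSeries E))).toAlgebra
  let ι : PowerSeries E →ₐ[ℂ] Ω := { ι₀ with commutes' := fun z => rfl }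
  have hι : Function.Injective ι :=
    (algebraMap F Ω).injective.comp (IsFractionRing.injective (PowerSeries E) F)
  obtain ⟨A, hA, hloc⟩ := IsLocalRing.exists_factor_valuationRing ι₀
  have hle : ∀ f, A.valuation (ι f) ≤ 1 := fun f => (A.valuation_le_one_iff _).mpr (hA f)
  have hunit : ∀ f, IsUnit f → A.valuation (ι f) = 1 := by
    rintro _ ⟨u, rfl⟩
    refine le_antisymm (hle _) ?_
    calc (1 : A.ValueGroup) = A.valuation (ι u) * A.valuation (ι (↑u⁻¹ : PowerSeries E)) := by
          rw [← map_mul, ← map_mul, Units.mul_inv, map_one, map_one]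
      _ ≤ _ := mul_le_of_le_one_right' (hle _)
  refine ⟨Ω, inferInstance, inferInstance, inferInstance, A.ValueGroup, inferInstance, A.valuation,
    ι, A.valuation (ι PowerSeries.X), hι, ?_, ?_, ?_, ?_⟩
  · rw [zero_lt_iff, Valuation.ne_zero_iff]
    exact (map_ne_zero_iff ι hι).mpr PowerSeries.X_ne_zero
  · have := (A.valuation_lt_one_iff (ι₀.codRestrict A.toSubring hA PowerSeries.X)).mp ?_
    · exact this
    · rw [IsLocalRing.mem_maximalIdeal, mem_nonunits_iff]
      intro h
      exact PowerSeries.X_prime.not_isUnit (hloc.map_nonunit _ h)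
  · rintro f k ⟨g, rfl⟩
    rw [map_mul, map_mul, map_pow, map_pow]
    exact mul_le_of_le_one_right' (hle _)
  · intro f k hk
    have hf : f ≠ 0 := fun h => hk (by simp [h])
    have hu : IsUnit (PowerSeries.divXPowOrder f) := by
      rw [PowerSeries.isUnit_iff_constantCoeff, isUnit_iff_ne_zero]
      exact fun h => hf (PowerSeries.constantCoeff_divXPowOrder_eq_zero_iff.mp h)
    rw [← PowerSeries.X_pow_order_mul_divXPowOrder (f := f), map_mul, map_mul, hunit _ hu, mul_one,
      map_pow,
      map_pow]
    have hm : f.order.toNat ≤ k := by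
      have := PowerSeries.order_le k hk
      exact ENat.toNat_le_of_le_natCast this
    exact pow_le_pow_right_of_le_one' (hle _) hm


variable {R E : Type} [CommRing R] [Algebra ℂ R] [Field E] [Algebra ℂ E]

/-- The formal solution through the point `α` of the differential system of the derivation `D`. -/
def flowSeries (D : Derivation ℂ R R) (α : R →ₐ[ℂ] E) (Q : R) : PowerSeries E :=
  PowerSeries.mk fun j => ((j.factorial : ℂ)⁻¹) • α (D^[j] Q)

theorem derivative_flowSeries (D : Derivation ℂ R R) (α : R →ₐ[ℂ] E) (Q : R) :
    PowerSeries.derivative E (flowSeries D α Q) = flowSeries D α (D Q) := by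
  ext j
  have h1 : ((j : E) + 1) = algebraMap ℂ E (j + 1) := by simp
  rw [PowerSeries.coeff_derivative, flowSeries, flowSeries, PowerSeries.coeff_mk,
    PowerSeries.coeff_mk, h1, mul_comm, ← Algebra.smul_def, smul_smul, Function.iterate_succ_apply]
  congr 1
  rw [Nat.factorial_succ]
  have h2 : (j.factorial : ℂ) ≠ 0 := by exact_mod_cast j.factorial_ne_zero
  have h3 : (j : ℂ) + 1 ≠ 0 := by exact_mod_cast j.succ_ne_zero
  push_cast
  field_simp

theorem flowSeries_add (D : Derivation ℂ R R) (α : R →ₐ[ℂ] E) (P Q : R) :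
    flowSeries D α (P + Q) = flowSeries D α P + flowSeries D α Q := by
  ext j
  simp [flowSeries, iterate_map_add]

theorem constantCoeff_flowSeries (D : Derivation ℂ R R) (α : R →ₐ[ℂ] E) (Q : R) :
    PowerSeries.constantCoeff (flowSeries D α Q) = α Q := by
  simp [flowSeries, ← PowerSeries.coeff_zero_eq_constantCoeff_apply]

theorem flowSeries_mul (D : Derivation ℂ R R) (α : R →ₐ[ℂ] E) (P Q : R) :
    flowSeries D α (P * Q) = flowSeries D α P * flowSeries D α Q := by
  suffices h : ∀ k P Q, PowerSeries.coeff k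
      (flowSeries D α (P * Q) - flowSeries D α P * flowSeries D α Q) = 0 by
    rw [← sub_eq_zero]
    ext k
    simpa using h k P Q
  intro k
  induction k with
  | zero =>
    intro P Q
    simp [constantCoeff_flowSeries]
  | succ k ih =>
    intro P Q
    have h := PowerSeries.coeff_derivative
      (flowSeries D α (P * Q) - flowSeries D α P * flowSeries D α Q) k
    have h2 : PowerSeries.derivative E
        (flowSeries D α (P * Q) - flowSeries D α P * flowSeries D α Q)
        = (flowSeries D α (D P * Q) - flowSeries D α (D P) * flowSeries D α Q)
          + (flowSeries D α (P * D Q) - flowSeries D α P * flowSeries D α (D Q)) := by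
      rw [map_sub, Derivation.leibniz, derivative_flowSeries, derivative_flowSeries,
        derivative_flowSeries, Derivation.leibniz, flowSeries_add, smul_eq_mul, smul_eq_mul,
        smul_eq_mul, smul_eq_mul, mul_comm Q (D P)]
      ring
    rw [h2, map_add, ih, ih, add_zero] at h
    have : CharZero E := charZero_of_injective_algebraMap (algebraMap ℂ E).injective
    rcases mul_eq_zero.mp h.symm with h | h
    · exact h
    · exact absurd h (by exact_mod_cast k.succ_ne_zero)

/-- `flowSeries` as an algebra homomorphism. -/
def flow (D : Derivation ℂ R R) (α : R →ₐ[ℂ] E) : R →ₐ[ℂ] PowerSeries E where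
  toFun := flowSeries D α
  map_one' := by
    ext j
    rcases j with _ | j
    · simp [constantCoeff_flowSeries]
    · simp [flowSeries, PowerSeries.coeff_one]
  map_mul' := flowSeries_mul D α
  map_zero' := by ext j; simp [flowSeries, iterate_map_zero]
  map_add' := flowSeries_add D α
  commutes' z := by
    ext j
    rcases j with _ | j
    · simp [constantCoeff_flowSeries, PowerSeries.algebraMap_apply]
    · simp [flowSeries, PowerSeries.algebraMap_apply, iterate_map_zero]

theorem coeff_flow (D : Derivation ℂ R R) (α : R →ₐ[ℂ] E) (Q : R) (j : ℕ) :
    PowerSeries.coeff j (flow D α Q) = ((j.factorial : ℂ)⁻¹) • α (D^[j] Q) := by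
  change PowerSeries.coeff j (flowSeries D α Q) = _
  rw [flowSeries, PowerSeries.coeff_mk]

theorem coeff_flow_eq_zero_iff (D : Derivation ℂ R R) (α : R →ₐ[ℂ] E) (Q : R) (j : ℕ) :
    PowerSeries.coeff j (flow D α Q) = 0 ↔ α (D^[j] Q) = 0 := by
  have h2 : (j.factorial : ℂ) ≠ 0 := by exact_mod_cast j.factorial_ne_zero
  rw [coeff_flow, smul_eq_zero, inv_eq_zero, or_iff_right h2]

/-- A prime ideal `𝔭` contains no nonzero `D`-stable prime ideal. -/
def NoStable (D : Derivation ℂ R R) (𝔭 : Ideal R) : Prop :=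
  ∀ 𝔮 : Ideal R, 𝔮.IsPrime → 𝔮 ≤ 𝔭 → 𝔮 ≠ ⊥ → ∃ x ∈ 𝔮, D x ∉ 𝔮

theorem flow_injective (D : Derivation ℂ R R) (α : R →ₐ[ℂ] E)
    (h : NoStable D (RingHom.ker α)) : Function.Injective (flow D α) := by
  rw [injective_iff_map_eq_zero]
  by_contra! hne
  obtain ⟨x, hx, hx0⟩ := hne
  have hmem : ∀ y, y ∈ RingHom.ker (flow D α) ↔ ∀ j, α (D^[j] y) = 0 := by
    intro y
    rw [RingHom.mem_ker, PowerSeries.ext_iff]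
    simp [coeff_flow_eq_zero_iff]
  obtain ⟨y, hy, hDy⟩ := h (RingHom.ker (flow D α)) (RingHom.ker_isPrime _)
    (fun y hy => (hmem y).mp hy 0)
    (fun hbot => hx0 (by
      have : x ∈ RingHom.ker (flow D α) := hx
      rwa [hbot] at this))
  refine hDy ((hmem _).mpr fun j => ?_)
  rw [← Function.iterate_succ_apply]
  exact (hmem y).mp hy (j + 1)
end

section
variable {r : ℕ} {Ω Γ : Type} [Field Ω] [Algebra ℂ Ω] [LinearOrderedCommGroupWithZero Γ]

/-- An integral point specialising to the generic point of `𝔭`, tangent to the vector field `D`. -/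
structure IsFlowCurve (D : Derivation ℂ (MvPolynomial (Fin r) ℂ) (MvPolynomial (Fin r) ℂ))
    (𝔭 : Ideal (MvPolynomial (Fin r) ℂ)) (v : Valuation Ω Γ)
    (ψ : MvPolynomial (Fin r) ℂ →ₐ[ℂ] Ω) (π : Γ) : Prop where
  isCurve : IsCurve v ψ
  pos : 0 < π
  lt_one : π < 1
  lt_one_iff (g : MvPolynomial (Fin r) ℂ) : v (ψ g) < 1 ↔ g ∈ 𝔭
  exists_mem : ∃ g ∈ 𝔭, π ≤ v (ψ g)
  le_pow (g : MvPolynomial (Fin r) ℂ) (k : ℕ) (h : ∀ j < k, D^[j] g ∈ 𝔭) : v (ψ g) ≤ π ^ k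

theorem exists_isFlowCurve (D : Derivation ℂ (MvPolynomial (Fin r) ℂ) (MvPolynomial (Fin r) ℂ))
    (𝔭 : Ideal (MvPolynomial (Fin r) ℂ)) [𝔭.IsPrime] (h0 : 𝔭 ≠ ⊥) (hD : NoStable D 𝔭) :
    ∃ (Ω : Type) (_ : Field Ω) (_ : IsAlgClosed Ω) (_ : Algebra ℂ Ω) (Γ : Type)
      (_ : LinearOrderedCommGroupWithZero Γ) (v : Valuation Ω Γ)
      (ψ : MvPolynomial (Fin r) ℂ →ₐ[ℂ] Ω) (π : Γ), IsFlowCurve D 𝔭 v ψ π := by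
  let E := FractionRing (MvPolynomial (Fin r) ℂ ⧸ 𝔭)
  obtain ⟨Ω, i1, i2, i3, Γ, i4, v, ι, π, hι, hpos, hlt, hdvd, hcoeff⟩ :=
    exists_valuation_powerSeries E
  let α : MvPolynomial (Fin r) ℂ →ₐ[ℂ] E :=
    (IsScalarTower.toAlgHom ℂ (MvPolynomial (Fin r) ℂ ⧸ 𝔭) E).comp (Ideal.Quotient.mkₐ ℂ 𝔭)
  have hα : ∀ g, α g = 0 ↔ g ∈ 𝔭 := fun g => by
    rw [← Ideal.Quotient.eq_zero_iff_mem (I := 𝔭)]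
    exact map_eq_zero_iff (algebraMap (MvPolynomial (Fin r) ℂ ⧸ 𝔭) E)
      (IsFractionRing.injective (MvPolynomial (Fin r) ℂ ⧸ 𝔭) E)
  have hker : RingHom.ker α = 𝔭 := Ideal.ext hα
  have hle : ∀ f, v (ι f) ≤ 1 := fun f => by simpa using hdvd f 0 (by simp)
  have hpow : ∀ g k, (∀ j < k, D^[j] g ∈ 𝔭) → v (ι (flow D α g)) ≤ π ^ k := by
    intro g k h
    refine hdvd _ _ (PowerSeries.X_pow_dvd_iff.mpr fun m hm => ?_)
    rw [coeff_flow_eq_zero_iff, hα]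
    exact h m hm
  refine ⟨Ω, i1, i2, i3, Γ, i4, v, ι.comp (flow D α), π, ⟨?_, ?_, ?_⟩, hpos, hlt, ?_, ?_, hpow⟩
  · exact hι.comp (flow_injective D α (by rwa [hker]))
  · intro z
    rw [← ι.commutes]
    exact hle _
  · exact fun g => hle _
  · intro g
    constructor
    · intro h
      by_contra hg
      refine absurd h (not_lt.mpr ?_)
      have := hcoeff (flow D α g) 0 (by rw [Ne, coeff_flow_eq_zero_iff, hα]; exact hg)
      simpa using this
    · intro h
      refine lt_of_le_of_lt (hpow g 1 (fun j hj => ?_)) (by simpa using hlt)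
      obtain rfl : j = 0 := by omega
      exact h
  · obtain ⟨g, hg, hDg⟩ := hD 𝔭 inferInstance le_rfl h0
    refine ⟨g, hg, ?_⟩
    have := hcoeff (flow D α g) 1 (by rw [Ne, coeff_flow_eq_zero_iff, hα]; exact hDg)
    simpa using this
end

section
variable {r : ℕ} {Ω Γ : Type} [Field Ω] [IsAlgClosed Ω] [Algebra ℂ Ω]
  [LinearOrderedCommGroupWithZero Γ]

theorem Gen.package {v : Valuation Ω Γ} {φ : MvPolynomial (Fin r) ℂ →ₐ[ℂ] Ω} (hφ : IsCurve v φ)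
    {c : Fin r → ℕ} (hc : ∀ i, 1 ≤ c i) {𝔮 : Ideal (MvPolynomial (Fin r) ℂ)} [𝔮.IsPrime]
    {l : ℕ → ℂ} (H : Gen v φ c 𝔮 l) :
    GoodPackage v φ c 𝔮 (Yfam c l (tdim (MvPolynomial (Fin r) ℂ ⧸ 𝔮))) :=
  H.good.package hφ hc

theorem Gen.valuation_le_mu {v : Valuation Ω Γ} {φ : MvPolynomial (Fin r) ℂ →ₐ[ℂ] Ω}
    (hφ : IsCurve v φ) {c : Fin r → ℕ} (hc : ∀ i, 1 ≤ c i) {𝔮 : Ideal (MvPolynomial (Fin r) ℂ)}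
    [𝔮.IsPrime] {l : ℕ → ℂ} (H : Gen v φ c 𝔮 l) {σ : MvPolynomial (Fin r) ℂ →ₐ[ℂ] Ω}
    (hσ : σ ∈ ptsF φ 𝔮 (Yfam c l (tdim (MvPolynomial (Fin r) ℂ ⧸ 𝔮)))) {g : MvPolynomial (Fin r) ℂ}
    (hg : g ∈ 𝔮) : v (φ g) ≤ mu v φ σ := by
  have hσ' := ((H.package hφ hc).mem_ptsF σ).mp hσ
  exact valuation_le_mu_of_mem hφ.le_one ((H.package hφ hc).le_one σ hσ') (hσ'.1 g hg)

theorem Gen.mu_le_one {v : Valuation Ω Γ} {φ : MvPolynomial (Fin r) ℂ →ₐ[ℂ] Ω}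
    (hφ : IsCurve v φ) {c : Fin r → ℕ} (hc : ∀ i, 1 ≤ c i) {𝔮 : Ideal (MvPolynomial (Fin r) ℂ)}
    [𝔮.IsPrime] {l : ℕ → ℂ} (H : Gen v φ c 𝔮 l) {σ : MvPolynomial (Fin r) ℂ →ₐ[ℂ] Ω}
    (hσ : σ ∈ ptsF φ 𝔮 (Yfam c l (tdim (MvPolynomial (Fin r) ℂ ⧸ 𝔮)))) : mu v φ σ ≤ 1 :=
  _root_.mu_le_one hφ.le_one
    ((H.package hφ hc).le_one σ (((H.package hφ hc).mem_ptsF σ).mp hσ))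

theorem Gen.pow_pdeg_le_fiberDist {v : Valuation Ω Γ} {φ : MvPolynomial (Fin r) ℂ →ₐ[ℂ] Ω}
    (hφ : IsCurve v φ) {c : Fin r → ℕ} (hc : ∀ i, 1 ≤ c i) {𝔮 : Ideal (MvPolynomial (Fin r) ℂ)}
    [𝔮.IsPrime] {l : ℕ → ℂ} (H : Gen v φ c 𝔮 l) {g : MvPolynomial (Fin r) ℂ} (hg : g ∈ 𝔮) {a : Γ}
    (ha : a ≤ v (φ g)) : a ^ pdeg c 𝔮 ≤ fiberDist v φ c l 𝔮 := by
  rw [fiberDist, ← (H.package hφ hc).card_ptsF, ← Finset.prod_const]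
  exact Finset.prod_le_prod' fun σ hσ => ha.trans (H.valuation_le_mu hφ hc hσ hg)

theorem Gen.fiberDist_bot {v : Valuation Ω Γ} {φ : MvPolynomial (Fin r) ℂ →ₐ[ℂ] Ω}
    (hφ : IsCurve v φ) {c : Fin r → ℕ} (hc : ∀ i, 1 ≤ c i) {l : ℕ → ℂ}
    (H : Gen v φ c (⊥ : Ideal (MvPolynomial (Fin r) ℂ)) l) :
    fiberDist v φ c l (⊥ : Ideal (MvPolynomial (Fin r) ℂ)) = 0 := by
  refine Finset.prod_eq_zero (i := φ) (((H.package hφ hc).mem_ptsF φ).mpr ⟨?_, fun _ => rfl⟩)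
    (mu_self v φ)
  intro x hx
  rw [(Submodule.mem_bot _).mp hx, map_zero]

variable {D : Derivation ℂ (MvPolynomial (Fin r) ℂ) (MvPolynomial (Fin r) ℂ)}
  {𝔭 : Ideal (MvPolynomial (Fin r) ℂ)} {v : Valuation Ω Γ}
  {ψ : MvPolynomial (Fin r) ℂ →ₐ[ℂ] Ω} {π : Γ}

theorem IsFlowCurve.one_le_fiberDist (hψ : IsFlowCurve D 𝔭 v ψ π) {c : Fin r → ℕ}
    (hc : ∀ i, 1 ≤ c i) {𝔮 : Ideal (MvPolynomial (Fin r) ℂ)} [𝔮.IsPrime] {l : ℕ → ℂ}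
    (H : Gen v ψ c 𝔮 l) (h : ¬ 𝔮 ≤ 𝔭) : 1 ≤ fiberDist v ψ c l 𝔮 := by
  obtain ⟨g, hg, hgp⟩ := Set.not_subset.mp h
  have h1 : 1 ≤ v (ψ g) := not_lt.mp fun hlt => hgp ((hψ.lt_one_iff g).mp hlt)
  simpa using H.pow_pdeg_le_fiberDist hψ.isCurve hc hg h1

theorem valuation_eval_derivative_prod_lt_one {ι : Type} {v : Valuation Ω Γ} (s : Finset ι)
    (a : ι → Ω) (x : Ω) (hle : ∀ i ∈ s, v (x - a i) ≤ 1) {i j : ι} (hi : i ∈ s) (hj : j ∈ s)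
    (hij : i ≠ j) (hvi : v (x - a i) < 1) (hvj : v (x - a j) < 1) :
    v ((Polynomial.derivative (∏ k ∈ s, (Polynomial.X - Polynomial.C (a k)))).eval x) < 1 := by
  rw [Polynomial.derivative_prod_finset, Polynomial.eval_finsetSum]
  refine v.map_sum_lt one_ne_zero fun k hk => ?_
  rw [Polynomial.derivative_X_sub_C, mul_one, Polynomial.eval_prod, map_prod]
  obtain ⟨m, hm, hvm⟩ : ∃ m ∈ s.erase k, v (x - a m) < 1 := by
    by_cases h : k = i
    · exact ⟨j, Finset.mem_erase.mpr ⟨by rintro rfl; exact hij h.symm, hj⟩, hvj⟩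
    · exact ⟨i, Finset.mem_erase.mpr ⟨fun h' => h h'.symm, hi⟩, hvi⟩
  rw [← Finset.mul_prod_erase _ _ hm]
  refine (mul_le_of_le_one_right' (Finset.prod_le_one' fun n hn => ?_)).trans_lt
      (by simpa using hvm)
  simpa using hle n (Finset.mem_of_mem_erase (Finset.mem_of_mem_erase hn))

theorem IsFlowCurve.le_fiberDist (hψ : IsFlowCurve D 𝔭 v ψ π) [𝔭.IsPrime] {c : Fin r → ℕ}
    (hc : ∀ i, 1 ≤ c i) {l : ℕ → ℂ} (H : Gen v ψ c 𝔭 l) : π ≤ fiberDist v ψ c l 𝔭 := by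
  have P := H.package hψ.isCurve hc
  obtain ⟨h, hmonic, hdeg, hmap, -, hdvd⟩ := P.exists_minpoly _ H.injOn
  set Y := Yfam c l (tdim (MvPolynomial (Fin r) ℂ ⧸ 𝔭)) with hY
  set θ := genElt c (l (tdim (MvPolynomial (Fin r) ℂ ⧸ 𝔭))) with hθ
  have hmu : ∀ σ ∈ ptsF ψ 𝔭 Y, v (ψ θ - σ θ) = mu v ψ σ := fun σ hσ => by
    rw [Valuation.map_sub_swap]
    exact H.mu_eq σ ((P.mem_ptsF σ).mp hσ)
  have huniq : ∀ σ ∈ ptsF ψ 𝔭 Y, ∀ τ ∈ ptsF ψ 𝔭 Y, mu v ψ σ < 1 → mu v ψ τ < 1 → σ = τ := by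
    intro σ hσ τ hτ hσ1 hτ1
    by_contra hne
    have hlt := valuation_eval_derivative_prod_lt_one (v := v) (ptsF ψ 𝔭 Y) (fun σ => σ θ) (ψ θ)
      (fun σ hσ => (hmu σ hσ).trans_le (H.mu_le_one hψ.isCurve hc hσ)) hσ hτ hne
      (by rwa [hmu σ hσ]) (by rwa [hmu τ hτ])
    have heq : (Polynomial.derivative
        (∏ σ ∈ ptsF ψ 𝔭 Y, (Polynomial.X - Polynomial.C (σ θ)))).eval (ψ θ)
        = ψ ((Polynomial.derivative h).eval₂ (aeval Y : MvPolynomial _ ℂ →ₐ[ℂ] _).toRingHom θ) := by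
      rw [← hmap, Polynomial.derivative_map, Polynomial.eval_map]
      exact (Polynomial.hom_eval₂ _ _ ψ.toRingHom _).symm
    rw [heq, hψ.lt_one_iff] at hlt
    have hpos : 0 < h.natDegree := hdeg ▸ pdeg_pos hc
    have hd0 : Polynomial.derivative h ≠ 0 := fun h0 =>
      hpos.ne' (Polynomial.derivative_eq_zero.mp h0)
    exact absurd (Polynomial.natDegree_le_of_dvd (hdvd _ hlt) hd0)
      (not_le.mpr (Polynomial.natDegree_derivative_lt hpos.ne'))
  obtain ⟨g, hg, hπg⟩ := hψ.exists_mem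
  by_cases hex : ∃ σ ∈ ptsF ψ 𝔭 Y, mu v ψ σ < 1
  · obtain ⟨σ, hσ, hσ1⟩ := hex
    rw [fiberDist, Finset.prod_eq_single_of_mem σ hσ]
    · exact hπg.trans (H.valuation_le_mu hψ.isCurve hc hσ hg)
    · intro τ hτ hne
      by_contra hτ1
      exact hne (huniq τ hτ σ hσ (lt_of_le_of_ne (H.mu_le_one hψ.isCurve hc hτ) hτ1) hσ1)
  · push Not at hex
    refine hψ.lt_one.le.trans ?_
    rw [fiberDist]
    exact Finset.one_le_prod' hex
end

section
variable {r : ℕ}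

/-- If `pdeg c 𝔭` is at most `Λ` times the volume of `c`, some element of bounded degree of `𝔭`
leaves `𝔭` after a bounded number of differentiations. -/
def TangencyBound (D : Derivation ℂ (MvPolynomial (Fin r) ℂ) (MvPolynomial (Fin r) ℂ)) (N : ℕ) :
    Prop :=
  ∀ Λ : ℕ, ∃ C k : ℕ, ∀ 𝔭 : Ideal (MvPolynomial (Fin r) ℂ), 𝔭.IsPrime → 𝔭 ≠ ⊥ → NoStable D 𝔭 →
    tdim (MvPolynomial (Fin r) ℂ ⧸ 𝔭) = N → ∀ c : Fin r → ℕ, (∀ i, 1 ≤ c i) →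
    pdeg c 𝔭 ≤ Λ * ∏ i, c i → ∃ Q ∈ 𝔭, Q ∈ box c ^ C ∧ ∃ j ≤ k, D^[j] Q ∉ 𝔭

/-- Elements of bounded degree of `𝔭` stay in `𝔭` under a bounded number of differentiations. -/
def IsFlat (D : Derivation ℂ (MvPolynomial (Fin r) ℂ) (MvPolynomial (Fin r) ℂ))
    (𝔭 : Ideal (MvPolynomial (Fin r) ℂ)) (c : Fin r → ℕ) (C k : ℕ) : Prop :=
  ∀ Q ∈ 𝔭, Q ∈ box c ^ C → ∀ j ≤ k, D^[j] Q ∈ 𝔭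

theorem iterate_mem_box_pow {D : Derivation ℂ (MvPolynomial (Fin r) ℂ) (MvPolynomial (Fin r) ℂ)}
    {c₀ : ℕ} {c : Fin r → ℕ} (hD : ∀ e, ∀ Q ∈ box c ^ e, D Q ∈ box c ^ (e + c₀)) {e : ℕ}
    {Q : MvPolynomial (Fin r) ℂ} (hQ : Q ∈ box c ^ e) (j : ℕ) : D^[j] Q ∈ box c ^ (e + j * c₀) := by
  induction j with
  | zero => simpa using hQ
  | succ j ih =>
    rw [Function.iterate_succ_apply', Nat.succ_mul, ← Nat.add_assoc]
    exact hD _ _ ih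

theorem eq_bot_of_le_tdim {𝔮 : Ideal (MvPolynomial (Fin r) ℂ)} [𝔮.IsPrime]
    (h : r ≤ tdim (MvPolynomial (Fin r) ℂ ⧸ 𝔮)) : 𝔮 = ⊥ := by
  by_contra h0
  have h1 := tdim_quotient_lt (bot_lt_iff_ne_bot.mpr h0)
  have h2 := tdim_quotient_le (⊥ : Ideal (MvPolynomial (Fin r) ℂ))
  omega

/-- A box can be shrunk until its volume does not exceed the degree. -/
theorem exists_le_prod_le_pdeg {𝔭 : Ideal (MvPolynomial (Fin r) ℂ)} [𝔭.IsPrime] {Λ : ℕ} (hΛ : 2 ≤ Λ)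
    {c : Fin r → ℕ} (hc : ∀ i, 1 ≤ c i) (h : pdeg c 𝔭 ≤ Λ * ∏ i, c i) :
    ∃ c' ≤ c, (∀ i, 1 ≤ c' i) ∧ pdeg c' 𝔭 ≤ Λ * ∏ i, c' i ∧ ∏ i, c' i ≤ pdeg c' 𝔭 := by
  induction hs : ∑ i, c i using Nat.strong_induction_on generalizing c with
  | _ S ih =>
    by_cases hle : ∏ i, c i ≤ pdeg c 𝔭
    · exact ⟨c, le_rfl, hc, h, hle⟩
    have hex : ∃ i, 2 ≤ c i := by
      by_contra! hall
      have h1 : ∏ i, c i = 1 := Finset.prod_eq_one fun i _ => by have := hall i; have := hc i; omega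
      exact hle (h1 ▸ pdeg_pos hc)
    obtain ⟨i, hi⟩ := hex
    set c' := Function.update c i (c i - 1) with hc'
    have hle' : c' ≤ c := by
      rw [hc', update_le_iff]
      exact ⟨by omega, fun j _ => le_rfl⟩
    have hc'1 : ∀ j, 1 ≤ c' j := by
      intro j
      by_cases hj : j = i
      · subst hj; simp [hc']; omega
      · simpa [hc', hj] using hc j
    have hprod : ∏ j, c j ≤ 2 * ∏ j, c' j := by
      rw [hc', Finset.prod_update_of_mem (Finset.mem_univ i),
          ← Finset.mul_prod_erase _ _ (Finset.mem_univ i),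
        Finset.sdiff_singleton_eq_erase, ← mul_assoc]
      exact Nat.mul_le_mul_right _ (by omega)
    have hsum : ∑ j, c' j < S := by
      rw [← hs]
      refine Finset.sum_lt_sum (fun j _ => hle' j) ⟨i, Finset.mem_univ i, ?_⟩
      simp [hc']; omega
    obtain ⟨c'', h1, h2, h3, h4⟩ := ih _ hsum hc'1 (by
      have hm : pdeg c' 𝔭 ≤ pdeg c 𝔭 := pdeg_mono hc'1 hle'
      push Not at hle
      calc pdeg c' 𝔭 ≤ ∏ j, c j := hm.trans hle.le
        _ ≤ 2 * ∏ j, c' j := hprod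
        _ ≤ _ := Nat.mul_le_mul_right _ hΛ) rfl
    exact ⟨c'', h1.trans hle', h2, h3, h4⟩

variable {Ω Γ : Type} [Field Ω] [IsAlgClosed Ω] [Algebra ℂ Ω] [LinearOrderedCommGroupWithZero Γ]
  {D : Derivation ℂ (MvPolynomial (Fin r) ℂ) (MvPolynomial (Fin r) ℂ)}
  {𝔭 : Ideal (MvPolynomial (Fin r) ℂ)} {v : Valuation Ω Γ}
  {ψ : MvPolynomial (Fin r) ℂ →ₐ[ℂ] Ω} {π : Γ}

/-- Generic lower bound for the distances of `ψ` from the subvarieties of dimension `N` and of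
bounded degree through the generic point of `𝔭`. -/
def DistBound (v : Valuation Ω Γ) (ψ : MvPolynomial (Fin r) ℂ →ₐ[ℂ] Ω) (π : Γ)
    (𝔭 : Ideal (MvPolynomial (Fin r) ℂ)) (c : Fin r → ℕ) (k N Λ : ℕ) : Prop :=
  ∀ 𝔮 : Ideal (MvPolynomial (Fin r) ℂ), 𝔮.IsPrime → 𝔮 ≤ 𝔭 →
    tdim (MvPolynomial (Fin r) ℂ ⧸ 𝔮) = N → pdeg c 𝔮 ≤ Λ * ∏ i, c i →
    ∀ᶠ l in genFilter (r + 1), π ^ (k * pdeg c 𝔮) ≤ fiberDist v ψ c l 𝔮 ^ (2 * Λ * ∏ i, c i)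

theorem prod_map_pow_le {ι : Type} (s : Multiset ι) (d : ι → ℕ) (W : ι → Γ) (a : Γ) (m : ℕ)
    (h : ∀ i ∈ s, a ^ d i ≤ W i ^ m) : a ^ (s.map d).sum ≤ (s.map W).prod ^ m := by
  induction s using Multiset.induction_on with
  | empty => simp
  | cons i s ih =>
    rw [Multiset.map_cons, Multiset.map_cons, Multiset.sum_cons, Multiset.prod_cons, pow_add,
        mul_pow]
    exact mul_le_mul' (h i (Multiset.mem_cons_self i s))
      (ih fun j hj => h j (Multiset.mem_cons_of_mem hj))

theorem eventually_gen_minimalPrimes {φ : MvPolynomial (Fin r) ℂ →ₐ[ℂ] Ω} (hφ : IsCurve v φ)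
    {c : Fin r → ℕ} (hc : ∀ i, 1 ≤ c i) (I : Ideal (MvPolynomial (Fin r) ℂ)) :
    ∀ᶠ l in genFilter (r + 1), ∀ 𝔮 ∈ I.minimalPrimes, Gen v φ c 𝔮 l := by
  rw [Filter.eventually_all_finite (Ideal.finite_minimalPrimes_of_isNoetherianRing _ I)]
  intro 𝔮 h𝔮
  have := h𝔮.1.1
  exact eventually_gen hφ hc 𝔮

/-- Passage from dimension `N` to dimension `N + 1` in `DistBound`, for one prime ideal. -/
theorem IsFlowCurve.le_fiberDist_pow_of_distBound (hψ : IsFlowCurve D 𝔭 v ψ π) {c : Fin r → ℕ}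
    (hc : ∀ i, 1 ≤ c i) {k : ℕ} (hk : 1 ≤ k) {N Λ e : ℕ} (hΛ : 1 ≤ Λ) (he : 1 ≤ e)
    {𝔮 : Ideal (MvPolynomial (Fin r) ℂ)} [𝔮.IsPrime]
    (hN : tdim (MvPolynomial (Fin r) ℂ ⧸ 𝔮) = N + 1) (hdeg : pdeg c 𝔮 ≤ Λ * ∏ i, c i)
    {t : MvPolynomial (Fin r) ℂ} (ht : t ∉ 𝔮) (hte : t ∈ box c ^ e) (hvt : v (ψ t) ≤ π ^ k)
    (hX : DistBound v ψ π 𝔭 c k N (e * Λ)) :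
    ∀ᶠ l in genFilter (r + 1), π ^ (k * pdeg c 𝔮) ≤ fiberDist v ψ c l 𝔮 ^ (2 * Λ * ∏ i, c i) := by
  set I := 𝔮 ⊔ Ideal.span {t} with hI
  have hXI : ∀ᶠ l in genFilter (r + 1), ∀ 𝔮' ∈ I.minimalPrimes, 𝔮' ≤ 𝔭 →
      tdim (MvPolynomial (Fin r) ℂ ⧸ 𝔮') = N → pdeg c 𝔮' ≤ e * Λ * ∏ i, c i →
      π ^ (k * pdeg c 𝔮') ≤ fiberDist v ψ c l 𝔮' ^ (2 * (e * Λ) * ∏ i, c i) := by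
    rw [Filter.eventually_all_finite (Ideal.finite_minimalPrimes_of_isNoetherianRing _ I)]
    intro 𝔮' h𝔮'
    by_cases hcond : 𝔮' ≤ 𝔭 ∧ tdim (MvPolynomial (Fin r) ℂ ⧸ 𝔮') = N ∧ pdeg c 𝔮' ≤ e * Λ * ∏ i, c i
    · filter_upwards [hX 𝔮' h𝔮'.1.1 hcond.1 hcond.2.1 hcond.2.2] with l hl
      exact fun _ _ _ => hl
    · exact Filter.Eventually.of_forall fun l h1 h2 h3 => absurd ⟨h1, h2, h3⟩ hcond
  filter_upwards [hXI, eventually_gen hψ.isCurve hc 𝔮,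
    eventually_gen_minimalPrimes hψ.isCurve hc I] with l hl hgen hgenI
  obtain ⟨s, hs, hsdeg, hsprod⟩ := exists_components hψ.isCurve hc ht hte hgen hgenI
  have hvol : 0 < ∏ i, c i := Finset.prod_pos fun i _ => hc i
  have hlow : ∀ 𝔮' ∈ s, (π ^ k) ^ pdeg c 𝔮' ≤ fiberDist v ψ c l 𝔮' ^ (2 * (e * Λ) * ∏ i, c i) := by
    intro 𝔮' h𝔮'
    have hmin := (hs 𝔮' h𝔮').1
    have := hmin.1.1
    rw [← pow_mul]
    by_cases hle : 𝔮' ≤ 𝔭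
    · refine hl 𝔮' hmin hle ?_ ?_
      · have := (hs 𝔮' h𝔮').2
        omega
      · calc pdeg c 𝔮' ≤ (s.map (pdeg c)).sum :=
              Multiset.single_le_sum (fun _ _ => Nat.zero_le _) _ (Multiset.mem_map_of_mem _ h𝔮')
          _ ≤ e * pdeg c 𝔮 := hsdeg
          _ ≤ e * (Λ * ∏ i, c i) := Nat.mul_le_mul_left _ hdeg
          _ = _ := by ring
    · exact (pow_le_one' hψ.lt_one.le _).trans
        (one_le_pow_of_one_le' (hψ.one_le_fiberDist hc (hgenI 𝔮' hmin) hle) _)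
  have hlow2 := prod_map_pow_le s (pdeg c) (fiberDist v ψ c l) (π ^ k) _ hlow
  set M := ∏ σ ∈ ptsF ψ 𝔮 (Yfam c l (tdim (MvPolynomial (Fin r) ℂ ⧸ 𝔮))), max (mu v ψ σ) (v (ψ t))
    with hM
  have hM1 : (π ^ (k * pdeg c 𝔮)) ^ e ≤ (M ^ (2 * Λ * ∏ i, c i)) ^ e := by
    calc (π ^ (k * pdeg c 𝔮)) ^ e = (π ^ k) ^ (e * pdeg c 𝔮) := by
          rw [← pow_mul, ← pow_mul]; congr 1; ring
      _ ≤ (π ^ k) ^ (s.map (pdeg c)).sum :=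
          pow_le_pow_right_of_le_one' (pow_le_one' hψ.lt_one.le _) hsdeg
      _ ≤ _ := hlow2
      _ ≤ M ^ (2 * (e * Λ) * ∏ i, c i) := pow_le_pow_left' hsprod _
      _ = _ := by rw [← pow_mul]; congr 1; ring
  have hM2 : π ^ (k * pdeg c 𝔮) ≤ M ^ (2 * Λ * ∏ i, c i) :=
    (pow_le_pow_iff_left₀ zero_le zero_le (by omega)).mp hM1
  suffices hall : ∀ σ ∈ ptsF ψ 𝔮 (Yfam c l (tdim (MvPolynomial (Fin r) ℂ ⧸ 𝔮))),
      v (ψ t) ≤ mu v ψ σ by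
    have : M = fiberDist v ψ c l 𝔮 := Finset.prod_congr rfl fun σ hσ => max_eq_left (hall σ hσ)
    rwa [this] at hM2
  intro σ hσ
  by_contra! hlt
  have hMk : M ≤ π ^ k := by
    rw [hM, ← Finset.mul_prod_erase _ _ hσ, max_eq_right hlt.le]
    refine (mul_le_of_le_one_right' (Finset.prod_le_one' fun τ hτ => ?_)).trans hvt
    exact max_le (hgen.mu_le_one hψ.isCurve hc (Finset.mem_of_mem_erase hτ)) (hψ.isCurve.le_one t)
  have h3 : π ^ (k * pdeg c 𝔮) ≤ π ^ (k * (2 * Λ * ∏ i, c i)) := by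
    refine hM2.trans ((pow_le_pow_left' hMk _).trans_eq (pow_mul _ _ _).symm)
  have h4 := (pow_le_pow_iff_right_of_lt_one₀ hψ.pos hψ.lt_one).mp h3
  have h5 := Nat.le_of_mul_le_mul_left h4 hk
  have h6 : 0 < Λ * ∏ i, c i := Nat.mul_pos hΛ hvol
  rw [mul_assoc] at h5
  omega
end

section
variable {r : ℕ} {D : Derivation ℂ (MvPolynomial (Fin r) ℂ) (MvPolynomial (Fin r) ℂ)}

/-- A flat prime ideal of bounded degree and of dimension at most `N` cannot satisfy `DistBound` in
dimension `N`. -/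
def FlatObstruction (D : Derivation ℂ (MvPolynomial (Fin r) ℂ) (MvPolynomial (Fin r) ℂ))
    (Λ₀ N : ℕ) : Prop :=
  ∃ Λ C k₀ : ℕ, 1 ≤ Λ ∧ ∀ 𝔭 : Ideal (MvPolynomial (Fin r) ℂ), 𝔭.IsPrime → 𝔭 ≠ ⊥ → NoStable D 𝔭 →
    tdim (MvPolynomial (Fin r) ℂ ⧸ 𝔭) ≤ N → ∀ c : Fin r → ℕ, (∀ i, 1 ≤ c i) →
    pdeg c 𝔭 ≤ Λ₀ * ∏ i, c i → ∀ (Ω Γ : Type) [Field Ω] [IsAlgClosed Ω] [Algebra ℂ Ω]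
      [LinearOrderedCommGroupWithZero Γ] (v : Valuation Ω Γ) (ψ : MvPolynomial (Fin r) ℂ →ₐ[ℂ] Ω)
      (π : Γ), IsFlowCurve D 𝔭 v ψ π → ∀ k ≥ k₀, IsFlat D 𝔭 c C k → ¬ DistBound v ψ π 𝔭 c k N Λ

theorem box_pow_le (c : Fin r → ℕ) {a b : ℕ} (h : a ≤ b) : box c ^ a ≤ box c ^ b :=
  Submodule.pow_le_pow_right_of_one_mem (one_mem_box c) h

theorem box_pow_mono {c c' : Fin r → ℕ} (h : c' ≤ c) (e : ℕ) : box c' ^ e ≤ box c ^ e := by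
  rw [box_pow, box_pow]
  exact box_mono fun i => Nat.mul_le_mul_left e (h i)

theorem tdim_quotient_bot : tdim (MvPolynomial (Fin r) ℂ ⧸ (⊥ : Ideal (MvPolynomial (Fin r) ℂ)))
    = r :=
  (tdim_eq_of_algEquiv (AlgEquiv.quotientBot ℂ (MvPolynomial (Fin r) ℂ))).trans
      (tdim_mvPolynomial r)

theorem flatObstruction_top (hr : 1 ≤ r) (Λ₀ : ℕ) : FlatObstruction D Λ₀ r := by
  refine ⟨(2 * r) ^ r, 0, 0, Nat.pos_of_ne_zero (by positivity), ?_⟩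
  intro 𝔭 h𝔭 h0 _ _ c hc _ Ω Γ _ _ _ _ v ψ π hψ k _ _ hX
  have hev := hX ⊥ Ideal.isPrime_bot bot_le tdim_quotient_bot
    (pdeg_le_of_tdim_eq hc hr tdim_quotient_bot)
  obtain ⟨l, hl, hgen⟩ := (hev.and (eventually_gen hψ.isCurve hc ⊥)).exists
  have hvol : 0 < ∏ i, c i := Finset.prod_pos fun i _ => hc i
  rw [hgen.fiberDist_bot hψ.isCurve hc, zero_pow (by positivity)] at hl
  exact absurd hl (not_le.mpr (pow_pos hψ.pos _))

theorem FlatObstruction.step {c₀ Λ₀ N : ℕ}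
    (hD : ∀ c : Fin r → ℕ, (∀ i, 1 ≤ c i) → ∀ e, ∀ Q ∈ box c ^ e, D Q ∈ box c ^ (e + c₀))
    (hT : TangencyBound D (N + 1)) (hS : FlatObstruction D Λ₀ (N + 1)) :
    FlatObstruction D Λ₀ N := by
  obtain ⟨Λ, C₁, k₁, hΛ, hS⟩ := hS
  obtain ⟨C₂, k₂, hT⟩ := hT Λ
  set e := max ((Λ₀ + 1) * 2 ^ r) (C₂ + k₂ * c₀) + 1 with he
  refine ⟨e * Λ, max C₁ e, max (max k₁ k₂) 1, Nat.mul_pos (by omega) hΛ, ?_⟩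
  intro 𝔭 h𝔭 h0 hns hN c hc hdeg Ω Γ _ _ _ _ v ψ π hψ k hk hflat hX
  refine hS 𝔭 h𝔭 h0 hns (hN.trans (Nat.le_succ N)) c hc hdeg Ω Γ v ψ π hψ k (by omega)
    (fun Q hQ hQC => hflat Q hQ (box_pow_le c (le_max_left _ _) hQC)) ?_
  intro 𝔮 h𝔮 hle hN𝔮 hdeg𝔮
  obtain ⟨t, ht𝔭, ht𝔮, hte⟩ : ∃ t ∈ 𝔭, t ∉ 𝔮 ∧ t ∈ box c ^ e := by
    by_cases hbot : 𝔮 = ⊥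
    · obtain ⟨t, ht, ht0, htb⟩ := exists_mem_box_pow_of_pdeg_le (Λ := Λ₀ + 1) hc h0 (by omega)
        (hdeg.trans (Nat.mul_le_mul_right _ (Nat.le_succ _)))
      exact ⟨t, ht, by rw [hbot]; exact ht0,
        box_pow_le c ((le_max_left _ _).trans (Nat.le_succ _)) htb⟩
    · obtain ⟨Q, hQ, hQC, j, hj, hDQ⟩ := hT 𝔮 h𝔮 hbot
        (fun 𝔯 h𝔯 hle' => hns 𝔯 h𝔯 (hle'.trans hle)) hN𝔮 c hc hdeg𝔮
      refine ⟨D^[j] Q, hflat Q (hle hQ) (box_pow_le c ?_ hQC) j (by omega), hDQ,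
        box_pow_le c ?_ (iterate_mem_box_pow (hD c hc) hQC j)⟩
      · omega
      · have := Nat.mul_le_mul_right c₀ hj
        omega
  refine hψ.le_fiberDist_pow_of_distBound hc (by omega) hΛ (by omega) hN𝔮 hdeg𝔮 ht𝔮 hte
    (hψ.le_pow t k fun j hj => ?_) hX
  exact hflat t ht𝔭 (box_pow_le c (le_max_right _ _) hte) j hj.le

theorem FlatObstruction.of_tangencyBound {c₀ : ℕ} (hr : 1 ≤ r)
    (hD : ∀ c : Fin r → ℕ, (∀ i, 1 ≤ c i) → ∀ e, ∀ Q ∈ box c ^ e, D Q ∈ box c ^ (e + c₀))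
    (Λ₀ d : ℕ) : ∀ N, N + d = r → (∀ N' > N, TangencyBound D N') → FlatObstruction D Λ₀ N := by
  induction d with
  | zero =>
    rintro N rfl _
    exact flatObstruction_top hr Λ₀
  | succ d ih =>
    intro N hN hT
    exact FlatObstruction.step hD (hT _ (Nat.lt_succ_self N))
      (ih (N + 1) (by omega) fun N' hN' => hT N' (by omega))

theorem FlatObstruction.tangencyBound {N : ℕ} (hS : ∀ Λ₀, FlatObstruction D Λ₀ N) :
    TangencyBound D N := by
  intro Λ₀
  obtain ⟨Λ, C, k₀, hΛ, hS⟩ := hS (Λ₀ + 2)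
  refine ⟨C, max k₀ (2 * Λ), ?_⟩
  intro 𝔭 h𝔭 h0 hns hN c hc hdeg
  obtain ⟨c', hle, hc', hdeg', hvol⟩ := exists_le_prod_le_pdeg (Λ := Λ₀ + 2) (by omega) hc
    (hdeg.trans (Nat.mul_le_mul_right _ (by omega)))
  by_contra! hcon
  obtain ⟨Ω, i1, i2, i3, Γ, i4, v, ψ, π, hψ⟩ := exists_isFlowCurve D 𝔭 h0 hns
  refine hS 𝔭 h𝔭 h0 hns hN.le c' hc' hdeg' Ω Γ v ψ π hψ _ (le_max_left _ _)
    (fun Q hQ hQC => hcon Q hQ (box_pow_mono hle C hQC)) ?_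
  intro 𝔮 h𝔮 hle𝔮 hN𝔮 _
  obtain rfl : 𝔮 = 𝔭 := by
    by_contra hne
    have := tdim_quotient_lt (lt_of_le_of_ne hle𝔮 hne)
    omega
  filter_upwards [eventually_gen hψ.isCurve hc' 𝔮] with l hl
  calc π ^ (max k₀ (2 * Λ) * pdeg c' 𝔮) ≤ π ^ (2 * Λ * ∏ i, c' i) :=
        pow_le_pow_right_of_le_one' hψ.lt_one.le (Nat.mul_le_mul (le_max_right _ _) hvol)
    _ ≤ _ := pow_le_pow_left' (hψ.le_fiberDist hc' hl) _

theorem tangencyBound {c₀ : ℕ} (hr : 1 ≤ r)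
    (hD : ∀ c : Fin r → ℕ, (∀ i, 1 ≤ c i) → ∀ e, ∀ Q ∈ box c ^ e, D Q ∈ box c ^ (e + c₀)) (N : ℕ) :
    TangencyBound D N := by
  suffices h : ∀ d N, r ≤ N + d → TangencyBound D N from h r N (Nat.le_add_left r N)
  intro d
  induction d with
  | zero =>
    intro N hN Λ
    refine ⟨0, 0, fun 𝔭 h𝔭 h0 _ hN' => absurd (eq_bot_of_le_tdim ?_) h0⟩
    omega
  | succ d ih =>
    intro N hN
    rcases Nat.lt_or_ge (N + d) r with h | h
    · exact FlatObstruction.tangencyBound fun Λ₀ =>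
        FlatObstruction.of_tangencyBound hr hD Λ₀ (d + 1) N (by omega) fun N' hN' =>
            ih N' (by omega)
    · exact ih N h
end

section
variable {r : ℕ} {D : Derivation ℂ (MvPolynomial (Fin r) ℂ) (MvPolynomial (Fin r) ℂ)}
  {Ω Γ : Type} [Field Ω] [IsAlgClosed Ω] [Algebra ℂ Ω] [LinearOrderedCommGroupWithZero Γ]
  {v : Valuation Ω Γ} {φ : MvPolynomial (Fin r) ℂ →ₐ[ℂ] Ω} {π : Γ}

theorem exists_algebraMap_eq_of_tdim_eq_zero {B : Type} [CommRing B] [IsDomain B] [Algebra ℂ B]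
    [Algebra.FiniteType ℂ B] (h : tdim B = 0) (x : B) : ∃ a : ℂ, algebraMap ℂ B a = x := by
  have h0 : Algebra.trdeg ℂ B = 0 := by rw [← coe_tdim, h, Nat.cast_zero]
  have halg : Algebra.IsAlgebraic ℂ B := trdeg_eq_zero_iff.mp h0
  exact (IsAlgClosed.algebraMap_bijective_of_isIntegral (k := ℂ) (K := B)).2 x

/-- The hypotheses on an integral curve `φ` satisfying the differential system of `D`. -/
structure IsSolution (D : Derivation ℂ (MvPolynomial (Fin r) ℂ) (MvPolynomial (Fin r) ℂ))
    (v : Valuation Ω Γ) (φ : MvPolynomial (Fin r) ℂ →ₐ[ℂ] Ω) (π : Γ) (K₀ : ℕ) : Prop where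
  isCurve : IsCurve v φ
  lt_one : π < 1
  map_derivation_le (Q : MvPolynomial (Fin r) ℂ) : v (φ (D Q)) * π ≤ v (φ Q)
  exists_le_sub : ∃ i, ∀ a : ℂ, π ≤ v (φ (X i - C a))
  exists_mem_of_stable (𝔭 : Ideal (MvPolynomial (Fin r) ℂ)) (hp : 𝔭.IsPrime) (h0 : 𝔭 ≠ ⊥)
    (hD : ∀ x ∈ 𝔭, D x ∈ 𝔭) : ∃ P ∈ 𝔭, π ^ K₀ ≤ v (φ P)

variable {K₀ : ℕ}

theorem IsSolution.map_iterate_le (hφ : IsSolution D v φ π K₀) (Q : MvPolynomial (Fin r) ℂ)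
    (j : ℕ) :
    v (φ (D^[j] Q)) * π ^ j ≤ v (φ Q) := by
  induction j generalizing Q with
  | zero => simp
  | succ j ih =>
    rw [Function.iterate_succ_apply, pow_succ, ← mul_assoc]
    exact (mul_le_mul' (ih (D Q)) le_rfl).trans (hφ.map_derivation_le Q)

theorem IsSolution.noStable (hφ : IsSolution D v φ π K₀) {𝔭 : Ideal (MvPolynomial (Fin r) ℂ)}
    (h : ∀ g ∈ 𝔭, v (φ g) < π ^ K₀) : NoStable D 𝔭 := by
  intro 𝔮 h𝔮 hle h0
  by_contra! hst
  obtain ⟨P, hP, hPv⟩ := hφ.exists_mem_of_stable 𝔮 h𝔮 h0 hst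
  exact absurd (h P (hle hP)) (not_lt.mpr hPv)

theorem pow_pdeg_le_prod {C e d : ℕ} {c : Fin r → ℕ} {l : ℕ → ℂ}
    {s : Multiset (Ideal (MvPolynomial (Fin r) ℂ))} (hπ : π ≤ 1) (hd : (s.map (pdeg c)).sum ≤ e * d)
    (h : ∀ 𝔮 ∈ s, π ^ (C * pdeg c 𝔮) ≤ fiberDist v φ c l 𝔮) :
    π ^ (C * (e * d)) ≤ (s.map (fiberDist v φ c l)).prod := by
  have := prod_map_pow_le s (pdeg c) (fiberDist v φ c l) (π ^ C) 1 fun 𝔮 h𝔮 => by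
    rw [← pow_mul, pow_one]
    exact h 𝔮 h𝔮
  rw [pow_one, ← pow_mul] at this
  exact (pow_le_pow_right_of_le_one' hπ (Nat.mul_le_mul_left C hd)).trans this

theorem IsSolution.exists_pow_le_fiberDist (hφ : IsSolution D v φ π K₀) {c₀ : ℕ} (hr : 1 ≤ r)
    (hD : ∀ c : Fin r → ℕ, (∀ i, 1 ≤ c i) → ∀ e, ∀ Q ∈ box c ^ e, D Q ∈ box c ^ (e + c₀))
    (N Λ : ℕ) : ∃ C : ℕ, ∀ 𝔭 : Ideal (MvPolynomial (Fin r) ℂ), 𝔭.IsPrime → 𝔭 ≠ ⊥ →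
      tdim (MvPolynomial (Fin r) ℂ ⧸ 𝔭) = N → ∀ c : Fin r → ℕ, (∀ i, 1 ≤ c i) →
      pdeg c 𝔭 ≤ Λ * ∏ i, c i →
      ∀ᶠ l in genFilter (r + 1), π ^ (C * pdeg c 𝔭) ≤ fiberDist v φ c l 𝔭 := by
  induction N generalizing Λ with
  | zero =>
    refine ⟨1, fun 𝔭 h𝔭 _ hN c hc _ => ?_⟩
    obtain ⟨i, hi⟩ := hφ.exists_le_sub
    obtain ⟨a, ha⟩ := exists_algebraMap_eq_of_tdim_eq_zero hN (Ideal.Quotient.mk 𝔭 (X i))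
    have hmem : X i - C a ∈ 𝔭 := by
      rw [← Ideal.Quotient.eq_zero_iff_mem, map_sub, ← ha, sub_eq_zero]
      rfl
    filter_upwards [eventually_gen hφ.isCurve hc 𝔭] with l hl
    rw [one_mul]
    exact hl.pow_pdeg_le_fiberDist hφ.isCurve hc hmem (hi a)
  | succ N ih =>
    obtain ⟨C₁, k, hT⟩ := tangencyBound hr hD (N + 1) Λ
    set e := C₁ + k * c₀ with he
    obtain ⟨C, ih⟩ := ih (e * Λ)
    refine ⟨K₀ + C * e + k, fun 𝔭 h𝔭 h0 hN c hc hdeg => ?_⟩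
    by_cases hex : ∃ g ∈ 𝔭, π ^ K₀ ≤ v (φ g)
    · obtain ⟨g, hg, hgv⟩ := hex
      filter_upwards [eventually_gen hφ.isCurve hc 𝔭] with l hl
      refine le_trans ?_ (hl.pow_pdeg_le_fiberDist hφ.isCurve hc hg hgv)
      rw [← pow_mul]
      exact pow_le_pow_right_of_le_one' hφ.lt_one.le (Nat.mul_le_mul_right _ (by omega))
    push Not at hex
    obtain ⟨Q, hQ, hQC, j, hj, hDQ⟩ := hT 𝔭 h𝔭 h0 (hφ.noStable hex) hN c hc hdeg
    set t := D^[j] Q with ht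
    have hte : t ∈ box c ^ e :=
      box_pow_le c (Nat.add_le_add_left (Nat.mul_le_mul_right c₀ hj) C₁)
        (iterate_mem_box_pow (hD c hc) hQC j)
    have htv : v (φ t) * π ^ k ≤ v (φ Q) :=
      (mul_le_mul' le_rfl (pow_le_pow_right_of_le_one' hφ.lt_one.le hj)).trans
        (hφ.map_iterate_le Q j)
    have hev : ∀ᶠ l in genFilter (r + 1), ∀ 𝔮 ∈ (𝔭 ⊔ Ideal.span {t}).minimalPrimes,
        tdim (MvPolynomial (Fin r) ℂ ⧸ 𝔮) = N → pdeg c 𝔮 ≤ e * Λ * ∏ i, c i →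
        π ^ (C * pdeg c 𝔮) ≤ fiberDist v φ c l 𝔮 := by
      rw [Filter.eventually_all_finite (Ideal.finite_minimalPrimes_of_isNoetherianRing _ _)]
      intro 𝔮 h𝔮
      by_cases hcond : tdim (MvPolynomial (Fin r) ℂ ⧸ 𝔮) = N ∧ pdeg c 𝔮 ≤ e * Λ * ∏ i, c i
      · have hne : 𝔮 ≠ ⊥ := by
          rintro rfl
          exact h0 (le_bot_iff.mp (le_sup_left.trans h𝔮.1.2))
        filter_upwards [ih 𝔮 h𝔮.1.1 hne hcond.1 c hc hcond.2] with l hl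
        exact fun _ _ => hl
      · exact Filter.Eventually.of_forall fun l h1 h2 => absurd ⟨h1, h2⟩ hcond
    filter_upwards [hev, eventually_gen hφ.isCurve hc 𝔭,
      eventually_gen_minimalPrimes hφ.isCurve hc (𝔭 ⊔ Ideal.span {t})] with l hl hgen hgenI
    obtain ⟨s, hs, hsdeg, hsprod⟩ := exists_components hφ.isCurve hc hDQ hte hgen hgenI
    have hlow := pow_pdeg_le_prod (C := C) hφ.lt_one.le hsdeg fun 𝔮 h𝔮 => by
      refine hl 𝔮 (hs 𝔮 h𝔮).1 ?_ ?_
      · have := (hs 𝔮 h𝔮).2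
        omega
      · calc pdeg c 𝔮 ≤ (s.map (pdeg c)).sum :=
              Multiset.single_le_sum (fun _ _ => Nat.zero_le _) _ (Multiset.mem_map_of_mem _ h𝔮)
          _ ≤ e * pdeg c 𝔭 := hsdeg
          _ ≤ e * (Λ * ∏ i, c i) := Nat.mul_le_mul_left _ hdeg
          _ = _ := by ring
    calc π ^ ((K₀ + C * e + k) * pdeg c 𝔭)
        ≤ π ^ (C * (e * pdeg c 𝔭) + k * pdeg c 𝔭) := by
          refine pow_le_pow_right_of_le_one' hφ.lt_one.le ?_
          rw [← mul_assoc, ← add_mul]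
          exact Nat.mul_le_mul_right _ (by omega)
      _ = π ^ (C * (e * pdeg c 𝔭)) * (π ^ k) ^ pdeg c 𝔭 := by rw [pow_add, pow_mul π k]
      _ ≤ (∏ σ ∈ ptsF φ 𝔭 (Yfam c l (tdim (MvPolynomial (Fin r) ℂ ⧸ 𝔭))),
            max (mu v φ σ) (v (φ t))) * (π ^ k) ^ pdeg c 𝔭 :=
          mul_le_mul' (hlow.trans hsprod) le_rfl
      _ = ∏ σ ∈ ptsF φ 𝔭 (Yfam c l (tdim (MvPolynomial (Fin r) ℂ ⧸ 𝔭))),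
            max (mu v φ σ) (v (φ t)) * π ^ k := by
          rw [← (hgen.package hφ.isCurve hc).card_ptsF, ← Finset.prod_const,
              Finset.prod_mul_distrib]
      _ ≤ fiberDist v φ c l 𝔭 := by
          refine Finset.prod_le_prod' fun σ hσ => ?_
          rcases max_cases (mu v φ σ) (v (φ t)) with ⟨h, -⟩ | ⟨h, -⟩ <;> rw [h]
          · exact mul_le_of_le_one_right' (pow_le_one' hφ.lt_one.le _)
          · exact htv.trans (hgen.valuation_le_mu hφ.isCurve hc hσ hQ)

/-- Multiplicity estimate for an abstract integral curve satisfying the differential system. -/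
theorem IsSolution.exists_pow_le (hφ : IsSolution D v φ π K₀) {c₀ : ℕ} (hr : 1 ≤ r)
    (hD : ∀ c : Fin r → ℕ, (∀ i, 1 ≤ c i) → ∀ e, ∀ Q ∈ box c ^ e, D Q ∈ box c ^ (e + c₀)) :
    ∃ K : ℕ, ∀ c : Fin r → ℕ, (∀ i, 1 ≤ c i) → ∀ P ∈ box c, P ≠ 0 →
      π ^ (K * ∏ i, c i) ≤ v (φ P) := by
  set Λ := (2 * r) ^ r with hΛ
  obtain ⟨C, hC⟩ := hφ.exists_pow_le_fiberDist hr hD (r - 1) Λ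
  refine ⟨C * Λ, fun c hc P hP hP0 => ?_⟩
  have hdeg : pdeg c (⊥ : Ideal (MvPolynomial (Fin r) ℂ)) ≤ Λ * ∏ i, c i :=
    pdeg_le_of_tdim_eq hc hr tdim_quotient_bot
  set I := (⊥ : Ideal (MvPolynomial (Fin r) ℂ)) ⊔ Ideal.span {P} with hI
  have hev : ∀ᶠ l in genFilter (r + 1), ∀ 𝔮 ∈ I.minimalPrimes,
      tdim (MvPolynomial (Fin r) ℂ ⧸ 𝔮) = r - 1 → pdeg c 𝔮 ≤ Λ * ∏ i, c i →
      π ^ (C * pdeg c 𝔮) ≤ fiberDist v φ c l 𝔮 := by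
    rw [Filter.eventually_all_finite (Ideal.finite_minimalPrimes_of_isNoetherianRing _ _)]
    intro 𝔮 h𝔮
    by_cases hcond : tdim (MvPolynomial (Fin r) ℂ ⧸ 𝔮) = r - 1 ∧ pdeg c 𝔮 ≤ Λ * ∏ i, c i
    · have hne : 𝔮 ≠ ⊥ := by
        rintro rfl
        have hmem : P ∈ I := Ideal.mem_sup_right (Ideal.mem_span_singleton_self P)
        exact hP0 (h𝔮.1.2 hmem)
      filter_upwards [hC 𝔮 h𝔮.1.1 hne hcond.1 c hc hcond.2] with l hl
      exact fun _ _ => hl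
    · exact Filter.Eventually.of_forall fun l h1 h2 => absurd ⟨h1, h2⟩ hcond
  obtain ⟨l, ⟨hl, hgen⟩, hgenI⟩ := ((hev.and (eventually_gen hφ.isCurve hc ⊥)).and
    (eventually_gen_minimalPrimes hφ.isCurve hc I)).exists
  obtain ⟨s, hs, hsdeg, hsprod⟩ := exists_components hφ.isCurve hc (t := P) (e := 1) hP0
    (by rwa [pow_one]) hgen hgenI
  have hlow := pow_pdeg_le_prod (C := C) hφ.lt_one.le hsdeg fun 𝔮 h𝔮 => by
    refine hl 𝔮 (hs 𝔮 h𝔮).1 ?_ ?_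
    · have := (hs 𝔮 h𝔮).2
      rw [tdim_quotient_bot] at this
      omega
    · calc pdeg c 𝔮 ≤ (s.map (pdeg c)).sum :=
            Multiset.single_le_sum (fun _ _ => Nat.zero_le _) _ (Multiset.mem_map_of_mem _ h𝔮)
        _ ≤ 1 * pdeg c ⊥ := hsdeg
        _ ≤ _ := by rwa [one_mul]
  have hmem : φ ∈ ptsF φ ⊥
      (Yfam c l (tdim (MvPolynomial (Fin r) ℂ ⧸ (⊥ : Ideal (MvPolynomial (Fin r) ℂ))))) := by
    refine ((hgen.package hφ.isCurve hc).mem_ptsF φ).mpr ⟨fun x hx => ?_, fun _ => rfl⟩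
    rw [(Submodule.mem_bot _).mp hx, map_zero]
  calc π ^ (C * Λ * ∏ i, c i) ≤ π ^ (C * (1 * pdeg c (⊥ : Ideal (MvPolynomial (Fin r) ℂ)))) := by
        refine pow_le_pow_right_of_le_one' hφ.lt_one.le ?_
        rw [one_mul, mul_assoc]
        exact Nat.mul_le_mul_left C hdeg
    _ ≤ _ := hlow.trans hsprod
    _ ≤ v (φ P) := by
        rw [← Finset.mul_prod_erase _ _ hmem, mu_self, max_eq_right zero_le]
        refine mul_le_of_le_one_right' (Finset.prod_le_one' fun τ hτ => ?_)
        exact max_le (hgen.mu_le_one hφ.isCurve hc (Finset.mem_of_mem_erase hτ))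
          (hφ.isCurve.le_one P)
end

section

/-- The Taylor series at `0`. -/
def taylorSeries (F : ℂ → ℂ) : PowerSeries ℂ :=
  PowerSeries.mk fun m => iteratedDeriv m F 0 / m.factorial

theorem coeff_taylorSeries (F : ℂ → ℂ) (m : ℕ) :
    PowerSeries.coeff m (taylorSeries F) = iteratedDeriv m F 0 / m.factorial :=
  PowerSeries.coeff_mk _ _

theorem taylorSeries_congr {F G : ℂ → ℂ} (h : ∀ᶠ z in nhds 0, F z = G z) :
    taylorSeries F = taylorSeries G := by
  ext m
  rw [coeff_taylorSeries, coeff_taylorSeries, Filter.EventuallyEq.iteratedDeriv_eq m h]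

theorem taylorSeries_const (a : ℂ) : taylorSeries (fun _ => a) = PowerSeries.C a := by
  ext m
  rw [coeff_taylorSeries, iteratedDeriv_const, PowerSeries.coeff_C]
  split_ifs with h <;> simp [h]

theorem taylorSeries_add {F G : ℂ → ℂ} (hF : AnalyticAt ℂ F 0) (hG : AnalyticAt ℂ G 0) :
    taylorSeries (fun z => F z + G z) = taylorSeries F + taylorSeries G := by
  ext m
  rw [map_add, coeff_taylorSeries, coeff_taylorSeries, coeff_taylorSeries,
    iteratedDeriv_fun_add hF.contDiffAt hG.contDiffAt, add_div]

theorem taylorSeries_mul {F G : ℂ → ℂ} (hF : AnalyticAt ℂ F 0) (hG : AnalyticAt ℂ G 0) :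
    taylorSeries (fun z => F z * G z) = taylorSeries F * taylorSeries G := by
  ext m
  rw [PowerSeries.coeff_mul, coeff_taylorSeries, iteratedDeriv_fun_mul hF.contDiffAt hG.contDiffAt,
    Finset.Nat.sum_antidiagonal_eq_sum_range_succ
      (fun i j => PowerSeries.coeff i (taylorSeries F) * PowerSeries.coeff j (taylorSeries G)),
    Finset.sum_div]
  refine Finset.sum_congr rfl fun i hi => ?_
  rw [coeff_taylorSeries, coeff_taylorSeries,
    Nat.cast_choose ℂ (Nat.lt_succ_iff.mp (Finset.mem_range.mp hi))]
  have h1 : (m.factorial : ℂ) ≠ 0 := by exact_mod_cast m.factorial_ne_zero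
  field_simp

theorem taylorSeries_deriv (F : ℂ → ℂ) :
    taylorSeries (deriv F) = PowerSeries.derivative ℂ (taylorSeries F) := by
  ext m
  rw [PowerSeries.coeff_derivative, coeff_taylorSeries, coeff_taylorSeries, iteratedDeriv_succ',
    Nat.factorial_succ]
  have h1 : (m.factorial : ℂ) ≠ 0 := by exact_mod_cast m.factorial_ne_zero
  have h2 : (m : ℂ) + 1 ≠ 0 := by exact_mod_cast m.succ_ne_zero
  push_cast
  field_simp

theorem taylorSeries_id : taylorSeries (fun z => z) = PowerSeries.X := by
  ext m
  rw [coeff_taylorSeries, PowerSeries.coeff_X]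
  rcases m with _ | m
  · simp
  · rw [iteratedDeriv_succ', deriv_id'', iteratedDeriv_const]
    rcases m with _ | m <;> simp

variable {n : ℕ} {f : Fin n → ℂ → ℂ}

theorem analyticAt_eval (hf : ∀ i, AnalyticAt ℂ (f i) 0) (P : MvPolynomial (Fin (n + 1)) ℂ) :
    AnalyticAt ℂ (fun z => MvPolynomial.eval (Fin.cons z fun j => f j z : Fin (n + 1) → ℂ) P)
      0 := by
  induction P using MvPolynomial.induction_on with
  | C a => simpa using analyticAt_const
  | add p q hp hq => simpa using hp.fun_add hq
  | mul_X p i hp =>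
    simp only [map_mul, eval_X]
    refine hp.fun_mul ?_
    refine Fin.cases ?_ (fun j => ?_) i
    · simp only [Fin.cons_zero]
      exact analyticAt_id
    · simpa using hf j

/-- The Taylor expansion at `0` of `P(z, f₁(z), …, fₙ(z))`, as an algebra homomorphism. -/
def taylorHom (f : Fin n → ℂ → ℂ) : MvPolynomial (Fin (n + 1)) ℂ →ₐ[ℂ] PowerSeries ℂ :=
  aeval (Fin.cons PowerSeries.X fun j => taylorSeries (f j))

theorem taylorHom_apply (hf : ∀ i, AnalyticAt ℂ (f i) 0) (P : MvPolynomial (Fin (n + 1)) ℂ) :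
    taylorHom f P
      = taylorSeries fun z =>
          MvPolynomial.eval (Fin.cons z fun j => f j z : Fin (n + 1) → ℂ) P := by
  induction P using MvPolynomial.induction_on with
  | C a =>
    simp only [eval_C, taylorSeries_const]
    rw [taylorHom, ← MvPolynomial.algebraMap_eq, AlgHom.commutes]
    rfl
  | add p q hp hq =>
    simp only [map_add]
    rw [taylorSeries_add (analyticAt_eval hf p) (analyticAt_eval hf q), hp, hq]
  | mul_X p i hp =>
    have hX := analyticAt_eval hf (X i)
    simp only [eval_X] at hX
    simp only [map_mul, eval_X]
    rw [taylorSeries_mul (analyticAt_eval hf p) hX, hp]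
    congr 1
    rw [taylorHom, aeval_X]
    refine Fin.cases ?_ (fun j => ?_) i
    · simp [taylorSeries_id]
    · simp

theorem coeff_taylorHom_eq_zero_iff (hf : ∀ i, AnalyticAt ℂ (f i) 0)
    (P : MvPolynomial (Fin (n + 1)) ℂ) (m : ℕ) :
    PowerSeries.coeff m (taylorHom f P) = 0 ↔
      iteratedDeriv m
        (fun z => MvPolynomial.eval (Fin.cons z fun j => f j z : Fin (n + 1) → ℂ) P) 0 = 0 := by
  rw [taylorHom_apply hf, coeff_taylorSeries, div_eq_zero_iff, or_iff_left]
  exact_mod_cast m.factorial_ne_zero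

/-- `Dop A` as a derivation. -/
def dopDerivation (A : Fin (n + 1) → MvPolynomial (Fin (n + 1)) ℂ) :
    Derivation ℂ (MvPolynomial (Fin (n + 1)) ℂ) (MvPolynomial (Fin (n + 1)) ℂ) :=
  A 0 • MvPolynomial.pderiv 0 + ∑ i : Fin n, A i.succ • MvPolynomial.pderiv i.succ

variable {A : Fin (n + 1) → MvPolynomial (Fin (n + 1)) ℂ}

theorem dopDerivation_apply (Q : MvPolynomial (Fin (n + 1)) ℂ) : dopDerivation A Q = Dop A Q := by
  rw [dopDerivation, Dop, Derivation.add_apply, Derivation.smul_apply, smul_eq_mul,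
    ← Derivation.coeFnAddMonoidHom_apply (∑ i : Fin n, _), map_sum, Finset.sum_apply]
  rfl

theorem dopDerivation_X (i : Fin (n + 1)) : dopDerivation A (X i) = A i := by
  rw [dopDerivation_apply, Dop]
  refine Fin.cases ?_ (fun j => ?_) i
  · simp [pderiv_X, Fin.succ_ne_zero]
  · simp [pderiv_X, Pi.single_apply]

theorem taylorHom_dopDerivation (hf : ∀ i, AnalyticAt ℂ (f i) 0)
    (hode : ∀ i : Fin n, ∀ᶠ z in nhds (0 : ℂ),
      MvPolynomial.eval (Fin.cons z fun j => f j z) (A 0) * deriv (f i) z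
        = MvPolynomial.eval (Fin.cons z fun j => f j z) (A i.succ))
    (Q : MvPolynomial (Fin (n + 1)) ℂ) :
    taylorHom f (dopDerivation A Q)
      = taylorHom f (A 0) * PowerSeries.derivative ℂ (taylorHom f Q) := by
  have hX : ∀ i, taylorHom f (A i)
      = taylorHom f (A 0) * PowerSeries.derivative ℂ (taylorHom f (X i)) := by
    refine Fin.cases ?_ fun j => ?_
    · simp [taylorHom]
    · have h : taylorHom f (X j.succ) = taylorSeries (f j) := by simp [taylorHom]
      rw [h, ← taylorSeries_deriv, taylorHom_apply hf, taylorHom_apply hf,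
        ← taylorSeries_mul (analyticAt_eval hf _) (hf j).deriv]
      exact taylorSeries_congr ((hode j).mono fun z hz => hz.symm)
  induction Q using MvPolynomial.induction_on with
  | C a =>
    have : PowerSeries.derivative ℂ (taylorHom f (C a)) = 0 := by
      rw [← MvPolynomial.algebraMap_eq, AlgHom.commutes, Derivation.map_algebraMap]
    rw [this, ← MvPolynomial.algebraMap_eq, Derivation.map_algebraMap, map_zero, mul_zero]
  | add p q hp hq => rw [map_add, map_add, map_add, map_add, hp, hq, mul_add]
  | mul_X p i hp =>
    rw [Derivation.leibniz, map_add, smul_eq_mul, smul_eq_mul, map_mul, map_mul, map_mul,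
      Derivation.leibniz, dopDerivation_X, hX i, hp, smul_eq_mul, smul_eq_mul]
    ring

theorem pderiv_mem_box {r : ℕ} {c : Fin r → ℕ} {Q : MvPolynomial (Fin r) ℂ} (hQ : Q ∈ box c)
    (i : Fin r) : pderiv i Q ∈ box c := by
  rw [Q.as_sum, map_sum]
  refine Submodule.sum_mem _ fun s hs => ?_
  rw [pderiv_monomial]
  refine monomial_mem_box (fun j => le_trans ?_ (mem_box_iff.mp hQ s hs j)) _
  exact Nat.sub_le _ _

theorem exists_dopDerivation_mem_box_pow (A : Fin (n + 1) → MvPolynomial (Fin (n + 1)) ℂ) :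
    ∃ c₀ : ℕ, ∀ c : Fin (n + 1) → ℕ, (∀ i, 1 ≤ c i) → ∀ e, ∀ Q ∈ box c ^ e,
      dopDerivation A Q ∈ box c ^ (e + c₀) := by
  refine ⟨∑ i, (A i).totalDegree, fun c hc e Q hQ => ?_⟩
  set c₀ := ∑ i, (A i).totalDegree with hc₀
  have hA : ∀ i, A i ∈ box c ^ c₀ := by
    intro i
    rw [box_pow, mem_box_iff]
    intro s hs j
    calc s j ≤ (A i).totalDegree := by
          refine le_trans ?_ (le_totalDegree hs)
          by_cases h : j ∈ s.support
          · exact Finset.single_le_sum (f := fun j => s j) (fun _ _ => Nat.zero_le _) h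
          · simp [Finsupp.notMem_support_iff.mp h]
      _ ≤ c₀ := Finset.single_le_sum (f := fun i => (A i).totalDegree) (fun _ _ => Nat.zero_le _)
          (Finset.mem_univ i)
      _ ≤ c₀ * c j := Nat.le_mul_of_pos_right _ (hc j)
  have hmul : ∀ i, A i * pderiv i Q ∈ box c ^ (e + c₀) := by
    intro i
    rw [add_comm e, pow_add]
    refine Submodule.mul_mem_mul (hA i) ?_
    rw [box_pow] at hQ ⊢
    exact pderiv_mem_box hQ i
  rw [dopDerivation_apply, Dop]
  exact Submodule.add_mem _ (hmul 0) (Submodule.sum_mem _ fun i _ => hmul i.succ)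

theorem mem_box_degrees (P : MvPolynomial (Fin (n + 1)) ℂ) :
    P ∈ box (Fin.cons (P.degreeOf 0 + 1) fun _ => degXvars P + 1 : Fin (n + 1) → ℕ) := by
  rw [mem_box_iff]
  intro s hs
  refine Fin.cases ?_ fun j => ?_
  · exact (degreeOf_le_iff.mp le_rfl s hs).trans (Nat.le_succ _)
  · calc s j.succ ≤ ∑ j : Fin n, s j.succ :=
          Finset.single_le_sum (f := fun j : Fin n => s j.succ) (fun _ _ => Nat.zero_le _)
            (Finset.mem_univ j)
      _ ≤ degXvars P := Finset.le_sup (f := fun d : Fin (n + 1) →₀ ℕ => ∑ j : Fin n, d j.succ) hs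
      _ ≤ _ := Nat.le_succ _

theorem taylorHom_injective (hf : ∀ i, AnalyticAt ℂ (f i) 0)
    (hode : ∀ i : Fin n, ∀ᶠ z in nhds (0 : ℂ),
      MvPolynomial.eval (Fin.cons z fun j => f j z) (A 0) * deriv (f i) z
        = MvPolynomial.eval (Fin.cons z fun j => f j z) (A i.succ))
    (hstable : ∀ 𝔭 : Ideal (MvPolynomial (Fin (n + 1)) ℂ), 𝔭.IsPrime → 𝔭 ≠ ⊥ →
      (∀ x ∈ 𝔭, dopDerivation A x ∈ 𝔭) → ∃ P ∈ 𝔭, taylorHom f P ≠ 0) :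
    Function.Injective (taylorHom f) := by
  rw [RingHom.injective_iff_ker_eq_bot]
  by_contra h0
  obtain ⟨P, hP, hP0⟩ := hstable _ (RingHom.ker_isPrime (taylorHom f)) h0 fun x hx => by
    rw [RingHom.mem_ker] at hx ⊢
    rw [taylorHom_dopDerivation hf hode, hx, map_zero, mul_zero]
  exact hP0 hP

/-- A valuation on power series measuring the order of vanishing turns the Taylor expansion of a
solution of the differential system into an `IsSolution`. -/
theorem isSolution_taylorHom {Ω Γ : Type} [Field Ω] [IsAlgClosed Ω] [Algebra ℂ Ω]
    [LinearOrderedCommGroupWithZero Γ] {v : Valuation Ω Γ} {ι : PowerSeries ℂ →ₐ[ℂ] Ω} {π : Γ}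
    (hι : Function.Injective ι) (hlt : π < 1)
    (hdvd : ∀ g k, PowerSeries.X ^ k ∣ g → v (ι g) ≤ π ^ k)
    (hcoeff : ∀ g k, PowerSeries.coeff k g ≠ 0 → π ^ k ≤ v (ι g))
    (hf : ∀ i, AnalyticAt ℂ (f i) 0)
    (hode : ∀ i : Fin n, ∀ᶠ z in nhds (0 : ℂ),
      MvPolynomial.eval (Fin.cons z fun j => f j z) (A 0) * deriv (f i) z
        = MvPolynomial.eval (Fin.cons z fun j => f j z) (A i.succ))
    {K₀ : ℕ} (hstable : ∀ 𝔭 : Ideal (MvPolynomial (Fin (n + 1)) ℂ), 𝔭.IsPrime → 𝔭 ≠ ⊥ →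
      (∀ x ∈ 𝔭, dopDerivation A x ∈ 𝔭) →
      ∃ P ∈ 𝔭, ∃ m ≤ K₀, PowerSeries.coeff m (taylorHom f P) ≠ 0) :
    IsSolution (dopDerivation A) v (ι.comp (taylorHom f)) π K₀ := by
  have hle : ∀ g, v (ι g) ≤ 1 := fun g => by simpa using hdvd g 0 (by simp)
  refine ⟨⟨hι.comp (taylorHom_injective hf hode fun 𝔭 hp h0 hD => ?_), fun z => ?_, fun g => hle _⟩,
    hlt, fun Q => ?_, ⟨0, fun a => ?_⟩, fun 𝔭 hp h0 hD => ?_⟩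
  · obtain ⟨P, hP, m, -, hm⟩ := hstable 𝔭 hp h0 hD
    exact ⟨P, hP, fun h => hm (by rw [h, map_zero])⟩
  · rw [← ι.commutes]
    exact hle _
  · rw [AlgHom.comp_apply, AlgHom.comp_apply, taylorHom_dopDerivation hf hode]
    set g := taylorHom f Q
    by_cases hg : g = 0
    · simp [hg]
    have hm : PowerSeries.coeff g.order.toNat g ≠ 0 := PowerSeries.coeff_order hg
    have hlow : ∀ j < g.order.toNat, PowerSeries.coeff j g = 0 := fun j hj =>
      PowerSeries.coeff_of_lt_order_toNat j hj
    generalize g.order.toNat = m at hm hlow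
    refine le_trans ?_ (hcoeff g m hm)
    rcases m with _ | m
    · rw [pow_zero]
      exact mul_le_one' (hle _) hlt.le
    · rw [pow_succ]
      refine mul_le_mul' (hdvd _ _ (Dvd.dvd.mul_left
          (PowerSeries.X_pow_dvd_iff.mpr fun j hj => ?_) _))
        le_rfl
      rw [PowerSeries.coeff_derivative, hlow _ (by omega), zero_mul]
  · refine (pow_one π).symm.le.trans (hcoeff _ 1 ?_)
    simp [taylorHom, ← MvPolynomial.algebraMap_eq]
  · obtain ⟨P, hP, m, hmK, hm⟩ := hstable 𝔭 hp h0 hD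
    exact ⟨P, hP, (pow_le_pow_right_of_le_one' hlt.le hmK).trans (hcoeff _ m hm)⟩

end

end

/-- Nesterenko's conditional multiplicity estimate for solutions of algebraic differential
systems (Theorem `theoNesterenko_classique` of the paper).  The condition
"the function `z ↦ P(z, f₁(z), …, fₙ(z))` does not vanish identically near `0` and its order
of vanishing at `z = 0` is at most `K`" is expressed, for an analytic function, as the
existence of `m ≤ K` with `iteratedDeriv m F 0 ≠ 0`. -/
theorem nesterenko_conditional_multiplicity_estimate
    (n : ℕ) (hn : 1 ≤ n)
    (A : Fin (n + 1) → MvPolynomial (Fin (n + 1)) ℂ) (hA0 : A 0 ≠ 0)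
    (f : Fin n → ℂ → ℂ) (hf : ∀ i, AnalyticAt ℂ (f i) 0)
    (hode : ∀ i : Fin n, ∀ᶠ z in nhds (0 : ℂ),
      MvPolynomial.eval (Fin.cons z fun j => f j z) (A 0) * deriv (f i) z
        = MvPolynomial.eval (Fin.cons z fun j => f j z) (A i.succ))
    (K₀ : ℕ)
    (hstable : ∀ 𝔭 : Ideal (MvPolynomial (Fin (n + 1)) ℂ), 𝔭.IsPrime → 𝔭 ≠ ⊥ →
      (∀ x ∈ 𝔭, Dop A x ∈ 𝔭) →
      ∃ P ∈ 𝔭, ∃ m : ℕ, m ≤ K₀ ∧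
        iteratedDeriv m (fun z => MvPolynomial.eval (Fin.cons z fun j => f j z) P) 0 ≠ 0) :
    ∃ K₁ : ℕ, 0 < K₁ ∧ ∀ P : MvPolynomial (Fin (n + 1)) ℂ, P ≠ 0 →
      ∃ m : ℕ, m ≤ K₁ * (P.degreeOf 0 + 1) * (degXvars P + 1) ^ n ∧
        iteratedDeriv m (fun z => MvPolynomial.eval (Fin.cons z fun j => f j z) P) 0 ≠ 0 := by
  obtain ⟨Ω, i1, i2, i3, Γ, i4, v, ι, π, hι, hpos, hlt, hdvd, hcoeff⟩ :=
    exists_valuation_powerSeries ℂ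
  have hφ : IsSolution (dopDerivation A) v (ι.comp (taylorHom f)) π K₀ := by
    refine isSolution_taylorHom hι hlt hdvd hcoeff hf hode fun 𝔭 hp h0 hD => ?_
    obtain ⟨P, hP, m, hmK, hm⟩ := hstable 𝔭 hp h0 fun x hx => by
      rw [← dopDerivation_apply]
      exact hD x hx
    exact ⟨P, hP, m, hmK, fun h => hm ((coeff_taylorHom_eq_zero_iff hf P m).mp h)⟩
  obtain ⟨c₀, hc₀⟩ := exists_dopDerivation_mem_box_pow A
  obtain ⟨K, hK⟩ := hφ.exists_pow_le (Nat.le_add_left 1 n) hc₀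
  refine ⟨K + 1, Nat.succ_pos K, fun P hP => ?_⟩
  by_contra! hvan
  have hlow := hK _ (Fin.cases (Nat.le_add_left 1 _) fun _ => Nat.le_add_left 1 _) P
    (mem_box_degrees P) hP
  rw [Fin.prod_univ_succ] at hlow
  simp only [Fin.cons_zero, Fin.cons_succ, Finset.prod_const, Finset.card_univ,
    Fintype.card_fin] at hlow
  set M := (K + 1) * (P.degreeOf 0 + 1) * (degXvars P + 1) ^ n with hM
  have hup : v (ι (taylorHom f P)) ≤ π ^ (M + 1) :=
    hdvd _ _ (PowerSeries.X_pow_dvd_iff.mpr fun m hm =>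
      (coeff_taylorHom_eq_zero_iff hf P m).mpr (hvan m (Nat.lt_succ_iff.mp hm)))
  have hKM : K * ((P.degreeOf 0 + 1) * (degXvars P + 1) ^ n) < M + 1 := by
    rw [hM, mul_assoc]
    exact Nat.lt_succ_of_le (Nat.mul_le_mul_right _ (Nat.le_succ K))
  exact absurd (hlow.trans hup) (not_le.mpr (pow_lt_pow_right_of_lt_one₀ hpos hlt hKM))
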